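/- arXiv:1903.04828 — 2 statements merged into one kernel-verified Lean document; each statement's English description precedes it below -/
import Mathlib

section
/- For every n there exists a constant c = c(n) such that every finite subgroup H of GL(n, ℂ) satisfies d(H) ≤ c, where d(H) is the minimal number of generators of H. Concretely, one may take c = n + (n+1)!. -/
open Matrix

/-!
Weyl's averaging makes the representation unitary. Following Frobenius and Blichfeldt, any two
elements acting within `1 / 2` of the scalars commute: their commutator is closer to `1` than they
are, so a counterexample closest to `1` would contradict itself. These elements therefore generate
an abelian subgroup `A`. Coset representatives of `A`, rotated by phases, are `1 / 2`-separated
points of the unit ball of any real subspace meeting all their lines, so a packing argument bounds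
`[G : A]` by `5 ^ (2 n ^ 2)`, and for `n = 2` by `5 ^ 4`, because every unitary `2 × 2` matrix is a
quaternion up to a phase.

The characters by which the abelian group `A` acts on common eigenvectors separate its elements,
so `A` needs at most `n` generators. The remaining generators are counted along a chain
`A ≤ B ≤ C ≤ G`: `B` and `C` absorb a Sylow `2`-subgroup and a Sylow `3`-subgroup, and each
generator added above `C` multiplies the order by at least `5`. A `p`-group needs at most
`n + v_p (n!)` generators, since a self-centralizing abelian normal subgroup embeds the quotient
into the permutations of at most `n` weights. For `n < 4` this refinement is what brings the count
below `(n + 1)!`; for larger `n` the crude bound `2 ^ m ≤ [G : A]` suffices.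
-/

/-- `GeneratedOver K H m`: the group `H` is generated by `K` together with at most `m` further
elements. For `K = ⊥` and `H = ⊤` this is the bound `d(G) ≤ m`. -/
def GeneratedOver {G : Type*} [Group G] (K H : Subgroup G) (m : ℕ) : Prop :=
  ∃ S : Finset G, S.card ≤ m ∧ K ⊔ Subgroup.closure (S : Set G) = H

namespace GeneratedOver

variable {G M : Type*} [Group G] [Group M] {K H L : Subgroup G} {m r : ℕ}

theorem refl (K : Subgroup G) : GeneratedOver K K 0 := ⟨∅, by simp⟩

theorem mono (h : GeneratedOver K H m) (hmr : m ≤ r) : GeneratedOver K H r :=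
  let ⟨S, hS, hcl⟩ := h
  ⟨S, hS.trans hmr, hcl⟩

theorem trans (hKH : GeneratedOver K H m) (hHL : GeneratedOver H L r) :
    GeneratedOver K L (m + r) := by
  classical
  obtain ⟨S, hS, rfl⟩ := hKH
  obtain ⟨T, hT, rfl⟩ := hHL
  refine ⟨S ∪ T, (Finset.card_union_le S T).trans (add_le_add hS hT), ?_⟩
  rw [Finset.coe_union, Subgroup.closure_union, sup_assoc]

theorem sup_zpowers (K : Subgroup G) (g : G) : GeneratedOver K (K ⊔ Subgroup.zpowers g) 1 :=
  ⟨{g}, by simp [Subgroup.zpowers_eq_closure]⟩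

theorem sup_of_le (h : GeneratedOver K H m) (hKL : K ≤ L) : GeneratedOver L (L ⊔ H) m := by
  obtain ⟨S, hS, rfl⟩ := h
  exact ⟨S, hS, by rw [← sup_assoc, sup_eq_left.2 hKL]⟩

theorem map (h : GeneratedOver K H m) (f : G →* M) : GeneratedOver (K.map f) (H.map f) m := by
  classical
  obtain ⟨S, hS, rfl⟩ := h
  refine ⟨S.image f, Finset.card_image_le.trans hS, ?_⟩
  rw [Subgroup.map_sup, MonoidHom.map_closure, Finset.coe_image]

theorem map_subtype {P : Subgroup G} (h : GeneratedOver (⊥ : Subgroup P) ⊤ m) :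
    GeneratedOver ⊥ P m := by
  simpa [← MonoidHom.range_eq_map] using h.map P.subtype

theorem ker_of_isCyclic_range (f : G →* M) [hf : IsCyclic f.range] :
    GeneratedOver f.ker ⊤ 1 := by
  obtain ⟨⟨_, g, rfl⟩, hg⟩ := hf.exists_generator
  have hker : f.ker ⊔ Subgroup.zpowers g = ⊤ := by
    refine (Subgroup.eq_top_iff' _).2 fun x => ?_
    obtain ⟨k, hk⟩ := Subgroup.mem_zpowers_iff.1 (hg ⟨f x, x, rfl⟩)
    have hkx : f g ^ k = f x := congrArg Subtype.val hk
    rw [← inv_mul_cancel_right x (g ^ k)]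
    refine mul_mem (Subgroup.mem_sup_left ?_) (Subgroup.mem_sup_right ⟨k, rfl⟩)
    rw [MonoidHom.mem_ker, map_mul, map_inv, map_zpow, hkx, mul_inv_cancel]
  exact hker ▸ sup_zpowers f.ker g

theorem exists_pow_le_relIndex {q : ℕ} (hKH : K ≤ H) (hfin : K.relIndex H ≠ 0)
    (hq : ∀ p, p.Prime → p ∣ K.relIndex H → q ≤ p) :
    ∃ m, q ^ m ≤ K.relIndex H ∧ GeneratedOver K H m := by
  induction hN : K.relIndex H using Nat.strong_induction_on generalizing K with
  | _ N ih =>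
    rcases hKH.eq_or_lt with rfl | hlt
    · exact ⟨0, by simp [← hN], refl K⟩
    obtain ⟨g, hgH, hgK⟩ := SetLike.exists_of_lt hlt
    let K' := K ⊔ Subgroup.zpowers g
    have hKK' : K ≤ K' := le_sup_left
    have hK'H : K' ≤ H := sup_le hKH (Subgroup.zpowers_le.2 hgH)
    have hmul : K.relIndex K' * K'.relIndex H = K.relIndex H :=
      Subgroup.relIndex_mul_relIndex K K' H hKK' hK'H
    have hK' : K.relIndex K' ≠ 1 := fun h =>
      hgK (Subgroup.relIndex_eq_one.1 h (Subgroup.mem_sup_right (Subgroup.mem_zpowers g)))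
    have hne : K.relIndex K' ≠ 0 ∧ K'.relIndex H ≠ 0 := mul_ne_zero_iff.1 (hmul ▸ hfin)
    have hqK' : q ≤ K.relIndex K' :=
      (hq _ (Nat.minFac_prime hK') ((Nat.minFac_dvd _).trans (Dvd.intro _ hmul))).trans
        (Nat.minFac_le (Nat.pos_of_ne_zero hne.1))
    obtain ⟨m, hm, hgen⟩ := ih (K'.relIndex H)
      (by rw [← hN, ← hmul]; exact lt_mul_left (by omega) (by omega)) hK'H hne.2
      (fun p hp hpd => hq p hp (hpd.trans (Dvd.intro_left _ hmul))) rfl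
    refine ⟨1 + m, ?_, (sup_zpowers K g).trans hgen⟩
    rw [← hN, ← hmul, pow_add, pow_one]
    exact Nat.mul_le_mul hqK' hm

theorem of_relIndex_eq_prime_pow {p v : ℕ} (hp : p.Prime) (hKH : K ≤ H)
    (hv : K.relIndex H = p ^ v) : GeneratedOver K H v := by
  obtain ⟨m, hm, hgen⟩ := exists_pow_le_relIndex (q := p) hKH (by simp [hv, hp.ne_zero])
    fun l hl hld => ((Nat.prime_dvd_prime_iff_eq hl hp).1 (hl.dvd_of_dvd_pow (hv ▸ hld))).ge
  exact hgen.mono ((Nat.pow_le_pow_iff_right hp.one_lt).1 (hv ▸ hm))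

theorem bot_top_of_separating_characters {k : Type*} [CommRing k] [IsDomain k] {m : ℕ}
    {A : Type*} [Group A] [Finite A] (χ : Fin m → A →* kˣ)
    (hχ : ∀ a, (∀ i, χ i a = 1) → a = 1) : GeneratedOver (⊥ : Subgroup A) ⊤ m := by
  induction m generalizing A with
  | zero =>
    have : (⊤ : Subgroup A) = ⊥ :=
      (Subgroup.eq_bot_iff_forall _).2 fun a _ => hχ a fun i => i.elim0
    exact this ▸ refl _
  | succ m ih =>
    have hker : GeneratedOver ⊥ (χ 0).ker m :=
      map_subtype <| ih (fun i => (χ i.succ).comp (χ 0).ker.subtype) fun a ha =>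
        Subtype.ext <| hχ a <| Fin.cases a.2 ha
    have : Finite (χ 0).range := Finite.of_surjective _ (χ 0).rangeRestrict_surjective
    exact hker.trans (ker_of_isCyclic_range (χ 0))

end GeneratedOver

section Sylow

variable {p : ℕ} [hp : Fact p.Prime] {G : Type*} [Group G] [Finite G]

theorem exists_le_sylow_relIndex_eq_pow_dvd_index (A : Subgroup G) :
    ∃ (P : Sylow p G) (Q : Subgroup G) (v : ℕ), Q ≤ A ∧ Q ≤ P ∧ Q.relIndex P = p ^ v ∧
      p ^ v ∣ A.index := by
  obtain ⟨R⟩ := (inferInstance : Nonempty (Sylow p A))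
  obtain ⟨P, hRP⟩ := (R.2.map A.subtype).exists_le_sylow
  set Q : Subgroup G := (R : Subgroup A).map A.subtype
  have hQA : Q ≤ A := Subgroup.map_subtype_le _
  have hQindex : Q.relIndex A = (R : Subgroup A).index :=
    congrArg Subgroup.index (Subgroup.comap_map_eq_self_of_injective A.subtype_injective _)
  obtain ⟨v, hv⟩ : ∃ v, Q.relIndex P = p ^ v := P.2.index (Q.subgroupOf P)
  refine ⟨P, Q, v, hQA, hRP, hv, ?_⟩
  have hcop : (p ^ v).Coprime (Q.relIndex A) :=
    .pow_left v ((Nat.Prime.coprime_iff_not_dvd hp.out).2 (hQindex ▸ R.not_dvd_index))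
  refine hcop.dvd_of_dvd_mul_left ?_
  rw [Subgroup.relIndex_mul_index hQA, ← Subgroup.relIndex_mul_index hRP, hv]
  exact Nat.dvd_mul_right _ _

theorem exists_generatedOver_not_dvd_index {r : ℕ}
    (hr : ∀ P : Sylow p G, GeneratedOver ⊥ (P : Subgroup G) r) (A : Subgroup G) :
    ∃ (B : Subgroup G) (m : ℕ), m ≤ r ∧ GeneratedOver A B m ∧ p ^ m * B.index ∣ A.index ∧
      ¬ p ∣ B.index := by
  obtain ⟨P, Q, v, hQA, hQP, hv, hvA⟩ := exists_le_sylow_relIndex_eq_pow_dvd_index (p := p) A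
  have hB : ¬ p ∣ (A ⊔ P).index := fun h =>
    P.not_dvd_index (h.trans (Subgroup.index_dvd_of_le le_sup_right))
  have hgen : GeneratedOver A (A ⊔ P) (min v r) := by
    rcases min_choice v r with h | h <;> rw [h]
    · exact (GeneratedOver.of_relIndex_eq_prime_pow hp.out hQP hv).sup_of_le hQA
    · exact (hr P).sup_of_le bot_le
  refine ⟨A ⊔ P, min v r, min_le_right v r, hgen, ?_, hB⟩
  exact Nat.Coprime.mul_dvd_of_dvd_of_dvd
    (.pow_left _ ((Nat.Prime.coprime_iff_not_dvd hp.out).2 hB))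
    ((pow_dvd_pow p (min_le_left v r)).trans hvA) (Subgroup.index_dvd_of_le le_sup_left)

end Sylow

section Nilpotent

variable {G : Type*} [Group G] [Group.IsNilpotent G]

theorem exists_mem_center_of_normal_ne_bot {N : Subgroup G} [N.Normal] (hN : N ≠ ⊥) :
    ∃ z ∈ N, z ≠ 1 ∧ z ∈ Subgroup.center G := by
  classical
  have hmeets : ∃ k, ∃ z ∈ N, z ≠ 1 ∧ z ∈ Subgroup.upperCentralSeries G k := by
    obtain ⟨k, hk⟩ := Group.IsNilpotent.nilpotent G
    obtain ⟨z, hz, hz1⟩ := N.bot_or_exists_ne_one.resolve_left hN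
    exact ⟨k, z, hz, hz1, hk ▸ Subgroup.mem_top z⟩
  obtain ⟨z, hzN, hz1, hz⟩ := Nat.find_spec hmeets
  refine ⟨z, hzN, hz1, Subgroup.mem_center_iff.2 fun g => ?_⟩
  obtain ⟨k, hk⟩ : ∃ k, Nat.find hmeets = k + 1 :=
    Nat.exists_eq_succ_of_ne_zero fun h0 => hz1 (by simpa [h0] using hz)
  rw [hk, Subgroup.mem_upperCentralSeries_succ_iff] at hz
  by_contra hne
  open scoped commutatorElement in
  refine Nat.find_min hmeets (m := k) (by omega) ⟨⁅z, g⁆, ?_, ?_, hz g⟩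
  · exact Subgroup.commutator_le_left N ⊤
      (Subgroup.commutator_mem_commutator hzN (Subgroup.mem_top g))
  · exact fun h => hne (commutatorElement_eq_one_iff_mul_comm.1 h).symm

theorem exists_normal_isMulCommutative_centralizer_le [Finite G] :
    ∃ A : Subgroup G, A.Normal ∧ IsMulCommutative A ∧
      Subgroup.centralizer (A : Set G) ≤ A := by
  obtain ⟨A, ⟨hAn, hAc⟩, hmax⟩ :=
    (Set.toFinite {A : Subgroup G | A.Normal ∧ IsMulCommutative A}).exists_maximal
      ⟨⊥, inferInstance, inferInstance⟩
  refine ⟨A, hAn, hAc, ?_⟩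
  set C := Subgroup.centralizer (A : Set G)
  by_contra hC
  let π := QuotientGroup.mk' A
  have hN : C.map π ≠ ⊥ := fun h => hC <| by
    simpa [π] using (Subgroup.map_eq_bot_iff _).1 h
  have : (C.map π).Normal := Subgroup.Normal.map inferInstance π (QuotientGroup.mk'_surjective A)
  obtain ⟨_, ⟨c, hc, rfl⟩, hc1, hcent⟩ := exists_mem_center_of_normal_ne_bot hN
  have hcA : c ∉ A := fun h => hc1 ((QuotientGroup.eq_one_iff c).2 h)
  let B := (Subgroup.zpowers (π c)).comap π
  have hB : B = Subgroup.closure (insert c A) := by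
    rw [Set.insert_eq, Subgroup.closure_union, ← Subgroup.zpowers_eq_closure, Subgroup.closure_eq,
      ← QuotientGroup.ker_mk' A, ← Subgroup.comap_map_eq, MonoidHom.map_zpowers]
  have hBc : IsMulCommutative B := by
    rw [hB]
    refine Subgroup.isMulCommutative_closure ?_
    have hcA' : ∀ a ∈ A, a * c = c * a := Subgroup.mem_centralizer_iff.1 hc
    rintro x (rfl | hx) y (rfl | hy)
    · rfl
    · exact (hcA' y hy).symm
    · exact hcA' x hx
    · exact setLike_mul_comm hx hy
  have hzn : (Subgroup.zpowers (π c)).Normal := ⟨fun z hz g => by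
    rwa [Subgroup.mem_center_iff.1 (Subgroup.zpowers_le.2 hcent hz) g, mul_inv_cancel_right]⟩
  have hBn : B.Normal := hzn.comap π
  have hAB : A ≤ B := hB ▸ (Set.subset_insert c A).trans Subgroup.subset_closure
  exact hcA (hmax ⟨hBn, hBc⟩ hAB (Subgroup.mem_zpowers (π c)))

end Nilpotent

section JointSpectrum

open Module

variable {ι K V : Type*} [Field K] [AddCommGroup V] [Module K V]

/-- The space of common eigenvectors of the family `f` on which each `f i` acts as `χ i`. -/
def jointEigenspace (f : ι → End K V) (χ : ι → K) : Submodule K V := ⨅ i, (f i).eigenspace (χ i)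

/-- The joint spectrum of the family `f`: the systems of eigenvalues of its common eigenvectors. -/
def jointSpectrum (f : ι → End K V) : Set (ι → K) := {χ | jointEigenspace f χ ≠ ⊥}

variable {f : ι → End K V} {χ : ι → K}

theorem mem_jointEigenspace {v : V} : v ∈ jointEigenspace f χ ↔ ∀ i, f i v = χ i • v := by
  simp [jointEigenspace]

theorem mem_jointSpectrum : χ ∈ jointSpectrum f ↔ ∃ v ≠ 0, ∀ i, f i v = χ i • v := by
  simp only [jointSpectrum, Set.mem_ofPred_eq, Submodule.ne_bot_iff, mem_jointEigenspace, and_comm]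

theorem jointEigenspace_eq_iInf_maxGenEigenspace (hf : ∀ i, (f i).IsSemisimple) :
    jointEigenspace f = fun χ => ⨅ i, (f i).maxGenEigenspace (χ i) :=
  funext fun χ => iInf_congr fun i =>
    ((hf i).isFinitelySemisimple.maxGenEigenspace_eq_eigenspace (χ i)).symm

theorem iSupIndep_jointEigenspace (hf : ∀ i, (f i).IsSemisimple)
    (hcomm : Pairwise fun i j => Commute (f i) (f j)) : iSupIndep (jointEigenspace f) := by
  rw [jointEigenspace_eq_iInf_maxGenEigenspace hf]
  refine End.independent_iInf_maxGenEigenspace_of_forall_mapsTo f fun i j =>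
    End.mapsTo_maxGenEigenspace_of_comm ?_
  rcases eq_or_ne j i with rfl | hji
  exacts [Commute.refl _, hcomm hji]

variable [FiniteDimensional K V]

theorem iSup_jointEigenspace_eq_top [IsAlgClosed K] (hf : ∀ i, (f i).IsSemisimple)
    (hcomm : Pairwise fun i j => Commute (f i) (f j)) : ⨆ χ, jointEigenspace f χ = ⊤ := by
  rw [jointEigenspace_eq_iInf_maxGenEigenspace hf]
  exact End.iSup_iInf_maxGenEigenspace_eq_top_of_iSup_maxGenEigenspace_eq_top_of_commute f hcomm
    fun i => End.iSup_maxGenEigenspace_eq_top (f i)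

theorem jointSpectrum_finite (hf : ∀ i, (f i).IsSemisimple)
    (hcomm : Pairwise fun i j => Commute (f i) (f j)) : (jointSpectrum f).Finite :=
  WellFoundedGT.finite_ne_bot_of_iSupIndep (iSupIndep_jointEigenspace hf hcomm)

theorem ncard_jointSpectrum_le_finrank (hf : ∀ i, (f i).IsSemisimple)
    (hcomm : Pairwise fun i j => Commute (f i) (f j)) :
    (jointSpectrum f).ncard ≤ finrank K V := by
  have : Fintype {χ // jointEigenspace f χ ≠ ⊥} := (jointSpectrum_finite hf hcomm).fintype
  rw [← Nat.card_coe_set_eq]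
  change Nat.card {χ // jointEigenspace f χ ≠ ⊥} ≤ _
  rw [Nat.card_eq_fintype_card]
  exact (iSupIndep_jointEigenspace hf hcomm).subtype_ne_bot_le_finrank

theorem eq_of_forall_mem_jointSpectrum [IsAlgClosed K] (hf : ∀ i, (f i).IsSemisimple)
    (hcomm : Pairwise fun i j => Commute (f i) (f j)) {i j : ι}
    (h : ∀ χ ∈ jointSpectrum f, χ i = χ j) : f i = f j := by
  suffices ⊤ ≤ LinearMap.eqLocus (f i) (f j) from LinearMap.ext fun v => this trivial
  rw [← iSup_jointEigenspace_eq_top hf hcomm, iSup_le_iff]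
  intro χ v hv
  by_cases hχ : χ ∈ jointSpectrum f
  · rw [LinearMap.mem_eqLocus, mem_jointEigenspace.1 hv i, mem_jointEigenspace.1 hv j, h χ hχ]
  · simp [(Submodule.eq_bot_iff _).1 (not_not.1 hχ) v hv]

theorem eq_of_forall_common_eigenvector [IsAlgClosed K] {S T : End K V} (hS : S.IsSemisimple)
    (hT : T.IsSemisimple) (hST : Commute S T)
    (h : ∀ v ≠ 0, ∀ a b : K, S v = a • v → T v = b • v → a = b) : S = T := by
  refine eq_of_forall_mem_jointSpectrum (f := ![S, T]) (i := 0) (j := 1)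
    (Fin.forall_fin_two.2 ⟨hS, hT⟩) ?_ fun χ hχ => ?_
  · intro i j hij
    fin_cases i <;> fin_cases j <;> first | exact absurd rfl hij | exact hST | exact hST.symm
  · obtain ⟨v, hv0, hv⟩ := mem_jointSpectrum.1 hχ
    exact h v hv0 _ _ (hv 0) (hv 1)

end JointSpectrum

section Representation

open Module Nat

variable {K V : Type*} [Field K] [AddCommGroup V] [Module K V]

theorem exists_monoidHom_of_mem_jointSpectrum {M : Type*} [Monoid M] {ρ : Representation K M V}
    {χ : M → K} (hχ : χ ∈ jointSpectrum ρ) : ∃ ψ : M →* K, ⇑ψ = χ := by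
  obtain ⟨v, hv, hχv⟩ := mem_jointSpectrum.1 hχ
  refine ⟨⟨⟨χ, ?_⟩, fun a b => ?_⟩, rfl⟩ <;> refine smul_left_injective K hv ?_
  · simp [← hχv]
  · change χ (a * b) • v = (χ a * χ b) • v
    rw [← hχv, map_mul, End.mul_apply, hχv b, map_smul, hχv a, smul_smul, mul_comm]

variable {G : Type*} [Group G] {ρ : Representation K G V} {A : Subgroup G}

theorem comp_conjNormal_mem_jointSpectrum [A.Normal] {χ : A → K}
    (hχ : χ ∈ jointSpectrum fun a : A => ρ a) (g : G) :
    χ ∘ MulAut.conjNormal g⁻¹ ∈ jointSpectrum fun a : A => ρ a := by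
  obtain ⟨v, hv, hχv⟩ := mem_jointSpectrum.1 hχ
  refine mem_jointSpectrum.2 ⟨ρ g v, ?_, fun a => ?_⟩
  · rwa [← map_zero (ρ g), (ρ.apply_bijective g).injective.ne_iff]
  · rw [Function.comp_apply, ← map_smul, ← hχv]
    simp [← Module.End.mul_apply, ← map_mul, mul_assoc]

variable (ρ A) in
/-- The action of `G` by conjugation on the weights of a normal subgroup `A` in a representation
of `G`. -/
abbrev weightAction [A.Normal] : MulAction G (jointSpectrum fun a : A => ρ a) where
  smul g χ := ⟨χ.1 ∘ MulAut.conjNormal g⁻¹, comp_conjNormal_mem_jointSpectrum χ.2 g⟩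
  one_smul χ := Subtype.ext <| funext fun a => congrArg χ.1 (by simp)
  mul_smul g h χ := Subtype.ext <| funext fun a => congrArg χ.1 (by simp)

variable [IsAlgClosed K] [FiniteDimensional K V]

theorem generatedOver_bot_finrank_of_isMulCommutative [Finite G] (hρ : Function.Injective ρ)
    (hss : ∀ g, End.IsSemisimple (ρ g)) [IsMulCommutative G] :
    GeneratedOver (⊥ : Subgroup G) ⊤ (finrank K V) := by
  have hcomm : Pairwise fun g h => Commute (ρ g) (ρ h) :=
    fun g h _ => Commute.map (IsMulCommutative.is_comm.comm g h) ρ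
  have : Finite (jointSpectrum ρ) := jointSpectrum_finite hss hcomm
  choose ψ hψ using fun χ : jointSpectrum ρ => exists_monoidHom_of_mem_jointSpectrum χ.2
  let e := Finite.equivFin (jointSpectrum ρ)
  refine (GeneratedOver.bot_top_of_separating_characters (fun i => (ψ (e.symm i)).toHomUnits)
    fun a ha => hρ ?_).mono (ncard_jointSpectrum_le_finrank hss hcomm)
  refine eq_of_forall_mem_jointSpectrum hss hcomm fun χ hχ => ?_
  have h : ψ ⟨χ, hχ⟩ a = ψ ⟨χ, hχ⟩ 1 := by
    simpa only [Equiv.symm_apply_apply, MonoidHom.coe_toHomUnits, Units.val_one, map_one]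
      using congrArg Units.val (ha (e ⟨χ, hχ⟩))
  rwa [hψ] at h

theorem generatedOver_bot_of_isMulCommutative [Finite G] (hρ : Function.Injective ρ)
    (hss : ∀ g, End.IsSemisimple (ρ g)) [IsMulCommutative A] : GeneratedOver ⊥ A (finrank K V) :=
  GeneratedOver.map_subtype <| generatedOver_bot_finrank_of_isMulCommutative
    (ρ := ρ.comp A.subtype) (hρ.comp A.subtype_injective) fun a => hss a

theorem index_dvd_factorial_finrank [A.Normal] [IsMulCommutative A] (hρ : Function.Injective ρ)
    (hss : ∀ g, End.IsSemisimple (ρ g)) (hA : Subgroup.centralizer (A : Set G) ≤ A) :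
    A.index ∣ (finrank K V)! := by
  have hssA : ∀ a : A, End.IsSemisimple (ρ a) := fun a => hss a
  have hcomm : Pairwise fun a b : A => Commute (ρ a) (ρ b) :=
    fun a b _ => Commute.map (setLike_mul_comm a.2 b.2) ρ
  have : Finite (jointSpectrum fun a : A => ρ a) := jointSpectrum_finite hssA hcomm
  let _ := weightAction ρ A
  let π := MulAction.toPermHom G (jointSpectrum fun a : A => ρ a)
  have hker : π.ker ≤ A := fun g hg => hA <| Subgroup.mem_centralizer_iff.2 fun a ha => by
    have h : ρ (MulAut.conjNormal g⁻¹ (⟨a, ha⟩ : A) : G) = ρ a :=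
      eq_of_forall_mem_jointSpectrum hssA hcomm (j := ⟨a, ha⟩) fun χ hχ =>
        congrFun (congrArg Subtype.val (Equiv.congr_fun hg ⟨χ, hχ⟩)) ⟨a, ha⟩
    rwa [hρ.eq_iff, MulAut.conjNormal_apply, inv_inv, mul_assoc, inv_mul_eq_iff_eq_mul] at h
  calc A.index ∣ π.ker.index := Subgroup.index_dvd_of_le hker
    _ = Nat.card π.range := Subgroup.index_ker π
    _ ∣ (Nat.card (jointSpectrum fun a : A => ρ a))! :=
      Nat.card_perm (α := jointSpectrum fun a : A => ρ a) ▸ Subgroup.card_subgroup_dvd_card _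
    _ ∣ (finrank K V)! := Nat.factorial_dvd_factorial (ncard_jointSpectrum_le_finrank hssA hcomm)

theorem generatedOver_bot_top_of_isPGroup {p : ℕ} [hp : Fact p.Prime] [Finite G] (hG : IsPGroup p G)
    (hρ : Function.Injective ρ) (hss : ∀ g, End.IsSemisimple (ρ g)) :
    GeneratedOver (⊥ : Subgroup G) ⊤ (finrank K V + (finrank K V)!.factorization p) := by
  have := hG.isNilpotent
  obtain ⟨A, hAn, hAc, hCA⟩ := exists_normal_isMulCommutative_centralizer_le (G := G)
  obtain ⟨v, hv⟩ := hG.index A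
  have hvn : v ≤ (finrank K V)!.factorization p :=
    (hp.out.pow_dvd_iff_le_factorization (Nat.factorial_ne_zero _)).1
      (hv ▸ index_dvd_factorial_finrank hρ hss hCA)
  have hAG : GeneratedOver A ⊤ v := .of_relIndex_eq_prime_pow hp.out le_top (by simpa using hv)
  exact (generatedOver_bot_of_isMulCommutative hρ hss).trans (hAG.mono hvn)

theorem generatedOver_bot_sylow {p : ℕ} [Fact p.Prime] [Finite G] (hρ : Function.Injective ρ)
    (hss : ∀ g, End.IsSemisimple (ρ g)) (P : Sylow p G) :
    GeneratedOver ⊥ (P : Subgroup G) (finrank K V + (finrank K V)!.factorization p) :=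
  GeneratedOver.map_subtype <| generatedOver_bot_top_of_isPGroup P.isPGroup'
    (ρ := ρ.comp (P : Subgroup G).subtype) (hρ.comp (Subgroup.subtype_injective _)) fun g => hss g

theorem exists_generatedOver_top_pow_le_index [Finite G] (hρ : Function.Injective ρ)
    (hss : ∀ g, End.IsSemisimple (ρ g)) (A : Subgroup G) :
    ∃ a b c, a ≤ finrank K V + (finrank K V)!.factorization 2 ∧
      b ≤ finrank K V + (finrank K V)!.factorization 3 ∧ 2 ^ a * 3 ^ b * 5 ^ c ≤ A.index ∧
      GeneratedOver A ⊤ (a + b + c) := by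
  obtain ⟨B, a, ha, hAB, hB, h2B⟩ :=
    exists_generatedOver_not_dvd_index (generatedOver_bot_sylow (p := 2) hρ hss) A
  obtain ⟨C, b, hb, hBC, hC, h3C⟩ :=
    exists_generatedOver_not_dvd_index (generatedOver_bot_sylow (p := 3) hρ hss) B
  have hCB : C.index ∣ B.index := (Dvd.intro_left _ rfl).trans hC
  have h5 : ∀ p, p.Prime → p ∣ C.relIndex ⊤ → 5 ≤ p := fun p hp hpC => by
    rw [Subgroup.relIndex_top_right] at hpC
    have h2 : p ≠ 2 := by rintro rfl; exact h2B (hpC.trans hCB)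
    have h3 : p ≠ 3 := by rintro rfl; exact h3C hpC
    exact hp.five_le_of_ne_two_of_ne_three h2 h3
  obtain ⟨c, hc, hCG⟩ := GeneratedOver.exists_pow_le_relIndex (K := C) le_top
    (by simpa using C.index_ne_zero_of_finite) h5
  refine ⟨a, b, c, ha, hb, ?_, (hAB.trans hBC).trans hCG⟩
  calc 2 ^ a * 3 ^ b * 5 ^ c ≤ 2 ^ a * (3 ^ b * C.index) := by
        rw [mul_assoc]
        gcongr
        simpa using hc
    _ ≤ 2 ^ a * B.index := by
        gcongr
        exact Nat.le_of_dvd (Nat.pos_of_ne_zero B.index_ne_zero_of_finite) hC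
    _ ≤ A.index := Nat.le_of_dvd (Nat.pos_of_ne_zero A.index_ne_zero_of_finite) hB

end Representation

open scoped commutatorElement

section NearScalar

variable {A : Type*} [NormedRing A] [NormedAlgebra ℂ A]

/-- An element of a complex Banach algebra is near-scalar if it is at distance less than `1 / 2`
from the scalars. The constant is Blichfeldt's: commutators of near-scalar unitaries contract. -/
def IsNearScalar (a : A) : Prop := ∃ c : ℂ, ‖a - algebraMap ℂ A c‖ < 1 / 2

theorem norm_mul_sub_mul_le (a x : A) (c d : ℂ) :
    ‖a * x - x * a‖ ≤ 2 * ‖a - algebraMap ℂ A c‖ * ‖x - algebraMap ℂ A d‖ := by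
  set b := a - algebraMap ℂ A c
  set y := x - algebraMap ℂ A d
  have h : a * x - x * a = b * y - y * b := by
    simp only [b, y, sub_mul, mul_sub, Algebra.commutes, ← map_mul, mul_comm c d]
    abel
  calc ‖a * x - x * a‖ ≤ ‖b * y‖ + ‖y * b‖ := h ▸ norm_sub_le _ _
    _ ≤ ‖b‖ * ‖y‖ + ‖y‖ * ‖b‖ := add_le_add (norm_mul_le b y) (norm_mul_le y b)
    _ = 2 * ‖b‖ * ‖y‖ := by ring

theorem norm_commutatorElement_sub_one_le [StarRing A] [CStarRing A] (u x : unitary A)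
    (c d : ℂ) :
    ‖((⁅u, x⁆ : unitary A) : A) - 1‖ ≤
      2 * ‖(u : A) - algebraMap ℂ A c‖ * ‖(x : A) - algebraMap ℂ A d‖ := by
  have h : (((⁅u, x⁆ : unitary A) : A) - 1) * ((x * u : unitary A) : A) = u * x - x * u := by
    rw [sub_mul, one_mul, ← Submonoid.coe_mul, commutatorElement_def]
    simp only [inv_mul_cancel_right, ← mul_assoc, Submonoid.coe_mul]
  rw [← CStarRing.norm_mul_mem_unitary _ (x * u).2, h]
  exact norm_mul_sub_mul_le _ _ c d

end NearScalar

section UnitaryOperators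

open Module InnerProductSpace
open scoped ComplexConjugate

variable {V : Type*} [NormedAddCommGroup V] [InnerProductSpace ℂ V]

theorem inner_eq_zero_of_mem_unitary_of_ne [CompleteSpace V] {U : V →L[ℂ] V}
    (hU : U ∈ unitary (V →L[ℂ] V)) {a b : ℂ} {v w : V} (hv : U v = a • v) (hw : U w = b • w)
    (hab : a ≠ b) : inner ℂ v w = 0 := by
  rcases eq_or_ne v 0 with rfl | hv0
  · exact inner_zero_left w
  have ha : ‖a‖ = 1 := by
    have h := ContinuousLinearMap.norm_map_of_mem_unitary hU v
    rwa [hv, norm_smul, mul_eq_right₀ (norm_ne_zero_iff.2 hv0)] at h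
  have h : conj a * b * inner ℂ v w = 1 * inner ℂ v w := by
    rw [one_mul, mul_assoc, ← inner_smul_right, ← inner_smul_left, ← hv, ← hw,
      ContinuousLinearMap.inner_map_map_of_mem_unitary hU]
  by_contra hvw
  have hab1 : conj a * b = conj a * a := by
    rw [mul_right_cancel₀ hvw h, Complex.conj_mul', ha]; simp
  refine hab (mul_left_cancel₀ ?_ hab1).symm
  simp [← norm_ne_zero_iff, ha]

theorem one_le_norm_sub_algebraMap_of_inner_eq_zero [CompleteSpace V] {X : V →L[ℂ] V}
    (hX : X ∈ unitary (V →L[ℂ] V)) {w : V} (hw : w ≠ 0) (h : inner ℂ (X w) w = 0) (d : ℂ) :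
    1 ≤ ‖X - algebraMap ℂ _ d‖ := by
  refine le_of_mul_le_mul_right ?_ (norm_pos_iff.2 hw)
  have hpyth : ‖w‖ ≤ ‖X w - d • w‖ := by
    rw [← sq_le_sq₀ (norm_nonneg _) (norm_nonneg _), @norm_sub_sq ℂ, inner_smul_right, h,
      ContinuousLinearMap.norm_map_of_mem_unitary hX]
    simp
  calc 1 * ‖w‖ ≤ ‖(X - algebraMap ℂ _ d) w‖ := by rwa [one_mul]
    _ ≤ ‖X - algebraMap ℂ _ d‖ * ‖w‖ := ContinuousLinearMap.le_opNorm _ _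

variable [FiniteDimensional ℂ V]

theorem isSemisimple_of_mem_unitary {U : V →L[ℂ] V} (hU : U ∈ unitary (V →L[ℂ] V)) :
    End.IsSemisimple (U : V →ₗ[ℂ] V) := by
  have hinj : Function.Injective (U : V →ₗ[ℂ] V) :=
    (AddMonoidHomClass.isometry_of_norm U
      (ContinuousLinearMap.norm_map_of_mem_unitary hU)).injective
  refine End.isSemisimple_iff.2 fun p hp => ⟨pᗮ, fun w hw => ?_, p.isCompl_orthogonal⟩
  have hsurj : Function.Surjective ((U : V →ₗ[ℂ] V).restrict hp) :=
    LinearMap.injective_iff_surjective.1 fun x y hxy =>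
      Subtype.ext (hinj (congrArg Subtype.val hxy))
  refine (Submodule.mem_orthogonal p _).2 fun x hx => ?_
  obtain ⟨y, hy⟩ := hsurj ⟨x, hx⟩
  obtain rfl : U y = x := congrArg Subtype.val hy
  exact (ContinuousLinearMap.inner_map_map_of_mem_unitary hU _ _).trans (hw _ y.2)

/- If `U` and `X U X⁻¹` have distinct eigenvalues on a common eigenvector `v`, then `v` and
`X⁻¹ v` are orthogonal, so `X` is at distance at least `1` from the scalars. -/
theorem commute_of_commute_commutatorElement {U X : unitary (V →L[ℂ] V)} {d : ℂ}
    (hX : ‖(X : V →L[ℂ] V) - algebraMap ℂ _ d‖ < 1) (hUX : Commute U ⁅U, X⁆) :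
    Commute U X := by
  let Y := X * U * X⁻¹
  have hUY : Commute U Y := by
    have hY : Y = ⁅U, X⁆⁻¹ * U := by simp [Y, commutatorElement_def, mul_assoc]
    exact hY ▸ hUX.inv_right.mul_right (Commute.refl U)
  suffices ((U : V →L[ℂ] V) : V →ₗ[ℂ] V) = ((Y : V →L[ℂ] V) : V →ₗ[ℂ] V) by
    have hUY : U = X * U * X⁻¹ := Subtype.ext (ContinuousLinearMap.coe_injective this)
    exact eq_mul_inv_iff_mul_eq.1 hUY
  refine eq_of_forall_common_eigenvector (isSemisimple_of_mem_unitary U.2)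
    (isSemisimple_of_mem_unitary Y.2) ?_ fun v hv0 a b hUv hYv => ?_
  · exact congrArg (fun T : unitary (V →L[ℂ] V) => ((T : V →L[ℂ] V) : V →ₗ[ℂ] V)) hUY
  let w : V := (X⁻¹ : unitary (V →L[ℂ] V)).1 v
  have hXw : X.1 w = v := congrArg (fun T : unitary (V →L[ℂ] V) => T.1 v) (mul_inv_cancel X)
  have hUw : U.1 w = b • w := by
    have h : X * U * X⁻¹ = Y := rfl
    rw [mul_assoc, ← eq_inv_mul_iff_mul_eq] at h
    have := congrArg (fun T : unitary (V →L[ℂ] V) => T.1 v) h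
    calc U.1 w = X⁻¹.1 (Y.1 v) := this
      _ = X⁻¹.1 (b • v) := congrArg X⁻¹.1 hYv
      _ = b • w := map_smul X⁻¹.1 b v
  have hw0 : w ≠ 0 := fun h => hv0 (by rw [← hXw, h, map_zero])
  by_contra hab
  refine hX.not_ge (one_le_norm_sub_algebraMap_of_inner_eq_zero X.2 hw0 ?_ d)
  exact hXw ▸ inner_eq_zero_of_mem_unitary_of_ne U.2 hUv hUw hab

theorem commute_of_isNearScalar {G : Type*} [Group G] [Finite G]
    (ρ : G →* unitary (V →L[ℂ] V)) {g x : G} (hg : IsNearScalar (ρ g : V →L[ℂ] V))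
    (hx : IsNearScalar (ρ x : V →L[ℂ] V)) : Commute (ρ g) (ρ x) := by
  by_contra hne
  obtain ⟨c, hc⟩ := hg
  let T : Set G := {x | IsNearScalar (ρ x : V →L[ℂ] V) ∧ ¬ Commute (ρ g) (ρ x)}
  obtain ⟨x, ⟨⟨d, hd⟩, hgx⟩, hmin⟩ := Set.exists_min_image T
    (fun x => ‖(ρ x : V →L[ℂ] V) - 1‖) (Set.toFinite T) ⟨x, hx, hne⟩
  have hle (e : ℂ) : ‖(ρ ⁅g, x⁆ : V →L[ℂ] V) - 1‖ ≤
      2 * ‖(ρ g : V →L[ℂ] V) - algebraMap ℂ _ c‖ * ‖(ρ x : V →L[ℂ] V) - algebraMap ℂ _ e‖ := by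
    rw [map_commutatorElement]
    exact norm_commutatorElement_sub_one_le (ρ g) (ρ x) c e
  have hgxT : ⁅g, x⁆ ∈ T := by
    refine ⟨⟨1, ?_⟩, fun h => hgx ?_⟩
    · rw [map_one]
      nlinarith [hle d, norm_nonneg ((ρ g : V →L[ℂ] V) - algebraMap ℂ _ c)]
    · exact commute_of_commute_commutatorElement (hd.trans one_half_lt_one)
        (map_commutatorElement ρ g x ▸ h)
  have hx1 : ‖(ρ x : V →L[ℂ] V) - 1‖ ≤ 0 := by
    have := (hmin _ hgxT).trans (hle 1)
    rw [map_one] at this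
    nlinarith [norm_nonneg ((ρ x : V →L[ℂ] V) - 1)]
  have hρx : ρ x = 1 := Subtype.ext (sub_eq_zero.1 (norm_le_zero_iff.1 hx1))
  exact hgx (hρx ▸ Commute.one_right _)

end UnitaryOperators

section Packing

open Module

theorem card_le_five_pow_finrank_of_separated {ι E : Type*} [Finite ι] [NormedAddCommGroup E]
    [NormedSpace ℝ E] [FiniteDimensional ℝ E] {r : ℝ} (hr : 0 < r) (x : ι → E)
    (hx : ∀ i, ‖x i‖ ≤ 2 * r) (hsep : Pairwise fun i j => r ≤ ‖x i - x j‖) :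
    Nat.card ι ≤ 5 ^ finrank ℝ E := by
  classical
  have := Fintype.ofFinite ι
  let y : ι → E := fun i => r⁻¹ • x i
  have hy : Pairwise fun i j => 1 ≤ ‖y i - y j‖ := fun i j hij => by
    change 1 ≤ ‖r⁻¹ • x i - r⁻¹ • x j‖
    rw [← smul_sub, norm_smul_of_nonneg (inv_nonneg.2 hr.le), ← div_eq_inv_mul, le_div_iff₀ hr,
      one_mul]
    exact hsep hij
  have hyinj : Function.Injective y := fun i j hij => by
    by_contra hne
    have := hy hne
    norm_num [hij] at this
  rw [Nat.card_eq_fintype_card, ← Finset.card_univ, ← Finset.card_image_of_injective _ hyinj]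
  refine Besicovitch.card_le_of_separated _ ?_ ?_ <;>
    simp only [Finset.mem_image, Finset.mem_univ, true_and, forall_exists_index,
      forall_apply_eq_imp_iff]
  · intro i
    rw [norm_smul_of_nonneg (inv_nonneg.2 hr.le), ← div_eq_inv_mul, div_le_iff₀ hr]
    exact hx i
  · exact fun i j hij => hy (ne_of_apply_ne y hij)

variable {A : Type*} [NormedRing A] [NormedAlgebra ℂ A] [StarRing A] [CStarRing A]

theorem isNearScalar_inv_mul_of_norm_sub_lt {u v : unitary A} {z w : ℂ} (hw : ‖w‖ = 1)
    (h : ‖z • (u : A) - w • (v : A)‖ < 1 / 2) : IsNearScalar ((u⁻¹ * v : unitary A) : A) := by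
  have hw0 : w ≠ 0 := norm_ne_zero_iff.1 (hw ▸ one_ne_zero)
  have hv : (v : A) = u * (u⁻¹ * v : unitary A) :=
    congrArg Subtype.val (mul_inv_cancel_left u v).symm
  have hzw : z • (u : A) - w • (v : A) =
      -w • ((u : A) * (((u⁻¹ * v : unitary A) : A) - algebraMap ℂ A (z / w))) := by
    rw [mul_sub, ← hv, Algebra.algebraMap_eq_smul_one, mul_smul_comm, mul_one, smul_sub, smul_smul,
      neg_mul, mul_div_cancel₀ z hw0, neg_smul, neg_smul]
    abel
  refine ⟨z / w, ?_⟩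
  rwa [hzw, norm_smul, norm_neg, hw, one_mul, CStarRing.norm_coe_unitary_mul] at h

theorem index_le_five_pow_finrank {G : Type*} [Group G] (ρ : G →* unitary A) {H : Subgroup G}
    [H.FiniteIndex] (hH : ∀ g, IsNearScalar (ρ g : A) → g ∈ H) (W : Submodule ℝ A)
    [FiniteDimensional ℝ W] (hW : ∀ g, ∃ z : ℂ, ‖z‖ = 1 ∧ z • (ρ g : A) ∈ W) :
    H.index ≤ 5 ^ finrank ℝ W := by
  choose z hz hzW using hW
  refine card_le_five_pow_finrank_of_separated (ι := G ⧸ H) one_half_pos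
    (fun q => ⟨z q.out • (ρ q.out : A), hzW q.out⟩) (fun q => ?_) fun q r hqr => ?_
  · rcases subsingleton_or_nontrivial A with hA | hA
    · simp [Subsingleton.elim (ρ q.out : A) 0]
    · simp [norm_smul, hz]
  · by_contra! hlt
    refine hqr ?_
    rw [← q.out_eq', ← r.out_eq', QuotientGroup.eq]
    refine hH _ ?_
    rw [map_mul, map_inv]
    exact isNearScalar_inv_mul_of_norm_sub_lt (hz r.out) hlt

end Packing

section Jordan

open Module

variable {V : Type*} [NormedAddCommGroup V] [InnerProductSpace ℂ V] [FiniteDimensional ℂ V]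
  {G : Type*} [Group G] [Finite G]

theorem exists_isMulCommutative_index_le (ρ : G →* unitary (V →L[ℂ] V))
    (hρ : Function.Injective ρ) (W : Submodule ℝ (V →L[ℂ] V))
    (hW : ∀ g, ∃ z : ℂ, ‖z‖ = 1 ∧ z • (ρ g : V →L[ℂ] V) ∈ W) :
    ∃ A : Subgroup G, IsMulCommutative A ∧ A.index ≤ 5 ^ finrank ℝ W :=
  ⟨Subgroup.closure {g | IsNearScalar (ρ g : V →L[ℂ] V)},
    Subgroup.isMulCommutative_closure fun g hg x hx => hρ <| by
      simpa using (commute_of_isNearScalar ρ hg hx).eq,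
    index_le_five_pow_finrank ρ (fun _ hg => Subgroup.subset_closure hg) W hW⟩

theorem exists_isMulCommutative_index_le_five_pow (ρ : G →* unitary (V →L[ℂ] V))
    (hρ : Function.Injective ρ) :
    ∃ A : Subgroup G, IsMulCommutative A ∧ A.index ≤ 5 ^ (2 * finrank ℂ V ^ 2) := by
  obtain ⟨A, hA, hindex⟩ :=
    exists_isMulCommutative_index_le ρ hρ ⊤ fun _ => ⟨1, norm_one, Submodule.mem_top⟩
  refine ⟨A, hA, hindex.trans_eq ?_⟩
  rw [finrank_top, finrank_real_of_complex, ← LinearMap.toContinuousLinearMap.finrank_eq,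
    finrank_linearMap, sq]

end Jordan

section Quaternion

open Module

/-- The real algebra of quaternions, realised as the matrices `X` with `Xᴴ = X.adjugate`. It meets
every line spanned by a unitary matrix, which halves the dimension in the packing argument. -/
def quaternionSubmodule : Submodule ℝ (Matrix (Fin 2) (Fin 2) ℂ) where
  carrier := {X | Xᴴ = X.adjugate}
  add_mem' {X Y} (hX : _ = _) (hY : _ = _) := by
    rw [Set.mem_ofPred_eq, conjTranspose_add, hX, hY]
    simp only [adjugate_fin_two]
    ext i j
    fin_cases i <;> fin_cases j <;> simp [add_comm]
  zero_mem' := by simp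
  smul_mem' c X (hX : _ = _) := by
    rw [Set.mem_ofPred_eq, conjTranspose_smul, hX]
    simp only [adjugate_fin_two]
    ext i j
    fin_cases i <;> fin_cases j <;> simp

theorem finrank_quaternionSubmodule_le : finrank ℝ quaternionSubmodule ≤ 4 := by
  let firstColumn : quaternionSubmodule →ₗ[ℝ] ℂ × ℂ :=
    { toFun := fun X => (X.1 0 0, X.1 1 0)
      map_add' := fun _ _ => rfl
      map_smul' := fun _ _ => rfl }
  have hinj : Function.Injective firstColumn := by
    refine (injective_iff_map_eq_zero _).2 ?_
    rintro ⟨X, hX : Xᴴ = X.adjugate⟩ h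
    have h00 : X 0 0 = 0 := congrArg Prod.fst h
    have h10 : X 1 0 = 0 := congrArg Prod.snd h
    rw [adjugate_fin_two] at hX
    have h11 : X 1 1 = 0 := by simpa [h00] using (congrFun (congrFun hX 0) 0).symm
    have h01 : X 0 1 = 0 := by simpa [h10] using (congrFun (congrFun hX 0) 1).symm
    ext i j
    fin_cases i <;> fin_cases j <;> assumption
  calc finrank ℝ quaternionSubmodule ≤ finrank ℝ (ℂ × ℂ) :=
        LinearMap.finrank_le_finrank_of_injective hinj
    _ = 4 := by rw [finrank_prod, Complex.finrank_real_complex]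

theorem exists_smul_mem_quaternionSubmodule {U : Matrix (Fin 2) (Fin 2) ℂ}
    (hU : U ∈ unitaryGroup (Fin 2) ℂ) : ∃ z : ℂ, ‖z‖ = 1 ∧ z • U ∈ quaternionSubmodule := by
  obtain ⟨z, hz⟩ := IsAlgClosed.exists_pow_nat_eq (star U.det) two_pos
  have hdet := det_of_mem_unitary hU
  have hz1 : ‖z‖ = 1 := by
    rw [← pow_eq_one_iff_of_nonneg (norm_nonneg z) two_ne_zero, ← norm_pow, hz, norm_star,
      CStarRing.norm_of_mem_unitary hdet]
  have hzU : (z • U)ᴴ * (z • U) = 1 := by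
    rw [conjTranspose_smul, smul_mul_smul_comm, ← star_eq_conjTranspose, hU.1]
    simp [Complex.conj_mul', hz1]
  refine ⟨z, hz1, ?_⟩
  calc (z • U)ᴴ = (z • U)ᴴ * ((z • U) * (z • U).adjugate) := by
        rw [mul_adjugate, det_smul, Fintype.card_fin, hz, hdet.1, one_smul, mul_one]
    _ = (z • U).adjugate := by rw [← mul_assoc, hzU, one_mul]

variable {V : Type*} [NormedAddCommGroup V] [InnerProductSpace ℂ V] [FiniteDimensional ℂ V]

theorem toMatrixOrthonormal_mem_unitaryGroup {ι : Type*} [Fintype ι] [DecidableEq ι]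
    (b : OrthonormalBasis ι ℂ V) {U : V →L[ℂ] V} (hU : U ∈ unitary (V →L[ℂ] V)) :
    LinearMap.toMatrixOrthonormal b U ∈ unitaryGroup ι ℂ := by
  have hstar : star (U : V →ₗ[ℂ] V) * U = 1 :=
    congrArg ContinuousLinearMap.toLinearMap (Unitary.mem_iff.1 hU).1
  rw [mem_unitaryGroup_iff', ← map_star, ← map_mul, hstar, map_one]

theorem exists_isMulCommutative_index_le_of_finrank_eq_two (hV : finrank ℂ V = 2) {G : Type*}
    [Group G] [Finite G] (ρ : G →* unitary (V →L[ℂ] V)) (hρ : Function.Injective ρ) :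
    ∃ A : Subgroup G, IsMulCommutative A ∧ A.index ≤ 5 ^ 4 := by
  let b : OrthonormalBasis (Fin 2) ℂ V := (stdOrthonormalBasis ℂ V).reindex (finCongr hV)
  let e : (V →L[ℂ] V) ≃ₗ[ℂ] Matrix (Fin 2) (Fin 2) ℂ :=
    LinearMap.toContinuousLinearMap.symm ≪≫ₗ
      (LinearMap.toMatrixOrthonormal b).toAlgEquiv.toLinearEquiv
  let W : Submodule ℝ (V →L[ℂ] V) :=
    quaternionSubmodule.map (e.symm.restrictScalars ℝ : _ →ₗ[ℝ] V →L[ℂ] V)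
  have hW : finrank ℝ W ≤ 4 := (Submodule.finrank_map_le _ _).trans finrank_quaternionSubmodule_le
  obtain ⟨A, hA, hindex⟩ := exists_isMulCommutative_index_le ρ hρ W fun g => by
    obtain ⟨z, hz, hmem⟩ :=
      exists_smul_mem_quaternionSubmodule (toMatrixOrthonormal_mem_unitaryGroup b (ρ g).2)
    refine ⟨z, hz, _, hmem, ?_⟩
    change e.symm (z • e (ρ g : V →L[ℂ] V)) = z • (ρ g : V →L[ℂ] V)
    rw [map_smul, e.symm_apply_apply]
  exact ⟨A, hA, hindex.trans (Nat.pow_le_pow_right (by lia) hW)⟩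

end Quaternion

section Unitarization

open Module
open scoped InnerProductSpace

variable {G V : Type*} [Group G]

theorem exists_invariant_innerProductCore [Finite G] [AddCommGroup V] [Module ℂ V]
    [FiniteDimensional ℂ V] (ρ : Representation ℂ G V) :
    ∃ c : InnerProductSpace.Core ℂ V, ∀ g v w, c.inner (ρ g v) (ρ g w) = c.inner v w := by
  have := Fintype.ofFinite G
  let e : V ≃ₗ[ℂ] EuclideanSpace ℂ (Fin (finrank ℂ V)) :=
    LinearEquiv.ofFinrankEq _ _ finrank_euclideanSpace_fin.symm
  refine ⟨{
    inner v w := ∑ g, ⟪e (ρ g v), e (ρ g w)⟫_ℂ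
    conj_inner_symm v w := by simp only [map_sum, inner_conj_symm]
    re_inner_nonneg v := by
      rw [map_sum]
      exact Finset.sum_nonneg fun g _ => inner_self_nonneg
    add_left u v w := by simp only [map_add, inner_add_left, Finset.sum_add_distrib]
    smul_left v w z := by simp only [map_smul, inner_smul_left, Finset.mul_sum]
    definite v hv := ?_ }, fun g v w => ?_⟩
  · have hsum : ∑ g, ‖e (ρ g v)‖ ^ 2 = 0 := by
      simpa only [map_sum, inner_self_eq_norm_sq, map_zero] using congrArg RCLike.re hv
    have hone := (Finset.sum_eq_zero_iff_of_nonneg fun g _ => sq_nonneg _).1 hsum 1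
      (Finset.mem_univ 1)
    simpa using hone
  · refine Fintype.sum_equiv (Equiv.mulRight g) _ _ fun h => ?_
    simp only [Equiv.coe_mulRight, map_mul, Module.End.mul_apply]

theorem exists_monoidHom_unitary [NormedAddCommGroup V] [InnerProductSpace ℂ V]
    [FiniteDimensional ℂ V] (ρ : Representation ℂ G V)
    (hρ : ∀ g v w, ⟪ρ g v, ρ g w⟫_ℂ = ⟪v, w⟫_ℂ) :
    ∃ σ : G →* unitary (V →L[ℂ] V), ∀ g, ((σ g : V →L[ℂ] V) : V →ₗ[ℂ] V) = ρ g := by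
  let τ : G →* V →L[ℂ] V := (End.toContinuousLinearMap (𝕜 := ℂ) V : End ℂ V →* V →L[ℂ] V).comp ρ
  refine ⟨τ.codRestrict (unitary (V →L[ℂ] V)) fun g => ?_, fun g => rfl⟩
  have hunit : IsUnit (τ g) := (Group.isUnit g).map τ
  exact hunit.mem_unitary_iff_star_mul_self.2
    ((τ g).inner_map_map_iff_adjoint_comp_self.1 (hρ g))

end Unitarization

section Arithmetic

open Nat

theorem add_add_lt_of_two_pow_mul_three_pow_mul_five_pow_lt {a b c i j k : ℕ} (ha : a ≤ i)
    (hb : b ≤ j) (h : 2 ^ a * 3 ^ b * 5 ^ c < 2 ^ i * 3 ^ j * 5 ^ k) :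
    a + b + c < i + j + k := by
  obtain ⟨i, rfl⟩ := exists_add_of_le ha
  obtain ⟨j, rfl⟩ := exists_add_of_le hb
  by_contra! hle
  refine h.not_ge ?_
  calc 2 ^ (a + i) * 3 ^ (b + j) * 5 ^ k = 2 ^ a * 3 ^ b * (2 ^ i * 3 ^ j * 5 ^ k) := by ring
    _ ≤ 2 ^ a * 3 ^ b * (5 ^ i * 5 ^ j * 5 ^ k) := by gcongr <;> lia
    _ = 2 ^ a * 3 ^ b * 5 ^ (i + j + k) := by ring
    _ ≤ 2 ^ a * 3 ^ b * 5 ^ c := by gcongr <;> lia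

theorem five_mul_sq_le_factorial_succ {n : ℕ} (hn : 4 ≤ n) : 5 * n ^ 2 ≤ (n + 1)! := by
  induction n, hn using Nat.le_induction with
  | base => decide
  | succ n hn ih =>
    rw [factorial_succ]
    nlinarith

theorem add_add_le_factorial_succ {n a b c : ℕ} (ha : a ≤ n + (n !).factorization 2)
    (hb : b ≤ n + (n !).factorization 3)
    (h : 2 ^ a * 3 ^ b * 5 ^ c ≤ 5 ^ (if n = 2 then 4 else 2 * n ^ 2)) :
    a + b + c ≤ (n + 1)! := by
  rcases lt_or_ge n 4 with hn | hn
  · rw [factorization_factorial prime_two (b := 3) (log_lt_of_lt_pow' (by lia) (by lia))] at ha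
    rw [factorization_factorial prime_three (b := 3) (log_lt_of_lt_pow' (by lia) (by lia))] at hb
    interval_cases n
    · exact le_of_lt_succ (add_add_lt_of_two_pow_mul_three_pow_mul_five_pow_lt
        (i := 0) (j := 0) (k := 2) ha hb (h.trans_lt (by decide)))
    · exact le_of_lt_succ (add_add_lt_of_two_pow_mul_three_pow_mul_five_pow_lt
        (i := 1) (j := 1) (k := 1) ha hb (h.trans_lt (by decide)))
    · exact le_of_lt_succ (add_add_lt_of_two_pow_mul_three_pow_mul_five_pow_lt
        (i := 3) (j := 2) (k := 2) ha hb (h.trans_lt (by decide)))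
    · exact le_of_lt_succ (add_add_lt_of_two_pow_mul_three_pow_mul_five_pow_lt
        (i := 4) (j := 4) (k := 17) ha hb (h.trans_lt (by decide)))
  · refine le_trans ?_ (five_mul_sq_le_factorial_succ hn)
    rw [if_neg (by lia)] at h
    refine (Nat.pow_le_pow_iff_right one_lt_two).1 ?_
    calc 2 ^ (a + b + c) = 2 ^ a * 2 ^ b * 2 ^ c := by ring
      _ ≤ 2 ^ a * 3 ^ b * 5 ^ c := by gcongr <;> lia
      _ ≤ 5 ^ (2 * n ^ 2) := h
      _ = (5 ^ 2) ^ n ^ 2 := pow_mul _ _ _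
      _ ≤ (2 ^ 5) ^ n ^ 2 := Nat.pow_le_pow_left (by lia) _
      _ = 2 ^ (5 * n ^ 2) := (pow_mul _ _ _).symm

end Arithmetic

section Main

open Module Nat

theorem finite_subgroup_GL_generated_by_const_general {G V : Type*} [Group G] [Finite G]
    [AddCommGroup V] [Module ℂ V] [FiniteDimensional ℂ V] (ρ : Representation ℂ G V)
    (hρ : Function.Injective ρ) :
    ∃ S : Finset G, S.card ≤ finrank ℂ V + (finrank ℂ V + 1)! ∧
      Subgroup.closure (S : Set G) = ⊤ := by
  obtain ⟨core, hcore⟩ := exists_invariant_innerProductCore ρ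
  let _ := core.toNormedAddCommGroup
  let _ := InnerProductSpace.ofCore core.toCore
  obtain ⟨σ, hσ⟩ := exists_monoidHom_unitary ρ hcore
  have hσinj : Function.Injective σ := fun g h hgh => hρ <| by rw [← hσ, ← hσ, hgh]
  have hss : ∀ g, End.IsSemisimple (ρ g) := fun g => hσ g ▸ isSemisimple_of_mem_unitary (σ g).2
  obtain ⟨A, hA, hindex⟩ : ∃ A : Subgroup G, IsMulCommutative A ∧
      A.index ≤ 5 ^ (if finrank ℂ V = 2 then 4 else 2 * finrank ℂ V ^ 2) := by
    split_ifs with hV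
    · exact exists_isMulCommutative_index_le_of_finrank_eq_two hV σ hσinj
    · exact exists_isMulCommutative_index_le_five_pow σ hσinj
  obtain ⟨a, b, c, ha, hb, habc, hAG⟩ := exists_generatedOver_top_pow_le_index hρ hss A
  obtain ⟨S, hS, hcl⟩ := ((generatedOver_bot_of_isMulCommutative hρ hss).trans hAG).mono
    (Nat.add_le_add_left (add_add_le_factorial_succ ha hb (habc.trans hindex)) _)
  exact ⟨S, hS, by simpa using hcl⟩

end Main

/-- For every `n` there is a constant `c = c(n)` (concretely `c = n + (n+1)!`)
bounding the minimal number of generators of every finite subgroup of `GL n ℂ`. -/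
theorem finite_subgroup_GL_generated_by_const
    (n : ℕ) (H : Subgroup (GL (Fin n) ℂ)) [Finite H] :
    ∃ S : Finset H, S.card ≤ n + Nat.factorial (n + 1) ∧
      Subgroup.closure (S : Set H) = ⊤ := by
  let ρ : Representation ℂ H (Fin n → ℂ) :=
    (Units.coeHom _).comp (GeneralLinearGroup.toLin.toMonoidHom.comp H.subtype)
  have hρ : Function.Injective ρ :=
    Units.val_injective.comp (GeneralLinearGroup.toLin.injective.comp H.subtype_injective)
  simpa only [Module.finrank_fin_fun] using finite_subgroup_GL_generated_by_const_general ρ hρ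
end

section
/- Let X₁, …, Xₙ be pure-dimensional projective varieties over ℂ and let Z₁, …, Zₘ be the irreducible components of X₁ ∩ ⋯ ∩ Xₙ. Then Σᵢ deg(Zᵢ) ≤ Πⱼ deg(Xⱼ). In particular, the number m of irreducible components of the intersection is at most the product of the degrees. -/
/-! We formalize projective varieties in `ℙ^N(ℂ)` via their affine cones in
`V = ℂ^(N+1)`: zero sets of families of homogeneous polynomials.  The
(projective) dimension is defined via chains of irreducible subvarieties, the
degree of a variety as the largest (projective) number of points in a finite
intersection with a linear subspace — by the classical theory this recovers
the usual degree, since a generic linear space of complementary dimension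
realizes it and no finite linear section can exceed it. -/

variable (N : ℕ)

/-- The affine cone cut out by a set of polynomials. -/
def zeroLocus (S : Set (MvPolynomial (Fin (N + 1)) ℂ)) : Set (Fin (N + 1) → ℂ) :=
  {v | ∀ p ∈ S, MvPolynomial.eval v p = 0}

/-- `X` is the affine cone of a projective algebraic set: the zero locus of a
family of homogeneous polynomials. -/
def IsAlgCone (X : Set (Fin (N + 1) → ℂ)) : Prop :=
  ∃ S : Set (MvPolynomial (Fin (N + 1)) ℂ),
    (∀ p ∈ S, ∃ d, p.IsHomogeneous d) ∧ X = zeroLocus N S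

/-- `X` is the cone of an irreducible projective variety: it is a nontrivial
algebraic cone which is not covered by two algebraic sets unless it lies in
one of them. -/
def IsIrredCone (X : Set (Fin (N + 1) → ℂ)) : Prop :=
  IsAlgCone N X ∧ ¬ X ⊆ {0} ∧
    ∀ Y Z : Set (Fin (N + 1) → ℂ), IsAlgCone N Y → IsAlgCone N Z →
      X ⊆ Y ∪ Z → X ⊆ Y ∨ X ⊆ Z

/-- `Z` is an irreducible component of `X`: a maximal irreducible subvariety. -/
def IsIrredComponent (X Z : Set (Fin (N + 1) → ℂ)) : Prop :=
  IsIrredCone N Z ∧ Z ⊆ X ∧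
    ∀ Z', IsIrredCone N Z' → Z ⊆ Z' → Z' ⊆ X → Z' = Z

/-- The (projective) dimension of `X`: the longest chain
`c 0 ⊂ c 1 ⊂ ⋯ ⊂ c k ⊆ X` of irreducible subvarieties. -/
noncomputable def projDim (X : Set (Fin (N + 1) → ℂ)) : ℕ :=
  sSup {k : ℕ | ∃ c : Fin (k + 1) → Set (Fin (N + 1) → ℂ),
    (∀ i, IsIrredCone N (c i) ∧ c i ⊆ X) ∧ ∀ i j, i < j → c i ⊂ c j}

/-- The projective points of a cone `X`: the lines through the origin
contained in `X`. -/
def projPoints (X : Set (Fin (N + 1) → ℂ)) : Set (Submodule ℂ (Fin (N + 1) → ℂ)) :=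
  {L | Module.finrank ℂ L = 1 ∧ (L : Set (Fin (N + 1) → ℂ)) ⊆ X}

/-- The degree of a projective variety (given by its cone `X`): the largest
number of projective points in a finite intersection of `X` with a linear
subspace. -/
noncomputable def projDegree (X : Set (Fin (N + 1) → ℂ)) : ℕ :=
  sSup {k : ℕ | ∃ W : Submodule ℂ (Fin (N + 1) → ℂ),
    (projPoints N (X ∩ (W : Set (Fin (N + 1) → ℂ)))).Finite ∧
      (projPoints N (X ∩ (W : Set (Fin (N + 1) → ℂ)))).ncard = k}

/-!
The sum `∑ deg Q` over *all* irreducible components `Q` of a cone, of whatever dimension, is well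
behaved under intersections, and this is what is bounded by induction. Noether normalization
squeezes the Hilbert function of an irreducible cone between two shifts of the polynomial
`r * n.multichoose t`, so that the dimension `n` and the degree `r` can be read off its growth. By
going-down, the components of a hyperplane section `V ∩ H` are all of codimension one, and comparing
the Hilbert functions of `V ∩ H` and `V` yields `∑ deg Q ≤ deg V` over the components `Q` of
`V ∩ H`. Hence cutting by a linear space does not increase the sum. An intersection `X ∩ Y` is the
section of the product `X × Y` by the diagonal, which is linear, and the Hilbert function of the
product is bounded by the convolution of the two Hilbert functions; so the sum is submultiplicative.

It remains to compare it with the degree defined by finite linear sections. The points of such a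
section are among its components, so the degree is at most the sum. When all components have the
same dimension, a generic fibre of a Noether normalization is cut out by a linear space and attains
the sum, by the primitive element theorem.
-/

namespace GeneralizedBezout

open MvPolynomial Module

variable {K : Type*} [Field K] {σ τ : Type*}

/-! ### Cones -/

/-- A cone of `K^σ`: the set of common zeros of a family of homogeneous polynomials.  Cones encode
the closed subsets of the projective space of `K^σ`; both `∅` and `{0}` encode the empty one. -/
def IsCone (V : Set (σ → K)) : Prop :=
  ∃ S : Set (MvPolynomial σ K), (∀ p ∈ S, ∃ d, p.IsHomogeneous d) ∧
    V = {v | ∀ p ∈ S, eval v p = 0}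

/-- The cone of an irreducible closed subset of projective space. -/
def IsIrred (V : Set (σ → K)) : Prop :=
  IsCone V ∧ ¬ V ⊆ {0} ∧
    ∀ Y Z : Set (σ → K), IsCone Y → IsCone Z → V ⊆ Y ∪ Z → V ⊆ Y ∨ V ⊆ Z

/-- `Z` is an irreducible component of `X`, that is, a maximal irreducible cone inside `X`. -/
def IsComponent (X Z : Set (σ → K)) : Prop :=
  IsIrred Z ∧ Z ⊆ X ∧ ∀ Z', IsIrred Z' → Z ⊆ Z' → Z' ⊆ X → Z' = Z

lemma mem_vanishingIdeal {V : Set (σ → K)} {p : MvPolynomial σ K} :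
    p ∈ vanishingIdeal K V ↔ ∀ x ∈ V, eval x p = 0 :=
  Iff.rfl

lemma eval_smul_of_isHomogeneous {p : MvPolynomial σ K} {d : ℕ} (hp : p.IsHomogeneous d) (c : K)
    (v : σ → K) : eval (c • v) p = c ^ d * eval v p := by
  rw [eval_eq, eval_eq, Finset.mul_sum]
  refine Finset.sum_congr rfl fun m hm => ?_
  simp only [Pi.smul_apply, smul_eq_mul, mul_pow, Finset.prod_mul_distrib]
  rw [Finset.prod_pow_eq_pow_sum, ← hp.degree_eq_sum_deg_support hm]
  ring

namespace IsCone

variable {V W : Set (σ → K)}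

lemma smul_mem (hV : IsCone V) {v : σ → K} (hv : v ∈ V) (c : K) : c • v ∈ V := by
  obtain ⟨S, hS, rfl⟩ := hV
  intro p hp
  obtain ⟨d, hd⟩ := hS p hp
  rw [eval_smul_of_isHomogeneous hd, hv p hp, mul_zero]

lemma mem_iff (hV : IsCone V) {v : σ → K} : v ∈ V ↔ ∀ p ∈ vanishingIdeal K V, eval v p = 0 := by
  refine ⟨fun hv p hp => hp v hv, ?_⟩
  obtain ⟨S, -, rfl⟩ := hV
  exact fun h p hp => h p fun x hx => hx p hp

lemma subset_iff (hW : IsCone W) : V ⊆ W ↔ vanishingIdeal K W ≤ vanishingIdeal K V :=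
  ⟨fun h => vanishingIdeal_anti_mono h, fun h v hv => hW.mem_iff.2 fun _ hp => h hp v hv⟩

lemma exists_mem_vanishingIdeal_of_not_subset (hW : IsCone W) (h : ¬ V ⊆ W) :
    ∃ p ∈ vanishingIdeal K W, p ∉ vanishingIdeal K V :=
  SetLike.not_le_iff_exists.1 (hW.subset_iff.not.1 h)

lemma iInter {ι : Sort*} {X : ι → Set (σ → K)} (h : ∀ i, IsCone (X i)) : IsCone (⋂ i, X i) := by
  choose S hS hX using h
  refine ⟨⋃ i, S i, fun p hp => ?_, ?_⟩
  · obtain ⟨i, hi⟩ := Set.mem_iUnion.1 hp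
    exact hS i p hi
  · ext v
    simp only [hX, Set.mem_iInter, Set.mem_ofPred_eq, Set.mem_iUnion]
    exact ⟨fun h p ⟨i, hp⟩ => h i p hp, fun h i p hp => h p ⟨i, hp⟩⟩

lemma inter (hV : IsCone V) (hW : IsCone W) : IsCone (V ∩ W) := by
  rw [Set.inter_eq_iInter]
  exact iInter (Bool.forall_bool.2 ⟨hW, hV⟩)

lemma union (hV : IsCone V) (hW : IsCone W) : IsCone (V ∪ W) := by
  obtain ⟨S, hS, rfl⟩ := hV
  obtain ⟨T, hT, rfl⟩ := hW
  refine ⟨Set.image2 (· * ·) S T, ?_, ?_⟩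
  · rintro _ ⟨p, hp, q, hq, rfl⟩
    obtain ⟨d, hd⟩ := hS p hp
    obtain ⟨e, he⟩ := hT q hq
    exact ⟨d + e, hd.mul he⟩
  · ext v
    simp only [Set.mem_union, Set.mem_ofPred_eq, Set.forall_mem_image2, map_mul, mul_eq_zero]
    constructor
    · rintro (h | h) p hp q hq
      exacts [Or.inl (h p hp), Or.inr (h q hq)]
    · intro h
      by_contra! hc
      obtain ⟨⟨p, hp, hp'⟩, q, hq, hq'⟩ := hc
      exact (h p hp q hq).elim hp' hq'

end IsCone

lemma isCone_setOf_eval_eq_zero {p : MvPolynomial σ K} {d : ℕ} (hp : p.IsHomogeneous d) :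
    IsCone {v : σ → K | eval v p = 0} :=
  ⟨{p}, by rintro _ rfl; exact ⟨d, hp⟩, by simp⟩

lemma isCone_univ : IsCone (Set.univ : Set (σ → K)) :=
  ⟨∅, by simp, by simp⟩

lemma isCone_empty : IsCone (∅ : Set (σ → K)) :=
  ⟨{1}, by rintro _ rfl; exact ⟨0, isHomogeneous_one _ _⟩, by simp⟩

lemma isCone_singleton_zero : IsCone ({0} : Set (σ → K)) := by
  refine ⟨Set.range X, ?_, ?_⟩
  · rintro _ ⟨i, rfl⟩
    exact ⟨1, isHomogeneous_X _ _⟩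
  · ext v
    simp [funext_iff]

lemma isCone_biUnion {T : Finset (Set (σ → K))} (h : ∀ Z ∈ T, IsCone Z) :
    IsCone (⋃ Z ∈ T, Z) := by
  classical
  induction T using Finset.induction_on with
  | empty => simpa using isCone_empty
  | insert a s _ ih =>
    rw [Finset.set_biUnion_insert]
    exact (h a (by simp)).union (ih fun Z hZ => h Z (by simp [hZ]))

section

attribute [local instance] MvPolynomial.gradedAlgebra

lemma IsCone.isHomogeneous_vanishingIdeal [Infinite K] {V : Set (σ → K)} (hV : IsCone V) :
    (vanishingIdeal K V).IsHomogeneous (homogeneousSubmodule σ K) := by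
  intro n p hp
  suffices h : homogeneousComponent n p ∈ vanishingIdeal K V by
    rwa [← decomposition.decompose'_apply] at h
  intro x hx
  -- `c ↦ p (c x)` is a polynomial in `c` which vanishes identically.
  let P : Polynomial K := ∑ i ∈ Finset.range (p.totalDegree + 1),
    Polynomial.monomial i (eval x (homogeneousComponent i p))
  have hP : P = 0 := Polynomial.funext fun c => by
    have h := mem_vanishingIdeal.1 hp _ (hV.smul_mem hx c)
    rw [← sum_homogeneousComponent p, map_sum] at h
    simp only [P, Polynomial.eval_finsetSum, Polynomial.eval_monomial, Polynomial.eval_zero, ← h,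
      eval_smul_of_isHomogeneous (homogeneousComponent_isHomogeneous _ p), mul_comm]
  rcases lt_or_ge p.totalDegree n with hn | hn
  · rw [homogeneousComponent_eq_zero n p hn, map_zero]
  · have h := congrArg (fun q => Polynomial.coeff q n) hP
    simpa [P, Polynomial.finsetSum_coeff, Polynomial.coeff_monomial, hn] using h

lemma IsCone.homogeneousComponent_mem [Infinite K] {V : Set (σ → K)} (hV : IsCone V)
    {p : MvPolynomial σ K} (hp : p ∈ vanishingIdeal K V) (n : ℕ) :
    homogeneousComponent n p ∈ vanishingIdeal K V :=
  homogeneousComponent_mem_of_mem hV.isHomogeneous_vanishingIdeal hp n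

lemma IsCone.exists_isHomogeneous_of_not_subset [Infinite K] {V W : Set (σ → K)} (hW : IsCone W)
    (h : ¬ V ⊆ W) :
    ∃ p d, p.IsHomogeneous d ∧ p ∈ vanishingIdeal K W ∧ p ∉ vanishingIdeal K V := by
  obtain ⟨p, hp, hpV⟩ := hW.exists_mem_vanishingIdeal_of_not_subset h
  by_contra! hc
  refine hpV ?_
  rw [← sum_homogeneousComponent p]
  exact Ideal.sum_mem _ fun n _ =>
    hc _ n (homogeneousComponent_isHomogeneous n p) (hW.homogeneousComponent_mem hp n)

namespace IsIrred

variable {V : Set (σ → K)}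

lemma isCone (hV : IsIrred V) : IsCone V := hV.1

lemma exists_ne_zero (hV : IsIrred V) : ∃ v ∈ V, v ≠ 0 := Set.not_subset.1 hV.2.1

lemma zero_mem (hV : IsIrred V) : (0 : σ → K) ∈ V := by
  obtain ⟨v, hv, -⟩ := hV.exists_ne_zero
  simpa using hV.isCone.smul_mem hv 0

lemma subset_of_biUnion (hV : IsIrred V) {T : Finset (Set (σ → K))} (h : ∀ Z ∈ T, IsCone Z)
    (hsub : V ⊆ {0} ∪ ⋃ Z ∈ T, Z) : ∃ Z ∈ T, V ⊆ Z := by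
  classical
  induction T using Finset.induction_on with
  | empty => exact absurd (by simpa using hsub) hV.2.1
  | insert a s _ ih =>
    have hs : ∀ Z ∈ s, IsCone Z := fun Z hZ => h Z (by simp [hZ])
    rw [Finset.set_biUnion_insert, Set.union_left_comm] at hsub
    rcases hV.2.2 _ _ (h a (by simp)) (isCone_singleton_zero.union (isCone_biUnion hs)) hsub
      with ha | hs'
    · exact ⟨a, by simp, ha⟩
    · obtain ⟨Z, hZ, hVZ⟩ := ih hs hs'
      exact ⟨Z, by simp [hZ], hVZ⟩

lemma isPrime_vanishingIdeal [Infinite K] (hV : IsIrred V) : (vanishingIdeal K V).IsPrime := by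
  apply hV.isCone.isHomogeneous_vanishingIdeal.isPrime_of_homogeneous_mem_or_mem
  · obtain ⟨v, hv, -⟩ := hV.exists_ne_zero
    rw [Ne, Ideal.eq_top_iff_one]
    exact fun h => by simpa using h v hv
  · rintro p q ⟨d, hp⟩ ⟨e, hq⟩ hpq
    refine hV.2.2 _ _ (isCone_setOf_eval_eq_zero hp) (isCone_setOf_eval_eq_zero hq) fun v hv => ?_
    exact mul_eq_zero.1 ((map_mul (eval v) p q).symm.trans (hpq v hv))

lemma mul_notMem_vanishingIdeal [Infinite K] (hV : IsIrred V) {p q : MvPolynomial σ K}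
    (hp : p ∉ vanishingIdeal K V) (hq : q ∉ vanishingIdeal K V) : p * q ∉ vanishingIdeal K V :=
  fun h => (hV.isPrime_vanishingIdeal.mem_or_mem h).elim hp hq

end IsIrred

end

lemma isIrred_of_isPrime {V : Set (σ → K)} (hV : IsCone V) (h0 : ¬ V ⊆ {0})
    (hp : (vanishingIdeal K V).IsPrime) : IsIrred V := by
  refine ⟨hV, h0, fun Y Z hY hZ hsub => ?_⟩
  by_contra! hc
  obtain ⟨f, hf, hf'⟩ := hY.exists_mem_vanishingIdeal_of_not_subset hc.1
  obtain ⟨g, hg, hg'⟩ := hZ.exists_mem_vanishingIdeal_of_not_subset hc.2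
  refine (hp.mem_or_mem (x := f) (y := g) fun v hv => ?_).elim hf' hg'
  rw [map_mul, mul_eq_zero]
  exact (hsub hv).imp (hf v) (hg v)

/-! ### Irreducible components -/

lemma isCone_induction [Finite σ] {P : Set (σ → K) → Prop}
    (h : ∀ V, IsCone V → (∀ W, IsCone W → W ⊂ V → P W) → P V) (V : Set (σ → K)) (hV : IsCone V) :
    P V := by
  induction hJ : vanishingIdeal K V using WellFoundedGT.induction generalizing V with
  | ind J ih =>
    refine h V hV fun W hW hWV => ih _ ?_ W hW rfl
    rw [← hJ]
    exact lt_of_le_not_ge (vanishingIdeal_anti_mono hWV.1) fun hle => hWV.2 (hW.subset_iff.2 hle)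

lemma exists_finset_isIrred [Finite σ] (V : Set (σ → K)) (hV : IsCone V) :
    ∃ T : Finset (Set (σ → K)), (∀ Z ∈ T, IsIrred Z ∧ Z ⊆ V) ∧ V ⊆ {0} ∪ ⋃ Z ∈ T, Z := by
  classical
  revert V
  refine isCone_induction fun V hV ih => ?_
  by_cases h0 : V ⊆ {0}
  · exact ⟨∅, by simp, by simpa using h0⟩
  by_cases hI : IsIrred V
  · exact ⟨{V}, by simpa using hI, by simp⟩
  obtain ⟨Y, Z, hY, hZ, hYZ, hVY, hVZ⟩ : ∃ Y Z, IsCone Y ∧ IsCone Z ∧ V ⊆ Y ∪ Z ∧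
      ¬ V ⊆ Y ∧ ¬ V ⊆ Z := by
    simpa [IsIrred, hV, h0] using hI
  obtain ⟨T₁, hT₁, hV₁⟩ := ih (V ∩ Y) (hV.inter hY)
    ⟨Set.inter_subset_left, fun h => hVY fun x hx => (h hx).2⟩
  obtain ⟨T₂, hT₂, hV₂⟩ := ih (V ∩ Z) (hV.inter hZ)
    ⟨Set.inter_subset_left, fun h => hVZ fun x hx => (h hx).2⟩
  refine ⟨T₁ ∪ T₂, fun W hW => ?_, fun x hx => ?_⟩
  · rcases Finset.mem_union.1 hW with h | h
    · exact ⟨(hT₁ W h).1, (hT₁ W h).2.trans Set.inter_subset_left⟩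
    · exact ⟨(hT₂ W h).1, (hT₂ W h).2.trans Set.inter_subset_left⟩
  · rw [Finset.set_biUnion_union]
    exact (hYZ hx).elim (fun h => (hV₁ ⟨hx, h⟩).imp_right Or.inl)
      fun h => (hV₂ ⟨hx, h⟩).imp_right Or.inr

open Classical in
/-- The finite set of irreducible components of a cone.  The value `∅` in the case of infinitely
many components does not occur for cones, see `mem_components`. -/
noncomputable def components (X : Set (σ → K)) : Finset (Set (σ → K)) :=
  if h : {Z | IsComponent X Z}.Finite then h.toFinset else ∅

section Components

variable [Finite σ] {X : Set (σ → K)}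

lemma finite_setOf_isComponent (hX : IsCone X) : {Z | IsComponent X Z}.Finite := by
  obtain ⟨T, hT, hXT⟩ := exists_finset_isIrred X hX
  refine T.finite_toSet.subset fun Z hZ => ?_
  obtain ⟨W, hW, hZW⟩ := hZ.1.subset_of_biUnion (fun Z hZ => (hT Z hZ).1.1) (hZ.2.1.trans hXT)
  rwa [← hZ.2.2 W (hT W hW).1 hZW (hT W hW).2]

lemma mem_components (hX : IsCone X) {Z : Set (σ → K)} : Z ∈ components X ↔ IsComponent X Z := by
  rw [components, dif_pos (finite_setOf_isComponent hX), Set.Finite.mem_toFinset]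
  rfl

lemma exists_subset_component (hX : IsCone X) {W : Set (σ → K)} (hW : IsIrred W) (hWX : W ⊆ X) :
    ∃ Z ∈ components X, W ⊆ Z := by
  obtain ⟨T, hT, hXT⟩ := exists_finset_isIrred X hX
  have hcone : ∀ Z ∈ T, IsCone Z := fun Z hZ => (hT Z hZ).1.1
  obtain ⟨Z, hZ, hWZ⟩ := hW.subset_of_biUnion hcone (hWX.trans hXT)
  obtain ⟨M, hZM, hM, hmax⟩ := T.exists_le_maximal hZ
  refine ⟨M, (mem_components hX).2 ⟨(hT M hM).1, (hT M hM).2, fun Z' hZ' hMZ' hZ'X => ?_⟩,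
    hWZ.trans hZM⟩
  obtain ⟨Y, hY, hZ'Y⟩ := hZ'.subset_of_biUnion hcone (hZ'X.trans hXT)
  exact (hZ'Y.trans (hmax hY (hMZ'.trans hZ'Y))).antisymm hMZ'

lemma subset_zero_union_components (hX : IsCone X) : X ⊆ {0} ∪ ⋃ Z ∈ components X, Z := by
  obtain ⟨T, hT, hXT⟩ := exists_finset_isIrred X hX
  refine fun x hx => (hXT hx).imp_right fun h => ?_
  simp only [Set.mem_iUnion] at h ⊢
  obtain ⟨Z, hZ, hxZ⟩ := h
  obtain ⟨M, hM, hZM⟩ := exists_subset_component hX (hT Z hZ).1 (hT Z hZ).2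
  exact ⟨M, hM, hZM hxZ⟩

lemma components_eq_singleton (hX : IsIrred X) : components X = {X} := by
  ext Z
  rw [mem_components hX.1, Finset.mem_singleton]
  constructor
  · exact fun h => (h.2.2 X hX h.2.1 subset_rfl).symm
  · rintro rfl
    exact ⟨hX, subset_rfl, fun Z' _ h h' => h'.antisymm h⟩

end Components

/-! ### Multichoose numbers -/

section Multichoose

open Filter Asymptotics Finset.HasAntidiagonal
open scoped Nat

lemma multichoose_succ_eq_choose (n t : ℕ) : (n + 1).multichoose t = (t + n).choose n := by
  rw [Nat.multichoose_eq, Nat.choose_symm_of_eq_add (a := t) (b := n) (by lia)]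
  congr 1
  lia

lemma sum_range_succ_multichoose (n t : ℕ) :
    ∑ u ∈ Finset.range (t + 1), n.multichoose u = (n + 1).multichoose t := by
  rw [Nat.sum_range_multichoose, multichoose_succ_eq_choose]

lemma monotone_multichoose {n : ℕ} (hn : n ≠ 0) : Monotone n.multichoose := by
  obtain ⟨n, rfl⟩ := Nat.exists_eq_succ_of_ne_zero hn
  intro s t hst
  simp only [Nat.succ_eq_add_one, multichoose_succ_eq_choose]
  exact Nat.choose_le_choose _ (by lia)

lemma isEquivalent_multichoose_add (n s : ℕ) :
    (fun t : ℕ => ((n + 1).multichoose (t + s) : ℝ)) ~[atTop] fun t => (t : ℝ) ^ n / n ! := by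
  have hadd : (fun t : ℕ => ((t + (s + n) : ℕ) : ℝ)) ~[atTop] fun t => (t : ℝ) := by
    simp only [Nat.cast_add _ (s + n)]
    exact IsEquivalent.refl.add_isLittleO
      (isLittleO_const_left.2 (.inr (tendsto_norm_atTop_atTop.comp tendsto_natCast_atTop_atTop)))
  have h := (isEquivalent_choose n).comp_tendsto (tendsto_add_atTop_nat (s + n))
  simp only [multichoose_succ_eq_choose, add_assoc]
  exact h.trans ((hadd.pow n).div IsEquivalent.refl)

lemma le_of_forall_multichoose_le {n n' r s : ℕ} (hn : n ≠ 0)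
    (h : ∀ t, n.multichoose t ≤ r * n'.multichoose (t + s)) : n ≤ n' := by
  obtain ⟨n, rfl⟩ := Nat.exists_eq_succ_of_ne_zero hn
  rcases n' with - | n'
  · simpa [add_comm 1 s] using h 1
  by_contra! hlt
  have hle : (fun t : ℕ => (t : ℝ) ^ n / n !) =O[atTop] fun t => (t : ℝ) ^ n' / n' ! := by
    refine ((isEquivalent_multichoose_add n 0).isBigO_symm.trans ?_).trans
      (isEquivalent_multichoose_add n' s).isBigO
    refine IsBigO.of_bound r (Eventually.of_forall fun t => ?_)
    simpa using mod_cast h t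
  have hlt : (fun t : ℕ => (t : ℝ) ^ n' / n' !) =o[atTop] fun t => (t : ℝ) ^ n / n ! := by
    simp only [div_eq_inv_mul]
    have := (isLittleO_pow_pow_atTop_of_lt (𝕜 := ℝ) (show n' < n by lia)).comp_tendsto
      tendsto_natCast_atTop_atTop
    refine (this.const_mul_left _).const_mul_right (by positivity)
  refine hlt.not_isBigO (Eventually.frequently ?_) hle
  filter_upwards [eventually_gt_atTop 0] with t ht
  positivity

lemma le_of_forall_mul_multichoose_le {n r r' s : ℕ} (hn : n ≠ 0)
    (h : ∀ t, r * n.multichoose t ≤ r' * n.multichoose (t + s)) : r ≤ r' := by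
  obtain ⟨n, rfl⟩ := Nat.exists_eq_succ_of_ne_zero hn
  have hlim (s : ℕ) := (isEquivalent_iff_tendsto_one <| by
    filter_upwards [eventually_gt_atTop 0] with t ht
    positivity).1 (isEquivalent_multichoose_add n s)
  have : (r : ℝ) * 1 ≤ r' * 1 := le_of_tendsto_of_tendsto'
    ((hlim 0).const_mul (r : ℝ)) ((hlim s).const_mul (r' : ℝ)) fun t => by
      simp only [Pi.div_apply, ← mul_div_assoc]
      exact div_le_div_of_nonneg_right (mod_cast h t) (by positivity)
  simpa using this

lemma sum_antidiagonal_multichoose_mul (m n t : ℕ) :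
    ∑ x ∈ antidiagonal t, m.multichoose x.1 * n.multichoose x.2 = (m + n).multichoose t := by
  induction m generalizing t with
  | zero =>
    rw [Finset.sum_eq_single_of_mem (0, t) (by simp)]
    · simp
    · rintro ⟨_ | a, b⟩ hab hne <;> simp_all
  | succ m ihm =>
    induction t with
    | zero => simp
    | succ t iht =>
      rw [Finset.Nat.sum_antidiagonal_succ]
      simp only [Nat.multichoose_succ_succ, add_mul, Finset.sum_add_distrib]
      rw [iht, add_right_comm, Nat.multichoose_succ_succ, ← ihm, Finset.Nat.sum_antidiagonal_succ]
      simp only [Nat.multichoose_zero_right]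
      ring

lemma sum_antidiagonal_multichoose_add_mul_le (m n t a b : ℕ) :
    ∑ x ∈ antidiagonal t, m.multichoose (x.1 + a) * n.multichoose (x.2 + b) ≤
      (m + n).multichoose (t + (a + b)) := by
  rw [← sum_antidiagonal_multichoose_mul]
  refine (Finset.sum_map (antidiagonal t) ((addRightEmbedding a).prodMap (addRightEmbedding b))
    fun x => m.multichoose x.1 * n.multichoose x.2).ge.trans
    (Finset.sum_le_sum_of_subset fun x hx => ?_)
  obtain ⟨y, hy, rfl⟩ := Finset.mem_map.1 hx
  have := mem_antidiagonal.1 hy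
  simp
  lia

end Multichoose

/-! ### Hilbert functions -/

section Rank

variable {M N N' : Type*} [AddCommGroup M] [Module K M] [AddCommGroup N] [Module K N]
  [AddCommGroup N'] [Module K N']

lemma finrank_map_add_finrank_inf_ker (S : Submodule K M) [FiniteDimensional K S] (f : M →ₗ[K] N) :
    finrank K (S.map f) + finrank K ↥(S ⊓ LinearMap.ker f) = finrank K S := by
  rw [← (f.domRestrict S).finrank_range_add_finrank_ker, LinearMap.range_domRestrict,
    LinearMap.ker_domRestrict, ← Submodule.map_comap_subtype, Submodule.finrank_map_subtype_eq]

lemma finrank_map_le_finrank_map_of_ker_le {S : Submodule K M} [FiniteDimensional K S]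
    {f : M →ₗ[K] N} {g : M →ₗ[K] N'} (h : ∀ x ∈ S, g x = 0 → f x = 0) :
    finrank K (S.map f) ≤ finrank K (S.map g) := by
  have hker : S ⊓ LinearMap.ker g ≤ S ⊓ LinearMap.ker f := fun x hx => ⟨hx.1, h x hx.1 hx.2⟩
  have : FiniteDimensional K ↥(S ⊓ LinearMap.ker f) := Submodule.finiteDimensional_inf_left _ _
  have := Submodule.finrank_mono hker
  have := finrank_map_add_finrank_inf_ker S f
  have := finrank_map_add_finrank_inf_ker S g
  lia

end Rank

instance finiteDimensional_homogeneousSubmodule [Finite σ] (t : ℕ) :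
    FiniteDimensional K (homogeneousSubmodule σ K t) :=
  Module.Finite.iff_fg.2 (homogeneousSubmodule_fg _ _ t)

lemma finrank_homogeneousSubmodule [Fintype σ] (t : ℕ) :
    finrank K (homogeneousSubmodule σ K t) = (Fintype.card σ).multichoose t := by
  classical
  have hset : {d : σ →₀ ℕ | d.degree = t} = (Finset.univ.finsuppAntidiag t : Finset (σ →₀ ℕ)) := by
    ext d
    simp [Finsupp.degree_eq_sum]
  rw [homogeneousSubmodule_eq_finsupp_supported,
    (AddMonoidAlgebra.supportedEquivFinsupp _).finrank_eq, hset, finrank_finsupp_self]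
  simp [Finset.card_finsuppAntidiag_nat_eq_multichoose]

/-- The restriction of polynomial functions to `V`; its kernel is the vanishing ideal of `V`. -/
noncomputable def restrict (V : Set (σ → K)) : MvPolynomial σ K →ₗ[K] (V → K) :=
  LinearMap.pi fun v => (aeval (v : σ → K)).toLinearMap

/-- The piece of degree `t` of the homogeneous coordinate ring of `V`, as a space of functions on
`V`. -/
noncomputable def gradedPiece (V : Set (σ → K)) (t : ℕ) : Submodule K (V → K) :=
  (homogeneousSubmodule σ K t).map (restrict V)

/-- The Hilbert function of the homogeneous coordinate ring of `V`. -/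
noncomputable def hilbertFn (V : Set (σ → K)) (t : ℕ) : ℕ :=
  finrank K (gradedPiece V t)

@[simp]
lemma restrict_apply (V : Set (σ → K)) (p : MvPolynomial σ K) (v : V) :
    restrict V p v = eval (v : σ → K) p :=
  rfl

lemma restrict_eq_zero_iff {V : Set (σ → K)} {p : MvPolynomial σ K} :
    restrict V p = 0 ↔ p ∈ vanishingIdeal K V := by
  simp [funext_iff]

instance finiteDimensional_gradedPiece [Finite σ] (V : Set (σ → K)) (t : ℕ) :
    FiniteDimensional K (gradedPiece V t) := by
  unfold gradedPiece
  infer_instance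

lemma hilbertFn_le_multichoose [Fintype σ] (V : Set (σ → K)) (t : ℕ) :
    hilbertFn V t ≤ (Fintype.card σ).multichoose t :=
  (Submodule.finrank_map_le _ _).trans (finrank_homogeneousSubmodule t).le

lemma finrank_map_restrict_comp_le [Finite σ] {V : Set (σ → K)} {a b : ℕ}
    {φ : MvPolynomial τ K →ₗ[K] MvPolynomial σ K} (hφ : ∀ p, p.IsHomogeneous a →
      (φ p).IsHomogeneous b) :
    finrank K ((homogeneousSubmodule τ K a).map (restrict V ∘ₗ φ)) ≤ hilbertFn V b := by
  refine Submodule.finrank_mono ?_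
  rw [Submodule.map_comp]
  exact Submodule.map_mono (Submodule.map_le_iff_le_comap.2 hφ)

lemma hilbertFn_le_of_comp [Finite σ] [Finite τ] {V : Set (σ → K)} {W : Set (τ → K)}
    {φ : MvPolynomial τ K →ₗ[K] MvPolynomial σ K} {a b : ℕ}
    (hφ : ∀ p, p.IsHomogeneous a → (φ p).IsHomogeneous b)
    (hVW : ∀ p, p.IsHomogeneous a → φ p ∈ vanishingIdeal K V → p ∈ vanishingIdeal K W) :
    hilbertFn W a ≤ hilbertFn V b :=
  (finrank_map_le_finrank_map_of_ker_le fun p hp h =>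
    restrict_eq_zero_iff.2 (hVW p hp (restrict_eq_zero_iff.1 h))).trans
      (finrank_map_restrict_comp_le hφ)

lemma restrict_comp_inclusion {U Y : Set (σ → K)} (h : Y ⊆ U) :
    LinearMap.funLeft K K (Set.inclusion h) ∘ₗ restrict U = restrict Y :=
  rfl

lemma IsIrred.exists_X_notMem {V : Set (σ → K)} (hV : IsIrred V) :
    ∃ i, X i ∉ vanishingIdeal K V := by
  obtain ⟨v, hv, hv0⟩ := hV.exists_ne_zero
  obtain ⟨i, hi⟩ := Function.ne_iff.1 hv0
  exact ⟨i, fun h => hi (by simpa using h v hv)⟩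

namespace IsIrred

variable [Infinite K] [Finite σ] {V : Set (σ → K)}

/- Rank-nullity for the restriction of functions from `U` to `Y`, whose kernel contains the
multiples of `f`. -/
lemma hilbertFn_add_le (hV : IsIrred V) {U Y : Set (σ → K)} (hVU : V ⊆ U) (hYU : Y ⊆ U)
    {f : MvPolynomial σ K} {k : ℕ} (hf : f.IsHomogeneous k) (hfY : f ∈ vanishingIdeal K Y)
    (hfV : f ∉ vanishingIdeal K V) (t : ℕ) :
    hilbertFn V t + hilbertFn Y (t + k) ≤ hilbertFn U (t + k) := by
  let r : (U → K) →ₗ[K] (Y → K) := LinearMap.funLeft K K (Set.inclusion hYU)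
  let m : MvPolynomial σ K →ₗ[K] MvPolynomial σ K := LinearMap.mulLeft K f
  have hm : ∀ p, p.IsHomogeneous t → (m p).IsHomogeneous (t + k) := fun p hp => by
    simpa [m, add_comm] using hf.mul hp
  have himage : (gradedPiece U (t + k)).map r = gradedPiece Y (t + k) := by
    rw [gradedPiece, ← Submodule.map_comp, restrict_comp_inclusion, gradedPiece]
  have hmul : (homogeneousSubmodule σ K t).map (restrict U ∘ₗ m) ≤
      gradedPiece U (t + k) ⊓ LinearMap.ker r := by
    rintro _ ⟨p, hp, rfl⟩
    exact ⟨⟨m p, hm p hp, rfl⟩, restrict_eq_zero_iff.2 (Ideal.mul_mem_right _ _ hfY)⟩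
  have hker : hilbertFn V t ≤ finrank K ↥(gradedPiece U (t + k) ⊓ LinearMap.ker r) := by
    have : FiniteDimensional K ↥(gradedPiece U (t + k) ⊓ LinearMap.ker r) :=
      Submodule.finiteDimensional_inf_left _ _
    refine (finrank_map_le_finrank_map_of_ker_le fun p _ hp => ?_).trans
      (Submodule.finrank_mono hmul)
    rw [restrict_eq_zero_iff]
    exact (hV.isPrime_vanishingIdeal.mem_or_mem
      (vanishingIdeal_anti_mono hVU (restrict_eq_zero_iff.1 hp))).resolve_left hfV
  calc hilbertFn V t + hilbertFn Y (t + k)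
      ≤ finrank K ↥(gradedPiece U (t + k) ⊓ LinearMap.ker r) +
        finrank K ((gradedPiece U (t + k)).map r) := by rw [himage]; gcongr; rfl
    _ = hilbertFn U (t + k) := by
        rw [add_comm, finrank_map_add_finrank_inf_ker, hilbertFn]

lemma monotone_hilbertFn (hV : IsIrred V) : Monotone (hilbertFn V) := by
  obtain ⟨i, hi⟩ := hV.exists_X_notMem
  refine monotone_nat_of_le_succ fun t => ?_
  exact (Nat.le_add_right _ _).trans <|
    hV.hilbertFn_add_le subset_rfl (Set.empty_subset V) (isHomogeneous_X K i)
      (by simp [vanishingIdeal_empty]) hi t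

lemma sum_hilbertFn_le (hV : IsIrred V) {Y : Set (σ → K)} (hYV : Y ⊆ V) {f : MvPolynomial σ K}
    {k : ℕ} (hf : f.IsHomogeneous k) (hfY : f ∈ vanishingIdeal K Y)
    (hfV : f ∉ vanishingIdeal K V) (t n : ℕ) :
    ∑ u ∈ Finset.range n, hilbertFn Y (t + (u + 1) * k) ≤ hilbertFn V (t + n * k) := by
  induction n with
  | zero => simp
  | succ n ih =>
    rw [Finset.sum_range_succ]
    calc _ ≤ hilbertFn V (t + n * k) + hilbertFn Y (t + (n + 1) * k) := by gcongr
      _ ≤ _ := by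
        have := hV.hilbertFn_add_le subset_rfl hYV hf hfY hfV (t + n * k)
        rwa [add_assoc, ← Nat.succ_mul] at this

end IsIrred

lemma exists_sum_hilbertFn_le [Infinite K] [Finite σ] {T : Finset (Set (σ → K))}
    (hT : ∀ Q ∈ T, IsIrred Q) (hanti : IsAntichain (· ⊆ ·) (T : Set (Set (σ → K))))
    {U : Set (σ → K)} (hU : ∀ Q ∈ T, Q ⊆ U) :
    ∃ k, ∀ t, ∑ Q ∈ T, hilbertFn Q t ≤ hilbertFn U (t + k) := by
  classical
  induction T using Finset.induction_on generalizing U with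
  | empty => exact ⟨0, by simp⟩
  | insert Q T hQT ih =>
    simp only [Finset.mem_insert, forall_eq_or_imp] at hT hU
    obtain ⟨k, hk⟩ := ih hT.2 (hanti.subset (by simp)) (U := ⋃ Q' ∈ T, Q')
      fun Q' hQ' => Set.subset_biUnion_of_mem (u := id) hQ'
    have hcone : ∀ Q' ∈ T, IsCone Q' := fun Q' hQ' => (hT.2 Q' hQ').1
    obtain ⟨f, d, hf, hfT, hfQ⟩ : ∃ p d, p.IsHomogeneous d ∧
        p ∈ vanishingIdeal K (⋃ Q' ∈ T, Q') ∧ p ∉ vanishingIdeal K Q := by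
      refine (isCone_biUnion hcone).exists_isHomogeneous_of_not_subset fun h => ?_
      obtain ⟨Q', hQ', hQQ'⟩ := hT.1.subset_of_biUnion hcone (h.trans Set.subset_union_right)
      exact hanti (by simp) (by simp [hQ']) (by rintro rfl; exact hQT hQ') hQQ'
    refine ⟨d + k, fun t => ?_⟩
    rw [Finset.sum_insert hQT]
    calc hilbertFn Q t + ∑ Q' ∈ T, hilbertFn Q' t
        ≤ hilbertFn Q (t + k) + ∑ Q' ∈ T, hilbertFn Q' (t + d) := by
          gcongr with Q' hQ'
          · exact hT.1.monotone_hilbertFn (by lia)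
          · exact (hT.2 Q' hQ').monotone_hilbertFn (by lia)
      _ ≤ hilbertFn Q (t + k) + hilbertFn (⋃ Q' ∈ T, Q') (t + k + d) := by
          gcongr
          exact (hk _).trans_eq (by rw [add_right_comm])
      _ ≤ hilbertFn U (t + k + d) :=
          hT.1.hilbertFn_add_le hU.1 (Set.iUnion₂_subset hU.2) hf hfT hfQ _
      _ = hilbertFn U (t + (d + k)) := by rw [add_assoc, add_comm k]

/-! ### Linear projections and the coordinate ring -/

/-- Substitution of the coordinates of a linear map for the variables. -/
noncomputable def pullback [Fintype σ] (π : (σ → K) →ₗ[K] (τ → K)) :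
    MvPolynomial τ K →ₐ[K] MvPolynomial σ K := by
  classical exact aeval (LinearMap.toMatrix' π).toMvPolynomial

lemma eval_pullback [Fintype σ] (π : (σ → K) →ₗ[K] (τ → K)) (x : σ → K) (f : MvPolynomial τ K) :
    eval x (pullback π f) = eval (π x) f := by
  classical
  suffices h : (aeval x).comp (pullback π) = aeval (π x) from DFunLike.congr_fun h f
  refine algHom_ext fun j => ?_
  simp [pullback, aeval_eq_eval, Matrix.toMvPolynomial_eval_eq_apply, LinearMap.toMatrix'_mulVec]

lemma isHomogeneous_pullback [Fintype σ] (π : (σ → K) →ₗ[K] (τ → K)) {f : MvPolynomial τ K}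
    {d : ℕ} (hf : f.IsHomogeneous d) : (pullback π f).IsHomogeneous d := by
  classical
  exact one_mul d ▸ hf.aeval _ (LinearMap.toMatrix' π).toMvPolynomial_isHomogeneous

lemma homogeneousComponent_map_of_isHomogeneous (φ : MvPolynomial τ K →ₗ[K] MvPolynomial σ K)
    {e : ℕ} (hφ : ∀ n p, p.IsHomogeneous n → (φ p).IsHomogeneous (n + e)) (n : ℕ)
    (p : MvPolynomial τ K) :
    homogeneousComponent (n + e) (φ p) = φ (homogeneousComponent n p) := by
  induction p using MvPolynomial.induction_on' with
  | monomial d c =>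
    have hd : (monomial d c).IsHomogeneous d.degree := isHomogeneous_monomial c rfl
    rw [homogeneousComponent_of_mem hd, homogeneousComponent_of_mem (hφ _ _ hd)]
    simp [apply_ite φ]
  | add p q hp hq => simp [hp, hq]

lemma homogeneousComponent_mul_of_isHomogeneous (p : MvPolynomial σ K) {q : MvPolynomial σ K}
    {e : ℕ} (hq : q.IsHomogeneous e) (n : ℕ) :
    homogeneousComponent (n + e) (p * q) = homogeneousComponent n p * q :=
  homogeneousComponent_map_of_isHomogeneous (LinearMap.mulRight K q) (fun _ _ hp => hp.mul hq) n p

lemma homogeneousComponent_pullback [Fintype σ] (π : (σ → K) →ₗ[K] (τ → K)) (n : ℕ)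
    (f : MvPolynomial τ K) :
    homogeneousComponent n (pullback π f) = pullback π (homogeneousComponent n f) :=
  homogeneousComponent_map_of_isHomogeneous (e := 0) (pullback π).toLinearMap
    (fun _ _ => isHomogeneous_pullback π) n f

/-- The linear map `π` vanishes on `V` only at the origin: projectively, it is a projection whose
centre does not meet `V`, and it is then a finite morphism. -/
def IsFiniteOn (π : (σ → K) →ₗ[K] (τ → K)) (V : Set (σ → K)) : Prop :=
  ∀ x ∈ V, π x = 0 → x = 0

/-- The image of `V` under the linear map `π` is Zariski dense. -/
def IsDominantOn [Fintype σ] (π : (σ → K) →ₗ[K] (τ → K)) (V : Set (σ → K)) : Prop :=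
  ∀ f, pullback π f ∈ vanishingIdeal K V → f = 0

lemma IsFiniteOn.mono {π : (σ → K) →ₗ[K] (τ → K)} {V W : Set (σ → K)} (h : IsFiniteOn π W)
    (hVW : V ⊆ W) : IsFiniteOn π V :=
  fun x hx => h x (hVW hx)

section CoordRing

/-- The homogeneous coordinate ring of `V`, regarded as an algebra over the polynomial ring of the
target of the linear map `π`. -/
def CoordRing (V : Set (σ → K)) (_ : (σ → K) →ₗ[K] (τ → K)) : Type _ :=
  MvPolynomial σ K ⧸ vanishingIdeal K V

namespace CoordRing

variable {V : Set (σ → K)} {π : (σ → K) →ₗ[K] (τ → K)}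

noncomputable instance : CommRing (CoordRing V π) :=
  inferInstanceAs (CommRing (MvPolynomial σ K ⧸ vanishingIdeal K V))

noncomputable instance : Algebra K (CoordRing V π) :=
  inferInstanceAs (Algebra K (MvPolynomial σ K ⧸ vanishingIdeal K V))

variable (V π) in
/-- The class of a polynomial in the coordinate ring. -/
noncomputable def mk : MvPolynomial σ K →ₐ[K] CoordRing V π :=
  Ideal.Quotient.mkₐ K (vanishingIdeal K V)

lemma mk_surjective : Function.Surjective (mk V π) :=
  Ideal.Quotient.mk_surjective

lemma mk_eq_zero_iff {p : MvPolynomial σ K} : mk V π p = 0 ↔ p ∈ vanishingIdeal K V :=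
  Ideal.Quotient.eq_zero_iff_mem

lemma isDomain [Infinite K] (hV : IsIrred V) : IsDomain (CoordRing V π) :=
  have := hV.isPrime_vanishingIdeal
  inferInstanceAs (IsDomain (MvPolynomial σ K ⧸ vanishingIdeal K V))

variable (V π) in
/-- The image in the coordinate ring of the homogeneous polynomials of degree `t`. -/
noncomputable def piece (t : ℕ) : Submodule K (CoordRing V π) :=
  (homogeneousSubmodule σ K t).map (mk V π).toLinearMap

instance [Finite σ] (t : ℕ) : FiniteDimensional K (piece V π t) := by
  unfold piece
  infer_instance

lemma mk_mem_piece {p : MvPolynomial σ K} {t : ℕ} (hp : p.IsHomogeneous t) :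
    mk V π p ∈ piece V π t :=
  Submodule.mem_map_of_mem hp

lemma finrank_piece [Finite σ] (t : ℕ) : finrank K (piece V π t) = hilbertFn V t := by
  refine le_antisymm ?_ ?_ <;> refine finrank_map_le_finrank_map_of_ker_le fun p _ h => ?_
  · exact mk_eq_zero_iff.2 (restrict_eq_zero_iff.1 h)
  · exact restrict_eq_zero_iff.2 (mk_eq_zero_iff.1 h)

lemma mul_mem_piece {a b : CoordRing V π} {s t : ℕ} (ha : a ∈ piece V π s)
    (hb : b ∈ piece V π t) : a * b ∈ piece V π (s + t) := by
  obtain ⟨p, hp, rfl⟩ := ha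
  obtain ⟨q, hq, rfl⟩ := hb
  exact map_mul (mk V π) p q ▸ mk_mem_piece (hp.mul hq)

lemma iSup_piece : ⨆ t, piece V π t = ⊤ := by
  refine eq_top_iff.2 fun a _ => ?_
  obtain ⟨p, rfl⟩ := mk_surjective a
  rw [← sum_homogeneousComponent p, map_sum]
  exact Submodule.sum_mem _ fun t _ => Submodule.mem_iSup_of_mem t
    (mk_mem_piece (homogeneousComponent_isHomogeneous t p))

variable [Fintype σ]

noncomputable instance : Algebra (MvPolynomial τ K) (CoordRing V π) :=
  ((mk V π).comp (pullback π)).toAlgebra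

instance : IsScalarTower K (MvPolynomial τ K) (CoordRing V π) :=
  IsScalarTower.of_algHom ((mk V π).comp (pullback π))

lemma algebraMap_apply (f : MvPolynomial τ K) :
    algebraMap (MvPolynomial τ K) (CoordRing V π) f = mk V π (pullback π f) :=
  rfl

lemma smul_mk (f : MvPolynomial τ K) (p : MvPolynomial σ K) :
    f • mk V π p = mk V π (pullback π f * p) := by
  rw [Algebra.smul_def, algebraMap_apply, map_mul]

lemma algebraMap_injective (hπ : IsDominantOn π V) :
    Function.Injective (algebraMap (MvPolynomial τ K) (CoordRing V π)) :=
  (injective_iff_map_eq_zero _).2 fun f hf => hπ f (mk_eq_zero_iff.1 hf)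

lemma smul_mem_piece {f : MvPolynomial τ K} {d t : ℕ} (hf : f.IsHomogeneous d)
    {a : CoordRing V π} (ha : a ∈ piece V π t) : f • a ∈ piece V π (d + t) := by
  obtain ⟨p, hp, rfl⟩ := ha
  exact smul_mk f p ▸ mk_mem_piece ((isHomogeneous_pullback π hf).mul hp)

end CoordRing

end CoordRing

lemma fg_span_of_finiteDimensional {R M : Type*} [CommRing R] [Algebra K R] [AddCommGroup M]
    [Module K M] [Module R M] [IsScalarTower K R M] (S : Submodule K M) [FiniteDimensional K S] :
    (Submodule.span R (S : Set M)).FG := by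
  obtain ⟨s, hs, hsS⟩ := Submodule.fg_def.1 (Module.Finite.iff_fg.1 ‹FiniteDimensional K S›)
  exact Submodule.fg_def.2 ⟨s, hs, by rw [← hsS, Submodule.span_span_of_tower]⟩

section Finite

variable [Fintype σ] {V : Set (σ → K)} {π : (σ → K) →ₗ[K] (τ → K)}

lemma IsFiniteOn.exists_mem_sup_span [IsAlgClosed K] (hV : IsCone V) (hπ : IsFiniteOn π V) :
    ∃ k, ∀ t ≥ k, ∀ p : MvPolynomial σ K, p.IsHomogeneous t →
      p ∈ vanishingIdeal K V ⊔ Ideal.span (Set.range fun j => pullback π (X j)) := by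
  set J := vanishingIdeal K V ⊔ Ideal.span (Set.range fun j => pullback π (X j))
  have hzero : MvPolynomial.zeroLocus K J ⊆ {0} := fun x hx => by
    refine hπ x (hV.mem_iff.2 fun p hp => hx p (Ideal.mem_sup_left hp)) (funext fun j => ?_)
    simpa [aeval_eq_eval, eval_pullback] using
      hx _ (Ideal.mem_sup_right (Ideal.subset_span ⟨j, rfl⟩))
  have hrad : Ideal.span (Set.range X) ≤ J.radical := by
    rw [← vanishingIdeal_zeroLocus_eq_radical (K := K), Ideal.span_le]
    rintro _ ⟨i, rfl⟩ x hx
    simp [Set.mem_singleton_iff.1 (hzero hx)]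
  obtain ⟨k, hk⟩ := Ideal.exists_pow_le_of_le_radical_of_fg hrad (IsNoetherian.noetherian _)
  refine ⟨k, fun t ht p hp => hk (Ideal.pow_le_pow_right ht ?_)⟩
  rw [Ideal.mem_span_pow_iff_exists_isHomogeneous]
  exact ⟨map C p, hp.map _, by rw [eval_map, eval₂_eta]⟩

namespace CoordRing

variable [Finite τ]

lemma piece_succ_le_span_piece [Infinite K] (hV : IsCone V) {t : ℕ}
    (ht : ∀ p : MvPolynomial σ K, p.IsHomogeneous (t + 1) →
      p ∈ vanishingIdeal K V ⊔ Ideal.span (Set.range fun j => pullback π (X j)))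
    {a : CoordRing V π} (ha : a ∈ piece V π (t + 1)) :
    a ∈ Submodule.span (MvPolynomial τ K) (piece V π t : Set (CoordRing V π)) := by
  have := Fintype.ofFinite τ
  obtain ⟨p, hp, rfl⟩ := ha
  obtain ⟨r, hr, q, hq, hrq⟩ := Submodule.mem_sup.1 (ht p hp)
  obtain ⟨c, rfl⟩ := Ideal.mem_span_range_iff_exists_fun.1 hq
  have hcomp : p = homogeneousComponent (t + 1) r +
      ∑ j, homogeneousComponent t (c j) * pullback π (X j) := by
    rw [← homogeneousComponent_eq_self hp, ← hrq, map_add, map_sum]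
    simp_rw [homogeneousComponent_mul_of_isHomogeneous _
      (isHomogeneous_pullback π (isHomogeneous_X K _))]
  have hr0 : mk V π (homogeneousComponent (t + 1) r) = 0 :=
    mk_eq_zero_iff.2 (hV.homogeneousComponent_mem hr _)
  rw [AlgHom.toLinearMap_apply, hcomp, map_add, hr0, zero_add, map_sum]
  refine Submodule.sum_mem _ fun j _ => ?_
  rw [mul_comm, ← smul_mk]
  exact Submodule.smul_mem _ _ (Submodule.subset_span
    (mk_mem_piece (homogeneousComponent_isHomogeneous t (c j))))

lemma exists_piece_le_span_piece [IsAlgClosed K] (hV : IsCone V) (hπ : IsFiniteOn π V) :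
    ∃ k, ∀ t ≥ k, ∀ a ∈ piece V π t,
      a ∈ Submodule.span (MvPolynomial τ K) (piece V π k : Set (CoordRing V π)) := by
  obtain ⟨k, hk⟩ := hπ.exists_mem_sup_span hV
  refine ⟨k, fun t ht => Nat.le_induction (fun a ha => Submodule.subset_span ha)
    (fun t ht ih a ha => ?_) t ht⟩
  exact Submodule.span_le.2 ih (piece_succ_le_span_piece hV (hk _ (by lia)) ha)

lemma finite [IsAlgClosed K] (hV : IsCone V) (hπ : IsFiniteOn π V) :
    Module.Finite (MvPolynomial τ K) (CoordRing V π) := by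
  obtain ⟨k, hk⟩ := exists_piece_le_span_piece hV hπ
  let S : Submodule K (CoordRing V π) := ⨆ t : Fin (k + 1), piece V π t
  have hpiece (t : ℕ) (a) (ha : a ∈ piece V π t) :
      a ∈ Submodule.span (MvPolynomial τ K) (S : Set (CoordRing V π)) := by
    obtain ht | ht := le_total t k
    · exact Submodule.subset_span (Submodule.mem_iSup_of_mem ⟨t, by lia⟩ ha)
    · exact Submodule.span_mono (SetLike.coe_subset_coe.2 (le_iSup _ (Fin.last k))) (hk t ht a ha)
  have htop : ⊤ ≤ (Submodule.span (MvPolynomial τ K) (S : Set (CoordRing V π))).restrictScalars K :=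
    iSup_piece (V := V) (π := π) ▸ iSup_le hpiece
  have hfg := fg_span_of_finiteDimensional (R := MvPolynomial τ K) S
  rwa [Submodule.restrictScalars_eq_top_iff .. |>.1 (top_le_iff.1 htop), ← Module.finite_def] at hfg

end CoordRing

end Finite

lemma exists_linearIndepOn_smul_mem_span {ι R M : Type*} [CommRing R] [IsDomain R]
    [AddCommGroup M] [Module R M] [Finite ι] (v : ι → M) :
    ∃ s : Set ι, LinearIndepOn R v s ∧
      ∃ g : R, g ≠ 0 ∧ ∀ y ∈ Submodule.span R (Set.range v), g • y ∈ Submodule.span R (v '' s) := by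
  classical
  have := Fintype.ofFinite ι
  obtain ⟨s, hs, hmax⟩ := exists_maximal_linearIndepOn R v
  have hdenom (i : ι) : ∃ g : R, g ≠ 0 ∧ g • v i ∈ Submodule.span R (v '' s) := by
    by_cases hi : i ∈ s
    · exact ⟨1, one_ne_zero, by simpa using Submodule.subset_span (Set.mem_image_of_mem v hi)⟩
    · exact hmax i hi
  choose g hg0 hg using hdenom
  refine ⟨s, hs, ∏ i, g i, Finset.prod_ne_zero_iff.2 fun i _ => hg0 i, ?_⟩
  suffices h : Submodule.span R (Set.range v) ≤
      (Submodule.span R (v '' s)).comap (LinearMap.lsmul R M (∏ i, g i)) from fun y hy => h hy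
  rw [Submodule.span_le]
  rintro _ ⟨i, rfl⟩
  rw [← Finset.prod_erase_mul _ _ (Finset.mem_univ i)]
  simpa [mul_smul] using Submodule.smul_mem _ _ (hg i)

/-- `V` has the Hilbert function of an `n - 1`-dimensional projective variety of degree `r`: up to
a shift of the degree it agrees with `r` times the Hilbert function of a projective space. -/
def HasHilbertGrowth (V : Set (σ → K)) (n r : ℕ) : Prop :=
  ∃ s s', ∀ t, r * n.multichoose t ≤ hilbertFn V (t + s) ∧
    hilbertFn V t ≤ r * n.multichoose (t + s')

namespace CoordRing

variable [Fintype σ] {V : Set (σ → K)} {π : (σ → K) →ₗ[K] (τ → K)}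

/-- Linear combinations of a finite family in the coordinate ring with homogeneous coefficients of
degree `d`. -/
noncomputable def homogeneousCombination {ι : Type*} [Fintype ι] (a : ι → CoordRing V π) (d : ℕ) :
    (ι → homogeneousSubmodule τ K d) →ₗ[K] CoordRing V π :=
  (Fintype.linearCombination (MvPolynomial τ K) a).restrictScalars K ∘ₗ
    (homogeneousSubmodule τ K d).subtype.compLeft ι

section homogeneousCombination

variable {ι : Type*} [Fintype ι] {a : ι → CoordRing V π}

lemma homogeneousCombination_apply (d : ℕ) (c : ι → homogeneousSubmodule τ K d) :
    homogeneousCombination a d c = ∑ i, (c i : MvPolynomial τ K) • a i := rfl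

lemma range_homogeneousCombination_le {k : ℕ} (ha : ∀ i, a i ∈ piece V π k) (d : ℕ) :
    LinearMap.range (homogeneousCombination a d) ≤ piece V π (d + k) := by
  rintro _ ⟨c, rfl⟩
  exact Submodule.sum_mem _ fun i _ => smul_mem_piece (c i).2 (ha i)

lemma finrank_range_homogeneousCombination [Fintype τ]
    (ha : LinearIndependent (MvPolynomial τ K) a) (d : ℕ) :
    finrank K (LinearMap.range (homogeneousCombination a d)) =
      Fintype.card ι * (Fintype.card τ).multichoose d := by
  have hinj : Function.Injective (homogeneousCombination a d) := fun c c' h =>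
    funext fun i => Subtype.ext (congrFun (ha.fintypeLinearCombination_injective h) i)
  rw [LinearMap.finrank_range_of_inj hinj, finrank_pi_fintype]
  simp [finrank_homogeneousSubmodule]

lemma homogeneousComponent_smul_mem_range [Infinite K] (hV : IsCone V) {k t : ℕ}
    (ha : ∀ i, a i ∈ piece V π k) {g : MvPolynomial τ K} {x : CoordRing V π}
    (hx : x ∈ piece V π (t + k)) (hgx : g • x ∈ Submodule.span (MvPolynomial τ K) (Set.range a))
    (l : ℕ) :
    homogeneousComponent l g • x ∈ LinearMap.range (homogeneousCombination a (t + l)) := by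
  obtain ⟨c, hc⟩ := (Submodule.mem_span_range_iff_exists_fun _).1 hgx
  obtain ⟨p, hp, rfl⟩ := hx
  choose q hq hqa using ha
  refine ⟨fun i => ⟨homogeneousComponent (t + l) (c i), homogeneousComponent_isHomogeneous _ _⟩, ?_⟩
  have hmem : ∑ i, pullback π (c i) * q i - pullback π g * p ∈ vanishingIdeal K V := by
    rw [← mk_eq_zero_iff (π := π), map_sub, map_sum, sub_eq_zero]
    simpa only [← smul_mk, ← hqa] using! hc
  have hcomp := hV.homogeneousComponent_mem hmem (t + l + k)
  rw [map_sub, map_sum, show t + l + k = l + (t + k) by ring,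
    homogeneousComponent_mul_of_isHomogeneous _ hp, ← mk_eq_zero_iff (π := π)] at hcomp
  simp_rw [show l + (t + k) = t + l + k by ring,
    homogeneousComponent_mul_of_isHomogeneous _ (hq _), homogeneousComponent_pullback] at hcomp
  rw [homogeneousCombination_apply, ← sub_eq_zero, ← hcomp, map_sub, map_sum]
  simp only [← smul_mk, ← hqa]
  rfl

end homogeneousCombination
end CoordRing

lemma exists_homogeneousComponent_ne_zero {f : MvPolynomial σ K} (hf : f ≠ 0) :
    ∃ l, homogeneousComponent l f ≠ 0 := by
  by_contra! h
  exact hf (by rw [← sum_homogeneousComponent f, Finset.sum_eq_zero fun l _ => h l])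

namespace CoordRing

variable [Fintype σ] {V : Set (σ → K)} {π : (σ → K) →ₗ[K] (τ → K)} {k r : ℕ}
  {a : Fin r → CoordRing V π} {g : MvPolynomial τ K}

lemma smul_ne_zero [Infinite K] (hV : IsIrred V) (hdom : IsDominantOn π V) {f : MvPolynomial τ K}
    (hf : f ≠ 0) {x : CoordRing V π} (hx : x ≠ 0) : f • x ≠ 0 := by
  have := isDomain (π := π) hV
  rw [Algebra.smul_def]
  exact mul_ne_zero ((map_ne_zero_iff _ (algebraMap_injective hdom)).2 hf) hx

lemma exists_homogeneous_almost_basis [IsAlgClosed K] [Finite τ] (hV : IsCone V)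
    (hπ : IsFiniteOn π V) :
    ∃ (k r : ℕ) (a : Fin r → CoordRing V π), (∀ i, a i ∈ piece V π k) ∧
      LinearIndependent (MvPolynomial τ K) a ∧ ∃ g : MvPolynomial τ K, g ≠ 0 ∧
        ∀ t, ∀ x ∈ piece V π (t + k),
          g • x ∈ Submodule.span (MvPolynomial τ K) (Set.range a) := by
  obtain ⟨k, hk⟩ := exists_piece_le_span_piece hV hπ
  let b := finBasis K (piece V π k)
  obtain ⟨s, hs, g, hg0, hg⟩ := exists_linearIndepOn_smul_mem_span (R := MvPolynomial τ K)
    fun i => (b i : CoordRing V π)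
  have hspan : (piece V π k : Set (CoordRing V π)) ⊆
      Submodule.span (MvPolynomial τ K) (Set.range fun i => (b i : CoordRing V π)) := by
    intro x hx
    refine Submodule.span_le_restrictScalars K _ _ ?_
    rw [show (fun i => (b i : CoordRing V π)) = (piece V π k).subtype ∘ b from rfl,
      Set.range_comp, Submodule.span_image, b.span_eq]
    exact ⟨⟨x, hx⟩, trivial, rfl⟩
  let e := Finite.equivFin s
  refine ⟨k, Nat.card s, fun i => b (e.symm i), fun i => (b _).2, hs.comp _ e.symm.injective,
    g, hg0, fun t x hx => ?_⟩
  have hrange : (Set.range fun i => (b (e.symm i) : CoordRing V π)) =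
      (fun i => (b i : CoordRing V π)) '' s := by
    rw [Set.image_eq_range, ← e.symm.surjective.range_comp]
    rfl
  rw [hrange]
  exact hg x (Submodule.span_le.2 hspan (hk _ (by lia) x hx))

lemma finrank_eq_of_almost_basis [IsAlgClosed K] [Finite τ] (hV : IsIrred V) (hπ : IsFiniteOn π V)
    (hdom : IsDominantOn π V) (ha : LinearIndependent (MvPolynomial τ K) a) (hg0 : g ≠ 0)
    (hg : ∀ t, ∀ x ∈ piece V π (t + k), g • x ∈ Submodule.span (MvPolynomial τ K) (Set.range a)) :
    finrank (MvPolynomial τ K) (CoordRing V π) = r := by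
  have := isDomain (π := π) hV
  have := CoordRing.finite hV.isCone hπ
  refine le_antisymm ?_ (by simpa using ha.fintype_card_le_finrank)
  obtain ⟨i, hi⟩ := hV.exists_X_notMem
  set x : CoordRing V π := mk V π (X i ^ k) with hx
  have hx0 : x ≠ 0 := by
    rw [hx, map_pow]
    exact pow_ne_zero _ (mk_eq_zero_iff.not.2 hi)
  let φ : CoordRing V π →ₗ[MvPolynomial τ K] CoordRing V π :=
    g • LinearMap.mulLeft (MvPolynomial τ K) x
  have hφ (y) : φ y ∈ Submodule.span (MvPolynomial τ K) (Set.range a) := by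
    have hle : ⨆ t, piece V π t ≤
        ((Submodule.span (MvPolynomial τ K) (Set.range a)).comap φ).restrictScalars K :=
      iSup_le fun t y hy => hg t _ (add_comm t k ▸ mul_mem_piece
        (mk_mem_piece (isHomogeneous_X_pow i k)) hy)
    exact hle (iSup_piece (V := V) ▸ Submodule.mem_top)
  have hφinj : Function.Injective (φ.codRestrict _ hφ) := by
    rw [← LinearMap.ker_eq_bot, LinearMap.ker_codRestrict, LinearMap.ker_eq_bot']
    exact fun y hy => by_contra fun hy0 => smul_ne_zero hV hdom hg0 (mul_ne_zero hx0 hy0) hy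
  calc finrank (MvPolynomial τ K) (CoordRing V π)
      ≤ finrank (MvPolynomial τ K) (Submodule.span (MvPolynomial τ K) (Set.range a)) :=
        LinearMap.finrank_le_finrank_of_injective hφinj
    _ = r := by simp [finrank_span_eq_card ha]

lemma hasHilbertGrowth_of_almost_basis [Infinite K] [Fintype τ] (hV : IsIrred V)
    (hdom : IsDominantOn π V) (hak : ∀ i, a i ∈ piece V π k)
    (ha : LinearIndependent (MvPolynomial τ K) a) (hg0 : g ≠ 0)
    (hg : ∀ t, ∀ x ∈ piece V π (t + k), g • x ∈ Submodule.span (MvPolynomial τ K) (Set.range a)) :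
    HasHilbertGrowth V (Fintype.card τ) r := by
  have hrank (d : ℕ) := finrank_range_homogeneousCombination ha d
  obtain ⟨l, hl⟩ := exists_homogeneousComponent_ne_zero hg0
  refine ⟨k, l, fun t => ⟨?_, ?_⟩⟩
  · calc r * (Fintype.card τ).multichoose t
        = finrank K (LinearMap.range (homogeneousCombination a t)) := by simp [hrank]
      _ ≤ finrank K (piece V π (t + k)) :=
        Submodule.finrank_mono (range_homogeneousCombination_le hak t)
      _ = hilbertFn V (t + k) := finrank_piece _
  · let φ : CoordRing V π →ₗ[K] CoordRing V π :=
      ((homogeneousComponent l g) • LinearMap.id (R := MvPolynomial τ K)).restrictScalars K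
    have hφinj : Function.Injective φ := (injective_iff_map_eq_zero φ).2 fun x hx =>
      by_contra fun hx0 => smul_ne_zero hV hdom hl hx0 hx
    have hφ : (piece V π (t + k)).map φ ≤
        LinearMap.range (homogeneousCombination a (t + l)) := by
      rintro _ ⟨x, hx, rfl⟩
      exact homogeneousComponent_smul_mem_range hV.isCone hak hx (hg t x hx) l
    calc hilbertFn V t
        ≤ hilbertFn V (t + k) := hV.monotone_hilbertFn (by lia)
      _ = finrank K ((piece V π (t + k)).map φ) := by
        rw [← finrank_piece (π := π), (Submodule.equivMapOfInjective φ hφinj _).finrank_eq]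
      _ ≤ finrank K (LinearMap.range (homogeneousCombination a (t + l))) :=
        Submodule.finrank_mono hφ
      _ = r * (Fintype.card τ).multichoose (t + l) := by simp [hrank]

end CoordRing

theorem IsIrred.hasHilbertGrowth_finrank [IsAlgClosed K] [Fintype σ] [Fintype τ] {V : Set (σ → K)}
    (hV : IsIrred V) {π : (σ → K) →ₗ[K] (τ → K)} (hπ : IsFiniteOn π V) (hdom : IsDominantOn π V) :
    HasHilbertGrowth V (Fintype.card τ) (finrank (MvPolynomial τ K) (CoordRing V π)) := by
  obtain ⟨k, r, a, hak, ha, g, hg0, hg⟩ :=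
    CoordRing.exists_homogeneous_almost_basis hV.isCone hπ
  rw [CoordRing.finrank_eq_of_almost_basis hV hπ hdom ha hg0 hg]
  exact CoordRing.hasHilbertGrowth_of_almost_basis hV hdom hak ha hg0 hg

/-! ### Dimension and Hilbert degree -/

lemma exists_eval_ne_zero [Infinite K] {f : MvPolynomial σ K} (hf : f ≠ 0) :
    ∃ x, eval x f ≠ 0 := by
  by_contra! h
  exact hf (MvPolynomial.funext fun x => by simpa using h x)

/- If a form `f` vanishes on the image of `V`, then any point `b` with `f b ≠ 0` lies on no line of
that image, so one can project further from `b`. -/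
lemma IsFiniteOn.exists_of_not_isDominantOn [Infinite K] [Fintype σ] {V : Set (σ → K)}
    (hV : IsCone V) {n : ℕ} {π : (σ → K) →ₗ[K] (Fin (n + 1) → K)} (hπ : IsFiniteOn π V)
    (hdom : ¬ IsDominantOn π V) : ∃ π' : (σ → K) →ₗ[K] (Fin n → K), IsFiniteOn π' V := by
  simp only [IsDominantOn, not_forall] at hdom
  obtain ⟨f, hf, hf0⟩ := hdom
  obtain ⟨l, hl⟩ := exists_homogeneousComponent_ne_zero hf0
  obtain ⟨b, hb⟩ := exists_eval_ne_zero (mul_ne_zero hl (X_ne_zero (0 : Fin (n + 1))))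
  rw [map_mul, eval_X] at hb
  have hb0 : b 0 ≠ 0 := right_ne_zero_of_mul hb
  let q : (Fin (n + 1) → K) →ₗ[K] (Fin n → K) :=
    LinearMap.pi fun i => LinearMap.proj i.succ - (b i.succ / b 0) • LinearMap.proj 0
  refine ⟨q ∘ₗ π, fun x hx hqx => hπ x hx ?_⟩
  have hline : π x = (π x 0 / b 0) • b := by
    ext i
    refine Fin.cases (by simp [hb0]) (fun i => ?_) i
    have hi : π x i.succ - b i.succ / b 0 * π x 0 = 0 := congrFun hqx i
    rw [sub_eq_zero.1 hi, Pi.smul_apply, smul_eq_mul]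
    ring
  have hfx : eval (π x) (homogeneousComponent l f) = 0 := by
    rw [← eval_pullback, ← homogeneousComponent_pullback]
    exact hV.homogeneousComponent_mem hf l x hx
  rw [hline, eval_smul_of_isHomogeneous (homogeneousComponent_isHomogeneous _ _)] at hfx
  have hc := (mul_eq_zero.1 hfx).resolve_right (left_ne_zero_of_mul hb)
  rw [hline, eq_zero_of_pow_eq_zero hc, zero_smul]

lemma IsDominantOn.multichoose_le_hilbertFn [Fintype σ] [Fintype τ] {V : Set (σ → K)}
    {π : (σ → K) →ₗ[K] (τ → K)} (hdom : IsDominantOn π V) (t : ℕ) :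
    (Fintype.card τ).multichoose t ≤ hilbertFn V t := by
  have hinj : Function.Injective (restrict V ∘ₗ (pullback π).toLinearMap) :=
    (injective_iff_map_eq_zero _).2 fun f hf => hdom f (restrict_eq_zero_iff.1 hf)
  rw [← finrank_homogeneousSubmodule (K := K),
    (Submodule.equivMapOfInjective _ hinj (homogeneousSubmodule τ K t)).finrank_eq]
  exact finrank_map_restrict_comp_le fun _ => isHomogeneous_pullback π

/-- The dimension of the affine cone `V`: the least dimension of a linear space to which `V`
projects finitely. -/
noncomputable def coneDim (V : Set (σ → K)) : ℕ :=
  sInf {n | ∃ π : (σ → K) →ₗ[K] (Fin n → K), IsFiniteOn π V}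

section coneDim

variable {V W : Set (σ → K)}

lemma coneDim_le {n : ℕ} {π : (σ → K) →ₗ[K] (Fin n → K)} (h : IsFiniteOn π V) : coneDim V ≤ n :=
  Nat.sInf_le ⟨π, h⟩

variable [Finite σ]

lemma exists_isFiniteOn_coneDim (V : Set (σ → K)) :
    ∃ π : (σ → K) →ₗ[K] (Fin (coneDim V) → K), IsFiniteOn π V := by
  let e := LinearEquiv.funCongrLeft K K (Finite.equivFin σ).symm
  exact Nat.sInf_mem (s := {n | ∃ π : (σ → K) →ₗ[K] (Fin n → K), IsFiniteOn π V})
    ⟨_, e.toLinearMap, fun x _ => e.map_eq_zero_iff.1⟩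

lemma coneDim_mono (h : V ⊆ W) : coneDim V ≤ coneDim W := by
  obtain ⟨π, hπ⟩ := exists_isFiniteOn_coneDim W
  exact coneDim_le (hπ.mono h)

lemma coneDim_ne_zero (h0 : ¬ V ⊆ {0}) : coneDim V ≠ 0 := by
  intro h
  obtain ⟨π, hπ⟩ := exists_isFiniteOn_coneDim V
  rw [h] at π
  exact h0 fun x hx => hπ x hx (funext fun i => (Fin.cast h i).elim0)

end coneDim

section

variable [Infinite K] [Fintype σ] {V : Set (σ → K)}

lemma IsFiniteOn.isDominantOn (hV : IsCone V) (h0 : ¬ V ⊆ {0}) {n : ℕ}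
    {π : (σ → K) →ₗ[K] (Fin n → K)} (hπ : IsFiniteOn π V) (hn : n ≤ coneDim V) :
    IsDominantOn π V := by
  by_contra hdom
  obtain ⟨m, rfl⟩ : ∃ m, n = m + 1 :=
    Nat.exists_eq_succ_of_ne_zero (by have := coneDim_ne_zero h0; have := coneDim_le hπ; lia)
  obtain ⟨π', hπ'⟩ := hπ.exists_of_not_isDominantOn hV hdom
  exact absurd (coneDim_le hπ') (by lia)

lemma IsIrred.exists_isFiniteOn_isDominantOn (hV : IsIrred V) :
    ∃ π : (σ → K) →ₗ[K] (Fin (coneDim V) → K), IsFiniteOn π V ∧ IsDominantOn π V :=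
  (exists_isFiniteOn_coneDim V).imp fun _ hπ => ⟨hπ, hπ.isDominantOn hV.isCone hV.2.1 le_rfl⟩

end

/-- The degree of an irreducible cone `V`, read off its Hilbert function. -/
noncomputable def hilbertDegree (V : Set (σ → K)) : ℕ :=
  sInf {r | HasHilbertGrowth V (coneDim V) r}

lemma hilbertDegree_le {V : Set (σ → K)} {n r : ℕ} (h : HasHilbertGrowth V n r)
    (hn : n = coneDim V) : hilbertDegree V ≤ r :=
  Nat.sInf_le (hn ▸ h)

namespace IsIrred

variable [IsAlgClosed K] [Finite σ] {V W : Set (σ → K)}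

lemma hasHilbertGrowth (hV : IsIrred V) : HasHilbertGrowth V (coneDim V) (hilbertDegree V) := by
  have := Fintype.ofFinite σ
  obtain ⟨π, hπ, hdom⟩ := hV.exists_isFiniteOn_isDominantOn
  have h := hV.hasHilbertGrowth_finrank hπ hdom
  rw [Fintype.card_fin] at h
  exact Nat.sInf_mem (s := {r | HasHilbertGrowth V (coneDim V) r}) ⟨_, h⟩

lemma hilbertDegree_pos (hV : IsIrred V) : 0 < hilbertDegree V := by
  have := Fintype.ofFinite σ
  obtain ⟨π, -, hdom⟩ := hV.exists_isFiniteOn_isDominantOn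
  obtain ⟨_, s', h⟩ := hV.hasHilbertGrowth
  exact Nat.pos_of_mul_pos_right
    ((Nat.multichoose_zero_right _ ▸ hdom.multichoose_le_hilbertFn 0).trans (h 0).2)

/- Multiplication by `f` fits arbitrarily many shifted copies of the Hilbert function of `Y` into
that of `V`. -/
lemma lt_coneDim (hV : IsIrred V) {Y : Set (σ → K)} (hYV : Y ⊆ V) {f : MvPolynomial σ K} {k : ℕ}
    (hf : f.IsHomogeneous k) (hfY : f ∈ vanishingIdeal K Y) (hfV : f ∉ vanishingIdeal K V)
    {n s : ℕ} (hn : n ≠ 0) (hY : ∀ t, n.multichoose t ≤ hilbertFn Y (t + s)) :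
    n < coneDim V := by
  obtain ⟨_, s', hs'⟩ := hV.hasHilbertGrowth
  set r := hilbertDegree V
  have key (t : ℕ) : (r + 1) * n.multichoose t ≤
      r * (coneDim V).multichoose (t + (s + (r + 1) * k + s')) :=
    calc (r + 1) * n.multichoose t
        = ∑ _u ∈ Finset.range (r + 1), n.multichoose t := by simp
      _ ≤ ∑ u ∈ Finset.range (r + 1), hilbertFn Y (t + s + (u + 1) * k) :=
        Finset.sum_le_sum fun u _ => by
          rw [add_right_comm]
          exact (monotone_multichoose hn (by lia)).trans (hY _)
      _ ≤ hilbertFn V (t + s + (r + 1) * k) := hV.sum_hilbertFn_le hYV hf hfY hfV _ _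
      _ ≤ _ := by simpa only [add_assoc] using (hs' (t + s + (r + 1) * k)).2
  refine lt_of_le_of_ne (le_of_forall_multichoose_le hn fun t =>
    (Nat.le_mul_of_pos_left _ r.succ_pos).trans (key t)) ?_
  rintro rfl
  exact absurd (le_of_forall_mul_multichoose_le hn key) (by lia)

lemma coneDim_lt (hV : IsIrred V) (hW : IsIrred W) (h : V ⊂ W) : coneDim V < coneDim W := by
  obtain ⟨f, k, hf, hfV, hfW⟩ := hV.isCone.exists_isHomogeneous_of_not_subset h.2
  obtain ⟨s, s', hs⟩ := hV.hasHilbertGrowth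
  exact hW.lt_coneDim h.1 hf hfV hfW (coneDim_ne_zero hV.2.1) fun t =>
    (Nat.le_mul_of_pos_left _ hV.hilbertDegree_pos).trans (hs t).1

lemma coneDim_inter_lt (hV : IsIrred V) {f : MvPolynomial σ K} {k : ℕ} (hf : f.IsHomogeneous k)
    (hfV : f ∉ vanishingIdeal K V) : coneDim (V ∩ {x | eval x f = 0}) < coneDim V := by
  have := Fintype.ofFinite σ
  have hfin := exists_isFiniteOn_coneDim V
  obtain ⟨n, hn⟩ := Nat.exists_eq_succ_of_ne_zero (coneDim_ne_zero hV.2.1)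
  rw [hn] at hfin
  obtain ⟨π, hπ⟩ := hfin
  have hdom : ¬ IsDominantOn π (V ∩ {x | eval x f = 0}) := fun hdom => by
    have hlt := hV.lt_coneDim Set.inter_subset_left hf (fun x hx => hx.2) hfV (s := 0)
      (n := Fintype.card (Fin (n + 1))) (by simp) hdom.multichoose_le_hilbertFn
    simp [hn] at hlt
  obtain ⟨π', hπ'⟩ := (hπ.mono Set.inter_subset_left).exists_of_not_isDominantOn
    (hV.isCone.inter (isCone_setOf_eval_eq_zero hf)) hdom
  exact (coneDim_le hπ').trans_lt (by lia)

lemma card_le_coneDim [Fintype σ] [Fintype τ] (hV : IsIrred V) {π : (σ → K) →ₗ[K] (τ → K)}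
    (hdom : IsDominantOn π V) : Fintype.card τ ≤ coneDim V := by
  by_cases hτ : Fintype.card τ = 0
  · lia
  obtain ⟨_, s', hs⟩ := hV.hasHilbertGrowth
  exact le_of_forall_multichoose_le hτ fun t =>
    (hdom.multichoose_le_hilbertFn t).trans (hs t).2

end IsIrred

/-! ### Hyperplane sections -/

lemma exists_isHomogeneous_one_eval_eq [Finite σ] (h : (σ → K) →ₗ[K] K) :
    ∃ f : MvPolynomial σ K, f.IsHomogeneous 1 ∧ ∀ x, eval x f = h x := by
  have := Fintype.ofFinite σ
  exact ⟨pullback (LinearMap.pi fun _ : Unit => h) (X ()),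
    isHomogeneous_pullback _ (isHomogeneous_X _ _), fun x => by rw [eval_pullback, eval_X]; rfl⟩

lemma isCone_setOf_apply_eq_zero [Finite σ] (h : (σ → K) →ₗ[K] K) : IsCone {x | h x = 0} := by
  obtain ⟨f, hf, hfh⟩ := exists_isHomogeneous_one_eval_eq h
  simpa only [hfh] using isCone_setOf_eval_eq_zero hf

lemma IsCone.vanishingIdeal_inter_le [IsAlgClosed K] [Finite σ] {V : Set (σ → K)} (hV : IsCone V)
    {f : MvPolynomial σ K} {J : Ideal (MvPolynomial σ K)} (hJ : J.IsPrime)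
    (hVJ : vanishingIdeal K V ≤ J) (hf : f ∈ J) :
    vanishingIdeal K (V ∩ {x | eval x f = 0}) ≤ J := by
  have hrad : vanishingIdeal K (V ∩ {x | eval x f = 0}) ≤
      (vanishingIdeal K V ⊔ Ideal.span {f}).radical := by
    rw [← vanishingIdeal_zeroLocus_eq_radical (K := K)]
    refine vanishingIdeal_anti_mono fun x hx => ⟨?_, ?_⟩
    · exact hV.mem_iff.2 fun p hp => hx p (Ideal.mem_sup_left hp)
    · exact hx f (Ideal.mem_sup_right (Ideal.mem_span_singleton_self f))
  refine hrad.trans ((Ideal.radical_mono (sup_le hVJ ?_)).trans hJ.radical.le)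
  rwa [Ideal.span_singleton_le_iff_mem]

lemma IsComponent.exists_notMem_forall_mul_mem [Finite σ] {X Q : Set (σ → K)} (hX : IsCone X)
    (hQ : IsComponent X Q) :
    ∃ p ∉ vanishingIdeal K Q, ∀ f ∈ vanishingIdeal K Q, p * f ∈ vanishingIdeal K X := by
  classical
  have hT {Z} (hZ : Z ∈ (components X).erase Q) : IsComponent X Z :=
    (mem_components hX).1 (Finset.mem_of_mem_erase hZ)
  have hcone : ∀ Z ∈ (components X).erase Q, IsCone Z := fun Z hZ => (hT hZ).1.isCone
  have hnot : ¬ Q ⊆ ⋃ Z ∈ (components X).erase Q, Z := fun h => by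
    obtain ⟨Z, hZ, hQZ⟩ := hQ.1.subset_of_biUnion hcone (h.trans Set.subset_union_right)
    exact Finset.ne_of_mem_erase hZ (hQ.2.2 Z (hT hZ).1 hQZ (hT hZ).2.1)
  obtain ⟨p, hp, hpQ⟩ := (isCone_biUnion hcone).exists_mem_vanishingIdeal_of_not_subset hnot
  refine ⟨p, hpQ, fun f hf x hx => ?_⟩
  rw [map_mul]
  rcases subset_zero_union_components hX hx with rfl | h
  · rw [hf 0 hQ.1.zero_mem, mul_zero]
  · obtain ⟨Z, hZ, hxZ⟩ := Set.mem_iUnion₂.1 h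
    by_cases hZQ : Z = Q
    · rw [hf x (hZQ ▸ hxZ), mul_zero]
    · rw [hp x (Set.mem_biUnion (Finset.mem_erase.2 ⟨hZQ, hZ⟩) hxZ), zero_mul]

section Purity

variable [IsAlgClosed K]

lemma IsIrred.exists_isPrime_comap_pullback_eq [Fintype σ] [Finite τ] {V : Set (σ → K)}
    (hV : IsIrred V) {π : (σ → K) →ₗ[K] (τ → K)} (hπ : IsFiniteOn π V) (hdom : IsDominantOn π V)
    {J : Ideal (MvPolynomial σ K)} [J.IsPrime] (hVJ : vanishingIdeal K V ≤ J)
    {p : Ideal (MvPolynomial τ K)} [p.IsPrime] (hp : p ≤ J.comap (pullback π)) :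
    ∃ J' : Ideal (MvPolynomial σ K), J'.IsPrime ∧ vanishingIdeal K V ≤ J' ∧ J' ≤ J ∧
      J'.comap (pullback π) = p := by
  have := CoordRing.isDomain (π := π) hV
  have := CoordRing.finite hV.isCone hπ
  have : FaithfulSMul (MvPolynomial τ K) (CoordRing V π) :=
    (faithfulSMul_iff_algebraMap_injective _ _).2 (CoordRing.algebraMap_injective hdom)
  have hker : RingHom.ker (CoordRing.mk V π) = vanishingIdeal K V :=
    Ideal.ext fun _ => CoordRing.mk_eq_zero_iff
  let P := J.map (CoordRing.mk V π)
  have hP : P.IsPrime := Ideal.map_isPrime_of_surjective CoordRing.mk_surjective (hker.trans_le hVJ)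
  have hPJ : P.comap (CoordRing.mk V π) = J := by
    rw [Ideal.comap_map_of_surjective _ CoordRing.mk_surjective, ← RingHom.ker_eq_comap_bot, hker,
      sup_eq_left.2 hVJ]
  have hpP : p ≤ P.under (MvPolynomial τ K) := fun f hf => Ideal.mem_map_of_mem _ (hp hf)
  obtain ⟨P', hP'P, hP', hover⟩ := Ideal.exists_ideal_le_liesOver_of_le P hpP
  refine ⟨P'.comap (CoordRing.mk V π), inferInstance, fun f hf => ?_,
    (Ideal.comap_mono hP'P).trans_eq hPJ, hover.over.symm⟩
  rw [Ideal.mem_comap, CoordRing.mk_eq_zero_iff.2 hf]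
  exact P'.zero_mem

/- Going down below `Q` from the prime `(X j)` yields a prime containing the ideal of
`V ∩ {π x j = 0}`, hence, `Q` being a component, equal to the ideal of `Q`. -/
lemma IsComponent.mem_span_X_of_pullback_mem [Fintype σ] [Finite τ] {V Q : Set (σ → K)}
    (hV : IsIrred V) {π : (σ → K) →ₗ[K] (τ → K)} (hπ : IsFiniteOn π V) (hdom : IsDominantOn π V)
    {j : τ} (hQ : IsComponent (V ∩ {x | π x j = 0}) Q) {f : MvPolynomial τ K}
    (hf : pullback π f ∈ vanishingIdeal K Q) : f ∈ Ideal.span {X j} := by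
  have hXj (x) : eval x (pullback π (X j)) = π x j := by rw [eval_pullback, eval_X]
  have := hQ.1.isPrime_vanishingIdeal
  have hXprime : (Ideal.span {X j} : Ideal (MvPolynomial τ K)).IsPrime :=
    (Ideal.span_singleton_prime (X_ne_zero j)).2 X_prime
  have hle : Ideal.span {X j} ≤ (vanishingIdeal K Q).comap (pullback π) := by
    rw [Ideal.span_singleton_le_iff_mem, Ideal.mem_comap]
    exact fun x hx => (hXj x).trans (hQ.2.1 hx).2
  obtain ⟨J, hJ, hVJ, hJQ, hJX⟩ := hV.exists_isPrime_comap_pullback_eq hπ hdom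
    (vanishingIdeal_anti_mono (hQ.2.1.trans Set.inter_subset_left)) hle
  have hXJ : pullback π (X j) ∈ J := by
    rw [← Ideal.mem_comap, hJX]
    exact Ideal.mem_span_singleton_self _
  have hcut : vanishingIdeal K (V ∩ {x | π x j = 0}) ≤ J := by
    simpa only [hXj] using hV.isCone.vanishingIdeal_inter_le hJ hVJ hXJ
  obtain ⟨p, hp, hpf⟩ := hQ.exists_notMem_forall_mul_mem
    (hV.isCone.inter (isCone_setOf_apply_eq_zero (LinearMap.proj j ∘ₗ π)))
  rw [← hJX]
  exact (hJ.mem_or_mem (hcut (hpf _ hf))).resolve_left fun h => hp (hJQ h)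

lemma IsComponent.coneDim_add_one_eq [Finite σ] {V Q : Set (σ → K)} (hV : IsIrred V)
    {h : (σ → K) →ₗ[K] K} (hVh : ¬ V ⊆ {x | h x = 0}) (hQ : IsComponent (V ∩ {x | h x = 0}) Q) :
    coneDim Q + 1 = coneDim V := by
  have := Fintype.ofFinite σ
  have hlt : coneDim (V ∩ {x | h x = 0}) < coneDim V := by
    obtain ⟨f, hf, hfh⟩ := exists_isHomogeneous_one_eval_eq h
    simpa only [hfh] using hV.coneDim_inter_lt hf fun hfV => hVh fun x hx =>
      (hfh x).symm.trans (hfV x hx)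
  obtain ⟨m, hm⟩ : ∃ m, coneDim (V ∩ {x | h x = 0}) = m := ⟨_, rfl⟩
  obtain ⟨π', hπ'⟩ := hm ▸ exists_isFiniteOn_coneDim (V ∩ {x | h x = 0})
  let π : (σ → K) →ₗ[K] (Fin (m + 1) → K) :=
    LinearMap.pi (Fin.cons h fun i => LinearMap.proj i ∘ₗ π')
  have hsucc (x) : (fun i : Fin m => π x i.succ) = π' x := by ext; simp [π]
  have hπ : IsFiniteOn π V := fun x hx h0 =>
    hπ' x ⟨hx, congrFun h0 0⟩ (by rw [← hsucc, h0]; rfl)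
  have hdom : IsDominantOn π V := hπ.isDominantOn hV.isCone hV.2.1 (hm ▸ hlt)
  have hdomQ : IsDominantOn π' Q := fun f hf => by
    have hpull : pullback π (rename Fin.succ f) = pullback π' f := MvPolynomial.funext fun x => by
      rw [eval_pullback, eval_pullback, eval_rename, ← hsucc]
      rfl
    obtain ⟨g, hg⟩ := Ideal.mem_span_singleton'.1
      (hQ.mem_span_X_of_pullback_mem (j := 0) hV hπ hdom (hpull ▸ hf))
    refine MvPolynomial.funext fun y => ?_
    have := congrArg (eval (Fin.cons 0 y : Fin (m + 1) → K)) hg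
    rw [map_mul, eval_X, eval_rename, Fin.cons_zero, mul_zero] at this
    exact this.symm
  have hle : m ≤ coneDim Q := by simpa using hQ.1.card_le_coneDim hdomQ
  have := coneDim_mono hQ.2.1
  have := coneDim_le hπ
  lia

end Purity

/-- The sum of the degrees of the irreducible components, of whatever dimension. -/
noncomputable def cumDegree (X : Set (σ → K)) : ℕ :=
  ∑ Z ∈ components X, hilbertDegree Z

lemma cumDegree_eq_hilbertDegree [Finite σ] {V : Set (σ → K)} (hV : IsIrred V) :
    cumDegree V = hilbertDegree V := by
  rw [cumDegree, components_eq_singleton hV, Finset.sum_singleton]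

lemma isAntichain_components [Finite σ] {X : Set (σ → K)} (hX : IsCone X) :
    IsAntichain (· ⊆ ·) (components X : Set (Set (σ → K))) := fun Z hZ W hW hne hZW => by
  rw [Finset.mem_coe, mem_components hX] at hZ hW
  exact hne (hZ.2.2 W hW.1 hZW hW.2.1).symm

lemma exists_sum_hilbertDegree_mul_le [IsAlgClosed K] [Finite σ] {T : Finset (Set (σ → K))}
    {n : ℕ} (hT : ∀ Q ∈ T, IsIrred Q ∧ coneDim Q = n)
    (hanti : IsAntichain (· ⊆ ·) (T : Set (Set (σ → K)))) {U : Set (σ → K)}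
    (hU : ∀ Q ∈ T, Q ⊆ U) :
    ∃ s, ∀ s' ≥ s, ∀ t, (∑ Q ∈ T, hilbertDegree Q) * n.multichoose t ≤ hilbertFn U (t + s') := by
  obtain ⟨k, hk⟩ := exists_sum_hilbertFn_le (fun Q hQ => (hT Q hQ).1) hanti hU
  have hlower : ∀ Q ∈ T, ∃ s, ∀ t, hilbertDegree Q * n.multichoose t ≤ hilbertFn Q (t + s) :=
    fun Q hQ => by
      obtain ⟨s, s', h⟩ := (hT Q hQ).1.hasHilbertGrowth
      exact ⟨s, fun t => (hT Q hQ).2 ▸ (h t).1⟩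
  choose! s hs using hlower
  refine ⟨∑ Q ∈ T, s Q + k, fun s' hs' t => ?_⟩
  calc (∑ Q ∈ T, hilbertDegree Q) * n.multichoose t
      = ∑ Q ∈ T, hilbertDegree Q * n.multichoose t := Finset.sum_mul ..
    _ ≤ ∑ Q ∈ T, hilbertFn Q (t + (s' - k)) := Finset.sum_le_sum fun Q hQ =>
      (hs Q hQ t).trans ((hT Q hQ).1.monotone_hilbertFn (by
        have := Finset.single_le_sum (f := s) (fun _ _ => Nat.zero_le _) hQ
        lia))
    _ ≤ hilbertFn U (t + (s' - k) + k) := hk _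
    _ = hilbertFn U (t + s') := by congr 1; lia

theorem IsIrred.cumDegree_inter_hyperplane_le [IsAlgClosed K] [Finite σ] {V : Set (σ → K)}
    (hV : IsIrred V) (h : (σ → K) →ₗ[K] K) :
    cumDegree (V ∩ {x | h x = 0}) ≤ hilbertDegree V := by
  by_cases hVh : V ⊆ {x | h x = 0}
  · rw [Set.inter_eq_left.2 hVh, cumDegree_eq_hilbertDegree hV]
  have hcone : IsCone (V ∩ {x | h x = 0}) := hV.isCone.inter (isCone_setOf_apply_eq_zero h)
  obtain ⟨n, hn⟩ := Nat.exists_eq_succ_of_ne_zero (coneDim_ne_zero hV.2.1)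
  obtain ⟨f, hf, hfh⟩ := exists_isHomogeneous_one_eval_eq h
  obtain ⟨s, hs⟩ := exists_sum_hilbertDegree_mul_le (n := n) (fun Q hQ =>
      have hQ := (mem_components hcone).1 hQ
      ⟨hQ.1, Nat.succ_injective ((hQ.coneDim_add_one_eq hV hVh).trans hn)⟩)
    (isAntichain_components hcone) fun Q hQ => ((mem_components hcone).1 hQ).2.1
  obtain ⟨_, s', hs'⟩ := hn ▸ hV.hasHilbertGrowth
  refine le_of_forall_mul_multichoose_le n.succ_ne_zero (s := s + 1 + s') fun t => ?_
  calc cumDegree (V ∩ {x | h x = 0}) * (n + 1).multichoose t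
      = ∑ u ∈ Finset.range (t + 1),
          cumDegree (V ∩ {x | h x = 0}) * n.multichoose u := by
        rw [← sum_range_succ_multichoose, Finset.mul_sum]
    _ ≤ ∑ u ∈ Finset.range (t + 1), hilbertFn (V ∩ {x | h x = 0}) (s + (u + 1) * 1) :=
      Finset.sum_le_sum fun u _ => (hs (s + 1) (by lia) u).trans_eq (by congr 1; lia)
    _ ≤ hilbertFn V (s + (t + 1) * 1) := hV.sum_hilbertFn_le Set.inter_subset_left hf
      (fun x hx => (hfh x).trans hx.2)
      (fun hfV => hVh fun x hx => (hfh x).symm.trans (hfV x hx)) _ _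
    _ ≤ hilbertDegree V * (n + 1).multichoose (t + (s + 1 + s')) :=
      (hs' _).2.trans_eq (by congr 2; lia)

/-! ### Linear sections -/

section LinearSections

variable [Finite σ]

lemma cumDegree_inter_le {X E : Set (σ → K)} (hX : IsCone X) (hE : IsCone E) :
    cumDegree (X ∩ E) ≤ ∑ Q ∈ components X, cumDegree (Q ∩ E) := by
  classical
  have hC {C} (h : C ∈ components (X ∩ E)) : IsComponent (X ∩ E) C :=
    (mem_components (hX.inter hE)).1 h
  have hcover : ∀ C ∈ components (X ∩ E), ∃ Q ∈ components X, C ⊆ Q := fun C h =>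
    exists_subset_component hX (hC h).1 ((hC h).2.1.trans Set.inter_subset_left)
  choose! j hj hCj using hcover
  rw [cumDegree, ← Finset.sum_fiberwise_of_maps_to hj]
  refine Finset.sum_le_sum fun Q hQ => Finset.sum_le_sum_of_subset fun C hCQ => ?_
  obtain ⟨h, rfl⟩ := Finset.mem_filter.1 hCQ
  have hQX := (mem_components hX).1 hQ
  refine (mem_components (hQX.1.isCone.inter hE)).2 ⟨(hC h).1,
    Set.subset_inter (hCj C h) ((hC h).2.1.trans Set.inter_subset_right),
    fun Z hZ hCZ hZQ => (hC h).2.2 Z hZ hCZ (hZQ.trans ?_)⟩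
  exact Set.inter_subset_inter_left _ hQX.2.1

lemma exists_finset_coe_eq (W : Submodule K (σ → K)) :
    ∃ s : Finset ((σ → K) →ₗ[K] K), (W : Set (σ → K)) = {x | ∀ h ∈ s, h x = 0} := by
  obtain ⟨s, hs⟩ := IsNoetherian.noetherian W.dualAnnihilator
  refine ⟨s, ?_⟩
  rw [← Subspace.dualAnnihilator_dualCoannihilator_eq (W := W), ← hs,
    Submodule.coe_dualCoannihilator_span]
  rfl

lemma isCone_coe (W : Submodule K (σ → K)) : IsCone (W : Set (σ → K)) := by
  obtain ⟨s, hs⟩ := exists_finset_coe_eq W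
  have : (W : Set (σ → K)) = ⋂ h : s, {x | h.1 x = 0} := by
    rw [hs]
    ext
    simp
  exact this ▸ IsCone.iInter fun h => isCone_setOf_apply_eq_zero h.1

theorem cumDegree_inter_submodule_le [IsAlgClosed K] {X : Set (σ → K)} (hX : IsCone X)
    (W : Submodule K (σ → K)) : cumDegree (X ∩ W) ≤ cumDegree X := by
  classical
  obtain ⟨s, hs⟩ := exists_finset_coe_eq W
  rw [hs]
  clear hs
  induction s using Finset.induction_on generalizing X with
  | empty => simp
  | insert h s _ ih =>
    have hcut : X ∩ {x | ∀ g ∈ insert h s, g x = 0} =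
        X ∩ {x | h x = 0} ∩ {x | ∀ g ∈ s, g x = 0} := by
      ext
      simp [and_assoc]
    rw [hcut]
    calc cumDegree (X ∩ {x | h x = 0} ∩ {x | ∀ g ∈ s, g x = 0})
        ≤ cumDegree (X ∩ {x | h x = 0}) := ih (hX.inter (isCone_setOf_apply_eq_zero h))
      _ ≤ ∑ Q ∈ components X, cumDegree (Q ∩ {x | h x = 0}) :=
        cumDegree_inter_le hX (isCone_setOf_apply_eq_zero h)
      _ ≤ cumDegree X := Finset.sum_le_sum fun Q hQ =>
        ((mem_components hX).1 hQ).1.cumDegree_inter_hyperplane_le h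

end LinearSections

/-- The projective points of a cone: the lines through the origin which it contains. -/
def points (X : Set (σ → K)) : Set (Submodule K (σ → K)) :=
  {L | finrank K L = 1 ∧ (L : Set (σ → K)) ⊆ X}

/-- The degree of a cone: the largest number of projective points in a finite linear section. -/
noncomputable def degree (X : Set (σ → K)) : ℕ :=
  sSup {k | ∃ W : Submodule K (σ → K), (points (X ∩ W)).Finite ∧ (points (X ∩ W)).ncard = k}

lemma IsCone.span_singleton_mem_points {X : Set (σ → K)} (hX : IsCone X) {x : σ → K} (hx : x ∈ X)
    (h0 : x ≠ 0) : K ∙ x ∈ points X := by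
  refine ⟨finrank_span_singleton h0, fun y hy => ?_⟩
  obtain ⟨c, rfl⟩ := Submodule.mem_span_singleton.1 hy
  exact hX.smul_mem hx c

lemma isIrred_coe_of_finrank_eq_one [Finite σ] {L : Submodule K (σ → K)} (hL : finrank K L = 1) :
    IsIrred (L : Set (σ → K)) := by
  obtain ⟨v, hv, hspan⟩ := finrank_eq_one_iff'.1 hL
  have hsub {Y : Set (σ → K)} (hY : IsCone Y) (hvY : v.1 ∈ Y) : (L : Set (σ → K)) ⊆ Y := by
    intro w hw
    obtain ⟨c, hc⟩ := hspan ⟨w, hw⟩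
    rw [show w = c • v.1 from congrArg Subtype.val hc.symm]
    exact hY.smul_mem hvY c
  exact ⟨isCone_coe L, fun h => hv (Subtype.ext (h v.2)),
    fun Y Z hY hZ h => (h v.2).imp (hsub hY) (hsub hZ)⟩

lemma isComponent_coe_of_mem_points [Finite σ] {X : Set (σ → K)} (hX : IsCone X)
    (hfin : (points X).Finite) {L : Submodule K (σ → K)} (hL : L ∈ points X) :
    IsComponent X L := by
  classical
  refine ⟨isIrred_coe_of_finrank_eq_one hL.1, hL.2, fun Z hZ hLZ hZX => ?_⟩
  have hcover : Z ⊆ {0} ∪ ⋃ Y ∈ hfin.toFinset.image ((↑) : _ → Set (σ → K)), Y := fun x hx => by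
    refine or_iff_not_imp_left.2 fun h0 => Set.mem_biUnion (Finset.mem_image_of_mem _ ?_)
      (Submodule.mem_span_singleton_self x)
    exact hfin.mem_toFinset.2 (hX.span_singleton_mem_points (hZX hx) h0)
  obtain ⟨Y, hY, hZY⟩ := hZ.subset_of_biUnion (fun Y hY => by
    obtain ⟨L', -, rfl⟩ := Finset.mem_image.1 hY
    exact isCone_coe L') hcover
  obtain ⟨L', hL', rfl⟩ := Finset.mem_image.1 hY
  have hLL' : L = L' := Submodule.eq_of_le_of_finrank_eq (hLZ.trans hZY)
    (hL.1.trans (hfin.mem_toFinset.1 hL').1.symm)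
  exact (hLL' ▸ hZY).antisymm hLZ

lemma ncard_points_le_cumDegree [IsAlgClosed K] [Finite σ] {X : Set (σ → K)} (hX : IsCone X)
    (hfin : (points X).Finite) : (points X).ncard ≤ cumDegree X := by
  classical
  calc (points X).ncard = (hfin.toFinset.image ((↑) : _ → Set (σ → K))).card := by
        rw [Set.ncard_eq_toFinset_card _ hfin,
          Finset.card_image_of_injective _ SetLike.coe_injective]
    _ ≤ (components X).card := Finset.card_le_card fun C hC => by
        obtain ⟨L, hL, rfl⟩ := Finset.mem_image.1 hC
        exact (mem_components hX).2
          (isComponent_coe_of_mem_points hX hfin (hfin.mem_toFinset.1 hL))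
    _ ≤ cumDegree X := by
        rw [Finset.card_eq_sum_ones]
        exact Finset.sum_le_sum fun C hC => ((mem_components hX).1 hC).1.hilbertDegree_pos

theorem degree_le_cumDegree [IsAlgClosed K] [Finite σ] {X : Set (σ → K)} (hX : IsCone X) :
    degree X ≤ cumDegree X := by
  refine csSup_le' ?_
  rintro _ ⟨W, hfin, rfl⟩
  exact (ncard_points_le_cumDegree (hX.inter (isCone_coe W)) hfin).trans
    (cumDegree_inter_submodule_le hX W)

/-! ### Chains of irreducible cones -/

/-- The (projective) dimension of a cone: the largest length `k` of a chain
`c 0 ⊂ c 1 ⊂ ⋯ ⊂ c k` of irreducible cones which it contains. -/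
noncomputable def dim (X : Set (σ → K)) : ℕ :=
  sSup {k | ∃ c : Fin (k + 1) → Set (σ → K),
    (∀ i, IsIrred (c i) ∧ c i ⊆ X) ∧ ∀ i j, i < j → c i ⊂ c j}

section Dimension

variable [IsAlgClosed K] [Finite σ] {V : Set (σ → K)}

lemma add_one_le_coneDim_of_chain {k : ℕ} {c : Fin (k + 1) → Set (σ → K)}
    (hc : ∀ i, IsIrred (c i) ∧ c i ⊆ V) (hlt : ∀ i j, i < j → c i ⊂ c j) : k + 1 ≤ coneDim V := by
  have hmono : StrictMono fun i => coneDim (c i) := fun i j hij =>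
    (hc i).1.coneDim_lt (hc j).1 (hlt i j hij)
  have hle (i : Fin (k + 1)) : i + 1 ≤ coneDim (c i) := by
    induction i using Fin.induction with
    | zero => exact Nat.pos_of_ne_zero (coneDim_ne_zero (hc 0).1.2.1)
    | succ i ih => exact Nat.succ_le_of_lt (ih.trans_lt (hmono i.castSucc_lt_succ))
  exact (hle (Fin.last k)).trans (coneDim_mono (hc _).2)

lemma IsIrred.exists_ssubset_coneDim_add_one_eq (hV : IsIrred V) (h : 1 < coneDim V) :
    ∃ Q, IsIrred Q ∧ Q ⊂ V ∧ coneDim Q + 1 = coneDim V := by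
  obtain ⟨v, hv, hv0⟩ := hV.exists_ne_zero
  obtain ⟨i, hi⟩ := Function.ne_iff.1 hv0
  let p : (σ → K) →ₗ[K] K := LinearMap.proj i
  have hVp : ¬ V ⊆ {x | p x = 0} := fun hc => hi (hc hv)
  have hp : IsCone {x | p x = 0} := isCone_setOf_apply_eq_zero p
  obtain ⟨x, hx, hx0⟩ : ∃ x ∈ V ∩ {x | p x = 0}, x ≠ 0 := by
    by_contra! hc
    refine (coneDim_le (π := LinearMap.pi fun _ : Fin 1 => p) (V := V) ?_).not_gt h
    exact fun x hx h0 => hc x ⟨hx, congrFun h0 0⟩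
  obtain ⟨Q, hQ, -⟩ := Set.mem_iUnion₂.1
    ((subset_zero_union_components (hV.isCone.inter hp) hx).resolve_left hx0)
  rw [mem_components (hV.isCone.inter hp)] at hQ
  exact ⟨Q, hQ.1, ⟨hQ.2.1.trans Set.inter_subset_left, fun hc => hVp fun y hy =>
    (hQ.2.1 (hc hy)).2⟩, hQ.coneDim_add_one_eq hV hVp⟩

lemma IsIrred.exists_chain (hV : IsIrred V) {k : ℕ} (hk : coneDim V = k + 1) :
    ∃ c : Fin (k + 1) → Set (σ → K),
      (∀ i, IsIrred (c i) ∧ c i ⊆ V) ∧ ∀ i j, i < j → c i ⊂ c j := by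
  induction k generalizing V with
  | zero => exact ⟨fun _ => V, fun _ => ⟨hV, subset_rfl⟩, fun i j hij => by lia⟩
  | succ k ih =>
    obtain ⟨Q, hQ, hQV, hdim⟩ := hV.exists_ssubset_coneDim_add_one_eq (by lia)
    obtain ⟨c, hc, hlt⟩ := ih hQ (by lia)
    refine ⟨Fin.snoc (α := fun _ => Set (σ → K)) c V, fun i => ?_, fun i j => ?_⟩
    · cases i using Fin.lastCases with
      | last => simp [hV]
      | cast i => simpa using ⟨(hc i).1, (hc i).2.trans hQV.1⟩
    · cases i using Fin.lastCases with
      | last => exact fun hij => absurd hij (Fin.le_last j).not_gt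
      | cast i =>
        cases j using Fin.lastCases with
        | last => simpa using (hc i).2.trans_ssubset hQV
        | cast j => simpa using hlt i j

theorem IsIrred.dim_add_one_eq (hV : IsIrred V) : dim V + 1 = coneDim V := by
  obtain ⟨k, hk⟩ := Nat.exists_eq_succ_of_ne_zero (coneDim_ne_zero hV.2.1)
  suffices h : IsGreatest _ k by rw [hk, dim, h.csSup_eq]
  refine ⟨hV.exists_chain hk, ?_⟩
  rintro m ⟨c, hc, hlt⟩
  have := add_one_le_coneDim_of_chain hc hlt
  lia

end Dimension

/-! ### Products -/

/-- The product of two cones, inside the direct sum of the ambient spaces.  In projective terms,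
this is the join of two varieties in disjoint linear spaces. -/
def coneProd (V : Set (σ → K)) (W : Set (τ → K)) : Set (σ ⊕ τ → K) :=
  {z | z ∘ Sum.inl ∈ V ∧ z ∘ Sum.inr ∈ W}

lemma mem_vanishingIdeal_coneProd {V : Set (σ → K)} {W : Set (τ → K)}
    {f : MvPolynomial (σ ⊕ τ) K} : f ∈ vanishingIdeal K (coneProd V W) ↔
      ∀ v ∈ V, ∀ w ∈ W, eval (Sum.elim v w) f = 0 := by
  refine ⟨fun h v hv w hw => h _ ⟨hv, hw⟩, fun h z hz => ?_⟩
  rw [← Sum.elim_comp_inl_inr z]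
  exact h _ hz.1 _ hz.2

lemma eval_bind₁ (q : τ → MvPolynomial σ K) (f : MvPolynomial τ K) (x : σ → K) :
    eval x (bind₁ q f) = eval (fun i => eval x (q i)) f :=
  aeval_bind₁ ..

lemma exists_eval_eq_eval_sumElim_left (f : MvPolynomial (σ ⊕ τ) K) (w : τ → K) :
    ∃ p : MvPolynomial σ K, ∀ v, eval v p = eval (Sum.elim v w) f := by
  refine ⟨bind₁ (Sum.elim X (C ∘ w)) f, fun v => ?_⟩
  rw [eval_bind₁]
  congr 2
  ext (i | i) <;> simp

lemma exists_eval_eq_eval_sumElim_right (f : MvPolynomial (σ ⊕ τ) K) (v : σ → K) :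
    ∃ p : MvPolynomial τ K, ∀ w, eval w p = eval (Sum.elim v w) f := by
  refine ⟨bind₁ (Sum.elim (C ∘ v) X) f, fun w => ?_⟩
  rw [eval_bind₁]
  congr 2
  ext (i | i) <;> simp

lemma IsCone.preimage [Finite σ] {V : Set (τ → K)} (hV : IsCone V)
    (φ : (σ → K) →ₗ[K] (τ → K)) : IsCone (φ ⁻¹' V) := by
  have := Fintype.ofFinite σ
  obtain ⟨S, hS, rfl⟩ := hV
  refine ⟨pullback φ '' S, ?_, ?_⟩
  · rintro _ ⟨p, hp, rfl⟩
    obtain ⟨d, hd⟩ := hS p hp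
    exact ⟨d, isHomogeneous_pullback φ hd⟩
  · ext x
    simp [eval_pullback]

lemma IsCone.prod [Finite σ] [Finite τ] {V : Set (σ → K)} {W : Set (τ → K)} (hV : IsCone V)
    (hW : IsCone W) : IsCone (coneProd V W) :=
  (hV.preimage (LinearMap.funLeft K K Sum.inl)).inter (hW.preimage (LinearMap.funLeft K K Sum.inr))

lemma isPrime_vanishingIdeal_coneProd [Infinite K] {V : Set (σ → K)} {W : Set (τ → K)}
    (hV : IsIrred V) (hW : IsIrred W) : (vanishingIdeal K (coneProd V W)).IsPrime := by
  refine ⟨fun h => ?_, fun {f g} hfg => ?_⟩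
  · simpa using mem_vanishingIdeal_coneProd.1 ((Ideal.eq_top_iff_one _).1 h) 0 hV.zero_mem 0
      hW.zero_mem
  by_contra! hc
  simp only [mem_vanishingIdeal_coneProd] at hc hfg
  push Not at hc
  obtain ⟨⟨v₁, hv₁, w₁, hw₁, h₁⟩, v₂, hv₂, w₂, hw₂, h₂⟩ := hc
  obtain ⟨f₁, hf₁⟩ := exists_eval_eq_eval_sumElim_right f v₁
  obtain ⟨g₂, hg₂⟩ := exists_eval_eq_eval_sumElim_right g v₂
  obtain ⟨w, hw, hne⟩ : ∃ w ∈ W, eval w (f₁ * g₂) ≠ 0 := by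
    simpa [mem_vanishingIdeal] using hW.mul_notMem_vanishingIdeal (p := f₁) (q := g₂)
      (fun h => h₁ ((hf₁ w₁).symm.trans (h w₁ hw₁))) fun h => h₂ ((hg₂ w₂).symm.trans (h w₂ hw₂))
  rw [map_mul, hf₁, hg₂] at hne
  obtain ⟨p, hp⟩ := exists_eval_eq_eval_sumElim_left f w
  obtain ⟨q, hq⟩ := exists_eval_eq_eval_sumElim_left g w
  refine hV.mul_notMem_vanishingIdeal (p := p) (q := q)
    (fun h => left_ne_zero_of_mul hne ((hp v₁).symm.trans (h v₁ hv₁)))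
    (fun h => right_ne_zero_of_mul hne ((hq v₂).symm.trans (h v₂ hv₂))) fun v hv => ?_
  have := hfg v hv w hw
  rwa [map_mul, ← hp, ← hq, ← map_mul] at this

lemma IsIrred.prod [Infinite K] [Finite σ] [Finite τ] {V : Set (σ → K)} {W : Set (τ → K)}
    (hV : IsIrred V) (hW : IsIrred W) : IsIrred (coneProd V W) := by
  refine isIrred_of_isPrime (hV.isCone.prod hW.isCone) (fun h => ?_)
    (isPrime_vanishingIdeal_coneProd hV hW)
  obtain ⟨v, hv, hv0⟩ := hV.exists_ne_zero
  exact hv0 (congrArg (· ∘ Sum.inl) (h (a := Sum.elim v 0) ⟨hv, hW.zero_mem⟩))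

/-- The direct sum of two linear maps between coordinate spaces. -/
def prodMap {σ' τ' : Type*} (π : (σ → K) →ₗ[K] (σ' → K)) (ρ : (τ → K) →ₗ[K] (τ' → K)) :
    (σ ⊕ τ → K) →ₗ[K] (σ' ⊕ τ' → K) :=
  LinearMap.pi (Sum.elim (fun i => LinearMap.proj i ∘ₗ π ∘ₗ LinearMap.funLeft K K Sum.inl)
    fun i => LinearMap.proj i ∘ₗ ρ ∘ₗ LinearMap.funLeft K K Sum.inr)

lemma prodMap_sumElim {σ' τ' : Type*} (π : (σ → K) →ₗ[K] (σ' → K))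
    (ρ : (τ → K) →ₗ[K] (τ' → K)) (v : σ → K) (w : τ → K) :
    prodMap π ρ (Sum.elim v w) = Sum.elim (π v) (ρ w) := by
  ext (i | i) <;> rfl

lemma IsDominantOn.prodMap [Infinite K] [Fintype σ] [Fintype τ] {σ' τ' : Type*}
    {V : Set (σ → K)} {W : Set (τ → K)} {π : (σ → K) →ₗ[K] (σ' → K)}
    {ρ : (τ → K) →ₗ[K] (τ' → K)} (hπ : IsDominantOn π V) (hρ : IsDominantOn ρ W) :
    IsDominantOn (prodMap π ρ) (coneProd V W) := by
  intro f hf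
  simp only [mem_vanishingIdeal_coneProd, eval_pullback, prodMap_sumElim] at hf
  have hW (w) (hw : w ∈ W) (x : σ' → K) : eval (Sum.elim x (ρ w)) f = 0 := by
    obtain ⟨p, hp⟩ := exists_eval_eq_eval_sumElim_left f (ρ w)
    rw [← hp, hπ p fun v hv => ?_, map_zero]
    exact (eval_pullback π v p).trans ((hp _).trans (hf v hv w hw))
  refine MvPolynomial.funext fun z => ?_
  obtain ⟨q, hq⟩ := exists_eval_eq_eval_sumElim_right f (z ∘ Sum.inl)
  rw [← Sum.elim_comp_inl_inr z, ← hq, hρ q fun w hw => ?_, map_zero, map_zero]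
  exact (eval_pullback ρ w q).trans ((hq _).trans (hW w hw _))

instance finiteDimensional_mul {A : Type*} [CommRing A] [Algebra K A] (M N : Submodule K A)
    [FiniteDimensional K M] [FiniteDimensional K N] : FiniteDimensional K ↥(M * N) :=
  Module.Finite.iff_fg.2 ((Module.Finite.iff_fg.1 ‹_›).mul (Module.Finite.iff_fg.1 ‹_›))

lemma finrank_mul_le {A : Type*} [CommRing A] [Algebra K A] (M N : Submodule K A)
    [FiniteDimensional K M] [FiniteDimensional K N] :
    finrank K ↥(M * N) ≤ finrank K M * finrank K N := by
  rw [← Submodule.mulMap_range, ← finrank_tensorProduct]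
  exact LinearMap.finrank_range_le _

lemma finrank_finsetSup_le {M ι : Type*} [AddCommGroup M] [Module K M] (s : Finset ι)
    (p : ι → Submodule K M) [∀ i, FiniteDimensional K (p i)] :
    finrank K ↥(s.sup p) ≤ ∑ i ∈ s, finrank K (p i) := by
  classical
  induction s using Finset.induction_on with
  | empty => simp
  | insert i s hi ih =>
    rw [Finset.sup_insert, Finset.sum_insert hi]
    exact (Submodule.finrank_add_le_finrank_add_finrank _ _).trans (by gcongr)

lemma homogeneousSubmodule_eq_span (t : ℕ) : homogeneousSubmodule σ K t =
    Submodule.span K ((fun d => monomial d 1) '' {d : σ →₀ ℕ | d.degree = t}) := by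
  rw [homogeneousSubmodule_eq_finsupp_supported]
  exact restrictSupport_eq_span (R := K) _

lemma exists_monomial_eq_rename_mul_rename (d : σ ⊕ τ →₀ ℕ) : ∃ (a : σ →₀ ℕ) (b : τ →₀ ℕ),
    a.degree + b.degree = d.degree ∧
      (monomial d 1 : MvPolynomial (σ ⊕ τ) K) =
        rename Sum.inl (monomial a 1) * rename Sum.inr (monomial b 1) := by
  obtain ⟨⟨a, b⟩, rfl⟩ := Finsupp.sumFinsuppEquivProdFinsupp.symm.surjective d
  have h : Finsupp.sumFinsuppEquivProdFinsupp.symm (a, b) =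
      a.mapDomain Sum.inl + b.mapDomain Sum.inr := by
    ext (i | i) <;> simp [Finsupp.mapDomain_apply, Sum.inl_injective, Sum.inr_injective,
      Finsupp.mapDomain_of_notMem_range]
  refine ⟨a, b, ?_, ?_⟩
  · rw [h, map_add, Finsupp.degree_mapDomain, Finsupp.degree_mapDomain]
  · rw [h, rename_monomial, rename_monomial, monomial_mul, one_mul]

lemma gradedPiece_coneProd_le (V : Set (σ → K)) (W : Set (τ → K)) (t : ℕ) :
    gradedPiece (coneProd V W) t ≤ (Finset.HasAntidiagonal.antidiagonal t).sup fun x =>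
      (gradedPiece V x.1).map (LinearMap.funLeft K K fun z : coneProd V W => ⟨_, z.2.1⟩) *
        (gradedPiece W x.2).map (LinearMap.funLeft K K fun z : coneProd V W => ⟨_, z.2.2⟩) := by
  rw [gradedPiece, homogeneousSubmodule_eq_span, Submodule.map_span_le]
  rintro _ ⟨d, rfl : d.degree = t, rfl⟩
  obtain ⟨a, b, hab, hd⟩ := exists_monomial_eq_rename_mul_rename (K := K) d
  refine SetLike.le_def.1 (Finset.le_sup (b := (a.degree, b.degree))
    (Finset.HasAntidiagonal.mem_antidiagonal.2 hab)) ?_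
  have : restrict (coneProd V W) (monomial d 1) =
      LinearMap.funLeft K K (fun z : coneProd V W => ⟨_, z.2.1⟩) (restrict V (monomial a 1)) *
      LinearMap.funLeft K K (fun z : coneProd V W => ⟨_, z.2.2⟩) (restrict W (monomial b 1)) := by
    ext z
    simp only [hd, restrict_apply, map_mul, eval_rename, Pi.mul_apply, LinearMap.funLeft_apply]
  rw [this]
  exact Submodule.mul_mem_mul
    (Submodule.mem_map_of_mem ⟨_, isHomogeneous_monomial _ rfl, rfl⟩)
    (Submodule.mem_map_of_mem ⟨_, isHomogeneous_monomial _ rfl, rfl⟩)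

lemma hilbertFn_coneProd_le [Finite σ] [Finite τ] (V : Set (σ → K)) (W : Set (τ → K)) (t : ℕ) :
    hilbertFn (coneProd V W) t ≤
      ∑ x ∈ Finset.HasAntidiagonal.antidiagonal t, hilbertFn V x.1 * hilbertFn W x.2 := by
  refine (Submodule.finrank_mono (gradedPiece_coneProd_le V W t)).trans
    ((finrank_finsetSup_le _ _).trans (Finset.sum_le_sum fun x _ => ?_))
  exact (finrank_mul_le _ _).trans
    (Nat.mul_le_mul (Submodule.finrank_map_le _ _) (Submodule.finrank_map_le _ _))

theorem hilbertDegree_coneProd_le [IsAlgClosed K] [Finite σ] [Finite τ] {V : Set (σ → K)}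
    {W : Set (τ → K)} (hV : IsIrred V) (hW : IsIrred W) :
    hilbertDegree (coneProd V W) ≤ hilbertDegree V * hilbertDegree W := by
  have := Fintype.ofFinite σ
  have := Fintype.ofFinite τ
  have hP := hV.prod hW
  have hdim : coneDim V + coneDim W ≤ coneDim (coneProd V W) := by
    obtain ⟨π, -, hπ⟩ := hV.exists_isFiniteOn_isDominantOn
    obtain ⟨ρ, -, hρ⟩ := hW.exists_isFiniteOn_isDominantOn
    simpa using hP.card_le_coneDim (hπ.prodMap hρ)
  obtain ⟨s, _, hs⟩ := hP.hasHilbertGrowth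
  obtain ⟨_, a, ha⟩ := hV.hasHilbertGrowth
  obtain ⟨_, b, hb⟩ := hW.hasHilbertGrowth
  have key (t) : hilbertDegree (coneProd V W) * (coneDim (coneProd V W)).multichoose t ≤
      hilbertDegree V * hilbertDegree W *
        (coneDim V + coneDim W).multichoose (t + (s + (a + b))) := by
    calc _ ≤ hilbertFn (coneProd V W) (t + s) := (hs t).1
      _ ≤ ∑ x ∈ Finset.HasAntidiagonal.antidiagonal (t + s), hilbertFn V x.1 * hilbertFn W x.2 :=
        hilbertFn_coneProd_le V W _
      _ ≤ ∑ x ∈ Finset.HasAntidiagonal.antidiagonal (t + s), hilbertDegree V * hilbertDegree W *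
            ((coneDim V).multichoose (x.1 + a) * (coneDim W).multichoose (x.2 + b)) :=
        Finset.sum_le_sum fun x _ =>
          (Nat.mul_le_mul (ha x.1).2 (hb x.2).2).trans_eq (mul_mul_mul_comm ..)
      _ ≤ _ := by
        rw [← Finset.mul_sum, ← add_assoc t]
        exact Nat.mul_le_mul_left _ (sum_antidiagonal_multichoose_add_mul_le ..)
  have hdim' : coneDim (coneProd V W) = coneDim V + coneDim W :=
    (le_of_forall_multichoose_le (coneDim_ne_zero hP.2.1) fun t =>
      (Nat.le_mul_of_pos_left _ hP.hilbertDegree_pos).trans (key t)).antisymm hdim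
  exact le_of_forall_mul_multichoose_le (coneDim_ne_zero hP.2.1) (s := s + (a + b)) fun t =>
    (key t).trans_eq (by rw [hdim'])

/-! ### Linear embeddings and the reduction to the diagonal -/

section Image

variable {V : Set (σ → K)}

lemma hilbertFn_image_le [Finite σ] [Finite τ] (φ : (σ → K) →ₗ[K] (τ → K)) (V : Set (σ → K))
    (t : ℕ) : hilbertFn (φ '' V) t ≤ hilbertFn V t := by
  have := Fintype.ofFinite σ
  refine hilbertFn_le_of_comp (φ := (pullback φ).toLinearMap)
    (fun p hp => isHomogeneous_pullback φ hp) fun p _ hp => ?_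
  rintro _ ⟨x, hx, rfl⟩
  exact (eval_pullback φ x p).symm.trans (hp x hx)

lemma IsFiniteOn.coneDim_le_coneDim_image [Finite τ] {φ : (σ → K) →ₗ[K] (τ → K)}
    (hφ : IsFiniteOn φ V) : coneDim V ≤ coneDim (φ '' V) := by
  obtain ⟨π, hπ⟩ := exists_isFiniteOn_coneDim (φ '' V)
  exact coneDim_le (π := π ∘ₗ φ) fun x hx h0 => hφ x hx (hπ _ ⟨x, hx, rfl⟩ h0)

lemma IsIrred.image [Finite σ] (hV : IsIrred V) {φ : (σ → K) →ₗ[K] (τ → K)} (hφ : IsFiniteOn φ V)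
    (hc : IsCone (φ '' V)) : IsIrred (φ '' V) := by
  refine ⟨hc, fun h0 => hV.2.1 fun x hx => hφ x hx (h0 ⟨x, hx, rfl⟩), fun Y Z hY hZ hsub => ?_⟩
  simp only [Set.image_subset_iff] at hsub ⊢
  exact hV.2.2 _ _ (hY.preimage φ) (hZ.preimage φ) hsub

variable {δ : (σ → K) →ₗ[K] (τ → K)} {ρ : (τ → K) →ₗ[K] (σ → K)}

lemma hilbertDegree_image [Finite σ] [Finite τ] (h : Function.LeftInverse ρ δ)
    (V : Set (σ → K)) :
    hilbertDegree (δ '' V) = hilbertDegree V := by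
  have himage : ρ '' (δ '' V) = V := h.image_image V
  have hfn : hilbertFn (δ '' V) = hilbertFn V := funext fun t =>
    (hilbertFn_image_le δ V t).antisymm <| by
      simpa only [himage] using hilbertFn_image_le ρ (δ '' V) t
  have hδ : IsFiniteOn δ V := fun x _ h0 => by rw [← h x, h0, map_zero]
  have hρ : IsFiniteOn ρ (δ '' V) := by
    rintro _ ⟨x, -, rfl⟩ h0
    rw [← h x, h0, map_zero]
  have hdim : coneDim (δ '' V) = coneDim V :=
    (himage ▸ hρ.coneDim_le_coneDim_image).antisymm hδ.coneDim_le_coneDim_image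
  simp only [hilbertDegree, HasHilbertGrowth, hfn, hdim]

lemma IsCone.image [Finite τ] (hV : IsCone V) (h : Function.LeftInverse ρ δ) : IsCone (δ '' V) := by
  have : δ '' V = ρ ⁻¹' V ∩ LinearMap.range δ := by
    ext y
    constructor
    · rintro ⟨x, hx, rfl⟩
      exact ⟨by rwa [Set.mem_preimage, h x], x, rfl⟩
    · rintro ⟨hy, x, rfl⟩
      exact ⟨x, h x ▸ hy, rfl⟩
  exact this ▸ (hV.preimage ρ).inter (isCone_coe _)

lemma IsComponent.image [Finite σ] [Finite τ] {X C : Set (σ → K)}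
    (h : Function.LeftInverse ρ δ) (hC : IsComponent X C) : IsComponent (δ '' X) (δ '' C) := by
  have hδ : IsFiniteOn δ C := fun x _ h0 => by rw [← h x, h0, map_zero]
  refine ⟨hC.1.image hδ (hC.1.isCone.image h), Set.image_mono hC.2.1, fun Z hZ hCZ hZX => ?_⟩
  have hδρ {z} (hz : z ∈ Z) : δ (ρ z) = z := by
    obtain ⟨x, -, rfl⟩ := hZX hz
    rw [h x]
  have hρZ : ρ '' Z = δ ⁻¹' Z := by
    ext x
    exact ⟨by rintro ⟨z, hz, rfl⟩; rwa [Set.mem_preimage, hδρ hz], fun hx => ⟨δ x, hx, h x⟩⟩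
  have hirred : IsIrred (ρ '' Z) :=
    hZ.image (fun z hz h0 => by rw [← hδρ hz, h0, map_zero]) (hρZ ▸ hZ.isCone.preimage δ)
  have hZC : ρ '' Z = C := hC.2.2 _ hirred (hρZ ▸ Set.image_subset_iff.1 hCZ)
    ((Set.image_mono hZX).trans_eq (h.image_image X))
  rw [← hZC, Set.image_image, Set.image_congr fun z hz => hδρ hz, Set.image_id']

lemma cumDegree_le_cumDegree_image [Finite σ] [Finite τ] {X : Set (σ → K)}
    (hX : IsCone X) (h : Function.LeftInverse ρ δ) : cumDegree X ≤ cumDegree (δ '' X) := by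
  classical
  calc cumDegree X = ∑ C ∈ components X, hilbertDegree (δ '' C) :=
        Finset.sum_congr rfl fun C _ => (hilbertDegree_image h C).symm
    _ = ∑ C ∈ (components X).image (δ '' ·), hilbertDegree C :=
        (Finset.sum_image h.injective.image_injective.injOn).symm
    _ ≤ cumDegree (δ '' X) := Finset.sum_le_sum_of_subset fun C hC => by
        obtain ⟨Z, hZ, rfl⟩ := Finset.mem_image.1 hC
        exact (mem_components (hX.image h)).2 (((mem_components hX).1 hZ).image h)

end Image

section Bezout

lemma isIrred_univ [Infinite K] [Nonempty σ] : IsIrred (Set.univ : Set (σ → K)) := by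
  refine isIrred_of_isPrime isCone_univ (fun h => one_ne_zero (h (Set.mem_univ 1))) ?_
  rw [show vanishingIdeal K (Set.univ : Set (σ → K)) = ⊥ from (Submodule.eq_bot_iff _).2
    fun f hf => MvPolynomial.funext fun x => (hf x trivial).trans (map_zero _).symm]
  exact Ideal.isPrime_bot

variable [IsAlgClosed K] [Finite σ]

lemma IsIrred.cumDegree_inter_le_mul {V W : Set (σ → K)} (hV : IsIrred V) (hW : IsIrred W) :
    cumDegree (V ∩ W) ≤ hilbertDegree V * hilbertDegree W := by
  let δ : (σ → K) →ₗ[K] (σ ⊕ σ → K) := LinearMap.funLeft K K (Sum.elim id id)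
  have hδ : Function.LeftInverse (LinearMap.funLeft K K Sum.inl) δ := fun x => rfl
  have himage : δ '' (V ∩ W) = coneProd V W ∩ LinearMap.range δ := by
    ext z
    constructor
    · rintro ⟨x, hx, rfl⟩
      exact ⟨hx, x, rfl⟩
    · rintro ⟨hz, x, rfl⟩
      exact ⟨x, hz, rfl⟩
  calc cumDegree (V ∩ W) ≤ cumDegree (δ '' (V ∩ W)) :=
        cumDegree_le_cumDegree_image (hV.isCone.inter hW.isCone) hδ
    _ ≤ cumDegree (coneProd V W) :=
        himage ▸ cumDegree_inter_submodule_le (hV.isCone.prod hW.isCone) _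
    _ = hilbertDegree (coneProd V W) := cumDegree_eq_hilbertDegree (hV.prod hW)
    _ ≤ hilbertDegree V * hilbertDegree W := hilbertDegree_coneProd_le hV hW

theorem cumDegree_inter_le_mul {X Y : Set (σ → K)} (hX : IsCone X) (hY : IsCone Y) :
    cumDegree (X ∩ Y) ≤ cumDegree X * cumDegree Y :=
  calc cumDegree (X ∩ Y) ≤ ∑ Q ∈ components X, cumDegree (Q ∩ Y) := cumDegree_inter_le hX hY
    _ ≤ ∑ Q ∈ components X, ∑ R ∈ components Y, cumDegree (Q ∩ R) :=
      Finset.sum_le_sum fun Q hQ => by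
        simpa only [Set.inter_comm Q] using
          cumDegree_inter_le hY ((mem_components hX).1 hQ).1.isCone
    _ ≤ ∑ Q ∈ components X, ∑ R ∈ components Y, hilbertDegree Q * hilbertDegree R :=
      Finset.sum_le_sum fun Q hQ => Finset.sum_le_sum fun R hR =>
        ((mem_components hX).1 hQ).1.cumDegree_inter_le_mul ((mem_components hY).1 hR).1
    _ = cumDegree X * cumDegree Y := (Finset.sum_mul_sum ..).symm

lemma cumDegree_univ_le_one : cumDegree (Set.univ : Set (σ → K)) ≤ 1 := by
  cases isEmpty_or_nonempty σ
  · refine (Finset.sum_eq_zero fun C hC => ?_).trans_le zero_le_one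
    exact (((mem_components isCone_univ).1 hC).1.2.1 fun x _ => Subsingleton.elim x 0).elim
  have := Fintype.ofFinite σ
  have hV : IsIrred (Set.univ : Set (σ → K)) := isIrred_univ
  have hdim : Fintype.card σ ≤ coneDim (Set.univ : Set (σ → K)) :=
    hV.card_le_coneDim (π := LinearMap.id) fun f hf => MvPolynomial.funext fun x => by
      simpa [eval_pullback] using hf x (Set.mem_univ x)
  obtain ⟨s, _, hs⟩ := hV.hasHilbertGrowth
  have key (t) : hilbertDegree (Set.univ : Set (σ → K)) *
      (coneDim (Set.univ : Set (σ → K))).multichoose t ≤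
      1 * (Fintype.card σ).multichoose (t + s) := by
    rw [one_mul]
    exact (hs t).1.trans (hilbertFn_le_multichoose _ _)
  have hdim' := hdim.antisymm <| le_of_forall_multichoose_le (coneDim_ne_zero hV.2.1) fun t =>
    (Nat.le_mul_of_pos_left _ hV.hilbertDegree_pos).trans (key t)
  rw [cumDegree_eq_hilbertDegree hV]
  exact le_of_forall_mul_multichoose_le (coneDim_ne_zero hV.2.1) fun t => hdim' ▸ key t

theorem cumDegree_biInter_le_prod {ι : Type*} (s : Finset ι) {X : ι → Set (σ → K)}
    (hX : ∀ i, IsCone (X i)) : cumDegree (⋂ i ∈ s, X i) ≤ ∏ i ∈ s, cumDegree (X i) := by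
  classical
  induction s using Finset.induction_on with
  | empty => simpa using cumDegree_univ_le_one
  | insert i s hi ih =>
    rw [Finset.set_biInter_insert, Finset.prod_insert hi]
    exact (cumDegree_inter_le_mul (hX i) (.iInter fun i => .iInter fun _ => hX i)).trans
      (Nat.mul_le_mul_left _ ih)

end Bezout

/-! ### Fibres of finite projections -/

section PrimitiveElement

open Polynomial nonZeroDivisors IntermediateField

attribute [local instance] FractionRing.liftAlgebra

-- The resultant of `F` and `F'` is a combination of both, and this survives specialization.
lemma exists_ne_zero_forall_separable_map {B L : Type*} [CommRing B] [Field L] {F : B[X]}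
    {ψ : B →+* L} (hψ : Function.Injective ψ) (hF : (F.map ψ).Separable) :
    ∃ g : B, g ≠ 0 ∧ ∀ φ : B →+* K, φ g ≠ 0 → (F.map φ).Separable := by
  by_cases hF0 : F.natDegree = 0
  · obtain ⟨b, rfl⟩ := natDegree_eq_zero.1 hF0
    refine ⟨b, ?_, fun φ hφ => ?_⟩
    · rintro rfl
      exact hF.ne_zero (by simp)
    · simpa [separable_C] using hφ
  obtain ⟨u, v, -, -, huv⟩ :=
    exists_mul_add_mul_eq_C_resultant F (derivative F) le_rfl le_rfl (.inl hF0)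
  refine ⟨F.resultant (derivative F), fun hres => ?_, fun φ hφ => ?_⟩
  · have hL := resultant_map_map F (derivative F) F.natDegree (derivative F).natDegree ψ
    rw [hres, map_zero, ← natDegree_map_eq_of_injective hψ F,
      ← natDegree_map_eq_of_injective hψ (derivative F), ← derivative_map] at hL
    exact (resultant_eq_zero_iff.1 hL).2 hF
  · have h := congrArg (Polynomial.map φ) huv
    simp only [Polynomial.map_add, Polynomial.map_mul, Polynomial.map_C, ← derivative_map] at h
    generalize φ (F.resultant (derivative F)) = c at h hφ
    have hinv : Polynomial.C c⁻¹ * Polynomial.C c = 1 := by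
      rw [← Polynomial.C_mul, inv_mul_cancel₀ hφ, Polynomial.C_1]
    exact ⟨Polynomial.C c⁻¹ * u.map φ, Polynomial.C c⁻¹ * v.map φ,
      by linear_combination Polynomial.C c⁻¹ * h + hinv⟩

variable {B : Type*} [CommRing B] [IsDomain B] [CharZero B] {A : Type*} [CommRing A] [IsDomain A]
  [Algebra B A]

lemma exists_adjoin_algebraMap_eq_top [FaithfulSMul B A] [Module.Finite B A] :
    ∃ a : A, (FractionRing B)⟮algebraMap A (FractionRing A) a⟯ = ⊤ := by
  have : CharZero (FractionRing B) := IsFractionRing.charZero B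
  obtain ⟨β, hβ⟩ := Field.exists_primitive_element (FractionRing B) (FractionRing A)
  obtain ⟨⟨a, ⟨_, d, hd, rfl⟩⟩, ha⟩ :=
    IsLocalization.surj (Algebra.algebraMapSubmonoid A B⁰) β
  have hd0 : algebraMap B (FractionRing A) d ≠ 0 :=
    (map_ne_zero_iff _ (FaithfulSMul.algebraMap_injective B _)).2 (nonZeroDivisors.ne_zero hd)
  have hβa : β = algebraMap A (FractionRing A) a *
      (algebraMap (FractionRing B) (FractionRing A) (algebraMap B _ d))⁻¹ := by
    rw [← ha, ← IsScalarTower.algebraMap_apply, ← IsScalarTower.algebraMap_apply,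
      mul_inv_cancel_right₀ hd0]
  refine ⟨a, eq_top_iff.2 (hβ.ge.trans (IntermediateField.adjoin_simple_le_iff.2 ?_))⟩
  rw [hβa]
  exact mul_mem (IntermediateField.mem_adjoin_simple_self _ _)
    (inv_mem (IntermediateField.algebraMap_mem _ _))

variable [IsIntegrallyClosed B]

lemma exists_natDegree_minpoly_eq_finrank [FaithfulSMul B A] [Module.Finite B A] :
    ∃ a : A, (minpoly B a).natDegree = finrank B A := by
  obtain ⟨a, ha⟩ := exists_adjoin_algebraMap_eq_top (B := B) (A := A)
  have hint : IsIntegral B a := Algebra.IsIntegral.isIntegral a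
  have : CharZero (FractionRing B) := IsFractionRing.charZero B
  refine ⟨a, ?_⟩
  rw [← IsFractionRing.finrank_eq B (FractionRing B) A (FractionRing A),
    ← (Field.primitive_element_iff_minpoly_natDegree_eq _ _).1 ha,
    minpoly.isIntegrallyClosed_eq_field_fractions (FractionRing B) (FractionRing A) hint,
    (minpoly.monic hint).natDegree_map]

lemma separable_map_minpoly {a : A} (ha : IsIntegral B a) :
    ((minpoly B a).map (algebraMap B (FractionRing B))).Separable := by
  have : CharZero (FractionRing B) := IsFractionRing.charZero B
  exact ((minpoly.monic ha).irreducible_iff_irreducible_map_fraction_map.1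
    (minpoly.irreducible ha)).separable

end PrimitiveElement

section PrimeOverRoot

open Polynomial

-- Lying over for `B[X] ⧸ (minpoly B a) → A`.
lemma exists_isPrime_aeval_mem {B A : Type*} [CommRing B] [IsDomain B] [IsIntegrallyClosed B]
    [CommRing A] [IsDomain A] [Algebra B A] [FaithfulSMul B A] [Algebra.IsIntegral B A] {a : A}
    {φ : B →+* K} {z : K} (hz : (minpoly B a).eval₂ φ z = 0) :
    ∃ Q : Ideal A, Q.IsPrime ∧ ∀ q : B[X], q.eval₂ φ z = 0 → Polynomial.aeval a q ∈ Q := by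
  let ψ : B[X] →+* A := (Polynomial.aeval a).toRingHom
  let χ : B[X] →+* K := eval₂RingHom φ z
  have hψ : ψ.IsIntegral := by
    refine RingHom.IsIntegral.tower_top Polynomial.C ψ ?_
    convert algebraMap_isIntegral_iff.2 ‹Algebra.IsIntegral B A›
    ext
    simp [ψ]
  let := ψ.toAlgebra
  have : Algebra.IsIntegral B[X] A := ⟨hψ⟩
  have hP : (RingHom.ker χ).IsPrime := RingHom.ker_isPrime χ
  have hker : Ideal.comap (algebraMap B[X] A) ⊥ ≤ RingHom.ker χ := by
    intro q hq
    obtain ⟨w, rfl⟩ := minpoly.isIntegrallyClosed_dvd (Algebra.IsIntegral.isIntegral a) hq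
    rw [RingHom.mem_ker, map_mul, show χ (minpoly B a) = 0 from hz, zero_mul]
  obtain ⟨Q, -, hQ, hQP⟩ := Ideal.exists_ideal_over_prime_of_isIntegral (RingHom.ker χ) ⊥ hker
  exact ⟨Q, hQ, fun q hq => hQP.ge hq⟩

end PrimeOverRoot

lemma exists_forall_eval_eq_zero [IsAlgClosed K] [Finite σ] {J : Ideal (MvPolynomial σ K)}
    (hJ : J ≠ ⊤) : ∃ x : σ → K, ∀ f ∈ J, eval x f = 0 := by
  obtain ⟨M, hM, hJM⟩ := Ideal.exists_le_maximal J hJ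
  obtain ⟨x, rfl⟩ := (isMaximal_iff_eq_vanishingIdeal_singleton (K := K)).1 hM
  exact ⟨x, fun f hf => mem_vanishingIdeal.1 (hJM hf) x rfl⟩

section Fibre

variable {π : (σ → K) →ₗ[K] (τ → K)} {V : Set (σ → K)}

lemma CoordRing.exists_mem_of_isPrime [IsAlgClosed K] [Finite σ] (hV : IsCone V)
    {Q : Ideal (CoordRing V π)} (hQ : Q.IsPrime) :
    ∃ x ∈ V, ∀ f, CoordRing.mk V π f ∈ Q → eval x f = 0 := by
  obtain ⟨x, hx⟩ := exists_forall_eval_eq_zero (Ideal.comap_isPrime (CoordRing.mk V π) Q).ne_top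
  refine ⟨x, hV.mem_iff.2 fun f hf => hx f ?_, hx⟩
  rw [Ideal.mem_comap, CoordRing.mk_eq_zero_iff.2 hf]
  exact Q.zero_mem

lemma IsIrred.exists_mem_of_eval₂_minpoly_eq_zero [IsAlgClosed K] [Fintype σ] [Finite τ]
    (hV : IsIrred V) (hπ : IsFiniteOn π V) (hdom : IsDominantOn π V) {p : MvPolynomial σ K}
    {b : τ → K} {z : K}
    (hz : (minpoly (MvPolynomial τ K) (CoordRing.mk V π p)).eval₂ (eval b) z = 0) :
    ∃ x ∈ V, π x = b ∧ eval x p = z := by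
  have := CoordRing.isDomain (π := π) hV
  have := CoordRing.finite hV.isCone hπ
  have : FaithfulSMul (MvPolynomial τ K) (CoordRing V π) :=
    (faithfulSMul_iff_algebraMap_injective _ _).2 (CoordRing.algebraMap_injective hdom)
  obtain ⟨Q, hQ, hmem⟩ := exists_isPrime_aeval_mem hz
  obtain ⟨x, hxV, hx⟩ := CoordRing.exists_mem_of_isPrime hV.isCone hQ
  refine ⟨x, hxV, ?_, ?_⟩
  · ext j
    have h := hmem (Polynomial.C (X j - C (b j))) (by simp)
    rw [Polynomial.aeval_C, CoordRing.algebraMap_apply] at h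
    simpa [eval_pullback, sub_eq_zero] using hx _ h
  · have h := hmem (Polynomial.X - Polynomial.C (C z)) (by simp)
    rw [map_sub, Polynomial.aeval_X, Polynomial.aeval_C, CoordRing.algebraMap_apply,
      ← map_sub] at h
    simpa [eval_pullback, sub_eq_zero] using hx _ h

lemma IsIrred.exists_finset_fibre [IsAlgClosed K] [CharZero K] [Fintype σ] [Fintype τ]
    (hV : IsIrred V) (hπ : IsFiniteOn π V) (hdom : IsDominantOn π V)
    (hcard : Fintype.card τ = coneDim V) :
    ∃ g : MvPolynomial τ K, g ≠ 0 ∧ ∀ b, eval b g ≠ 0 →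
      ∃ T : Finset (σ → K), hilbertDegree V ≤ T.card ∧ ∀ x ∈ T, x ∈ V ∧ π x = b := by
  classical
  have := CoordRing.isDomain (π := π) hV
  have := CoordRing.finite hV.isCone hπ
  have : FaithfulSMul (MvPolynomial τ K) (CoordRing V π) :=
    (faithfulSMul_iff_algebraMap_injective _ _).2 (CoordRing.algebraMap_injective hdom)
  obtain ⟨a, ha⟩ := exists_natDegree_minpoly_eq_finrank (B := MvPolynomial τ K)
    (A := CoordRing V π)
  obtain ⟨p, rfl⟩ := CoordRing.mk_surjective a
  have hint : IsIntegral (MvPolynomial τ K) (CoordRing.mk V π p) := Algebra.IsIntegral.isIntegral _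
  obtain ⟨g, hg0, hg⟩ := exists_ne_zero_forall_separable_map (K := K)
    (IsFractionRing.injective (MvPolynomial τ K) (FractionRing (MvPolynomial τ K)))
    (separable_map_minpoly hint)
  refine ⟨g, hg0, fun b hb => ?_⟩
  set F := (minpoly (MvPolynomial τ K) (CoordRing.mk V π p)).map (eval b)
  have hroots : hilbertDegree V ≤ F.roots.toFinset.card := by
    rw [Multiset.toFinset_card_of_nodup (Polynomial.nodup_roots (hg _ hb)),
      ← (IsAlgClosed.splits F).natDegree_eq_card_roots, (minpoly.monic hint).natDegree_map, ha]
    exact hilbertDegree_le (hV.hasHilbertGrowth_finrank hπ hdom) hcard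
  have hlift (z) (hz : z ∈ F.roots.toFinset) : ∃ x ∈ V, π x = b ∧ eval x p = z := by
    refine hV.exists_mem_of_eval₂_minpoly_eq_zero hπ hdom ?_
    rw [← Polynomial.eval_map]
    exact Polynomial.isRoot_of_mem_roots (Multiset.mem_toFinset.1 hz)
  choose! x hxV hxb hxz using hlift
  refine ⟨F.roots.toFinset.image x, ?_, Finset.forall_mem_image.2 fun z hz => ⟨hxV z hz, hxb z hz⟩⟩
  rwa [Finset.card_image_of_injOn]
  exact fun z hz z' hz' h => by rw [← hxz z hz, h, hxz z' hz']

lemma IsFiniteOn.finite_fibre [IsAlgClosed K] [Finite σ] [Finite τ] (hV : IsCone V)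
    (hπ : IsFiniteOn π V) (b : τ → K) : {x ∈ V | π x = b}.Finite := by
  classical
  have := Fintype.ofFinite σ
  have := CoordRing.finite hV hπ
  have hint (i : σ) : ∃ f : Polynomial (MvPolynomial τ K), f.Monic ∧
      f.eval₂ (algebraMap _ _) (CoordRing.mk V π (X i)) = 0 := Algebra.IsIntegral.isIntegral _
  choose f hf hf0 using hint
  refine (Set.Finite.pi' fun i => ((f i).map (eval b)).roots.toFinset.finite_toSet).subset ?_
  rintro x ⟨hx, rfl⟩ i
  rw [Finset.mem_coe, Multiset.mem_toFinset, Polynomial.mem_roots ((hf i).map _).ne_zero,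
    Polynomial.IsRoot, Polynomial.eval_map]
  have hmk : (f i).eval₂ (algebraMap _ _) (CoordRing.mk V π (X i)) =
      CoordRing.mk V π ((f i).eval₂ (pullback π).toRingHom (X i)) :=
    (Polynomial.hom_eval₂ _ _ (CoordRing.mk V π).toRingHom _).symm
  have hvan : eval x ((f i).eval₂ (pullback π).toRingHom (X i)) = 0 :=
    mem_vanishingIdeal.1 (CoordRing.mk_eq_zero_iff.1 (hmk.symm.trans (hf0 i))) x hx
  rw [Polynomial.hom_eval₂, eval_X] at hvan
  rw [← hvan]
  congr 1
  exact RingHom.ext fun q => (eval_pullback π x q).symm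

end Fibre

/-! ### Linear sections attaining the degree -/

section Dominant

variable [Fintype σ] [Nonempty τ] {π : (σ → K) →ₗ[K] (τ → K)}

lemma not_isDominantOn_of_subset_biUnion {V : Set (σ → K)} {T : Finset (Set (σ → K))}
    (hV : V ⊆ {0} ∪ ⋃ Z ∈ T, Z) (hT : ∀ Z ∈ T, ¬ IsDominantOn π Z) : ¬ IsDominantOn π V := by
  have hf (Z) (hZ : Z ∈ T) : ∃ f, pullback π f ∈ vanishingIdeal K Z ∧ f ≠ 0 := by
    simpa [IsDominantOn] using hT Z hZ
  choose! f hf hf0 using hf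
  intro hdom
  obtain ⟨j⟩ := ‹Nonempty τ›
  have hne : X j * ∏ Z ∈ T, f Z ≠ 0 := mul_ne_zero (X_ne_zero j) (Finset.prod_ne_zero_iff.2 hf0)
  refine hne (hdom _ (mem_vanishingIdeal.2 fun x hx => ?_))
  rw [eval_pullback, map_mul, eval_X, map_prod]
  rcases hV hx with h0 | hx
  · rw [Set.mem_singleton_iff.1 h0, map_zero, Pi.zero_apply, zero_mul]
  · obtain ⟨Z, hZ, hxZ⟩ := Set.mem_iUnion₂.1 hx
    have hZ0 := mem_vanishingIdeal.1 (hf Z hZ) x hxZ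
    rw [eval_pullback] at hZ0
    rw [Finset.prod_eq_zero hZ hZ0, mul_zero]

lemma IsDominantOn.exists_mem_components {V : Set (σ → K)} (hV : IsCone V)
    (hdom : IsDominantOn π V) : ∃ Z ∈ components V, IsDominantOn π Z := by
  by_contra! h
  exact not_isDominantOn_of_subset_biUnion (subset_zero_union_components hV) h hdom

lemma IsIrred.not_isDominantOn_inter [IsAlgClosed K] [Fintype τ] {V W : Set (σ → K)}
    (hV : IsIrred V) (hW : IsIrred W) (h : ¬ V ⊆ W) (hcard : coneDim V ≤ Fintype.card τ) :
    ¬ IsDominantOn π (V ∩ W) := by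
  intro hdom
  have hcone : IsCone (V ∩ W) := hV.isCone.inter hW.isCone
  obtain ⟨Z, hZ, hdomZ⟩ := hdom.exists_mem_components hcone
  obtain ⟨hZirr, hZsub, -⟩ := (mem_components hcone).1 hZ
  obtain ⟨hZV, hZW⟩ := Set.subset_inter_iff.1 hZsub
  exact (hZirr.coneDim_lt hV ⟨hZV, fun hVZ => h (hVZ.trans hZW)⟩).not_ge
    (hcard.trans (hZirr.card_le_coneDim hdomZ))

end Dominant

section GenericFibre

variable [IsAlgClosed K] [Fintype τ] [Nonempty τ] {π : (σ → K) →ₗ[K] (τ → K)}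
  {S : Finset (Set (σ → K))}

lemma exists_ne_zero_forall_mem_inter [Finite σ] (hS : ∀ Q ∈ S, IsIrred Q)
    (hanti : IsAntichain (· ⊆ ·) (S : Set (Set (σ → K))))
    (hcard : ∀ Q ∈ S, coneDim Q ≤ Fintype.card τ) :
    ∃ f : MvPolynomial τ K, f ≠ 0 ∧
      ∀ Q ∈ S, ∀ R ∈ S, Q ≠ R → ∀ x ∈ Q ∩ R, eval (π x) f = 0 := by
  classical
  have := Fintype.ofFinite σ
  have hf (P) (hP : P ∈ S.offDiag) :
      ∃ f, pullback π f ∈ vanishingIdeal K (P.1 ∩ P.2) ∧ f ≠ 0 := by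
    obtain ⟨hQ, hR, hne⟩ := Finset.mem_offDiag.1 hP
    simpa [IsDominantOn] using
      (hS _ hQ).not_isDominantOn_inter (π := π) (hS _ hR) (hanti hQ hR hne) (hcard _ hQ)
  choose! f hf hf0 using hf
  refine ⟨∏ P ∈ S.offDiag, f P, Finset.prod_ne_zero_iff.2 hf0, fun Q hQ R hR hne x hx => ?_⟩
  have hP : (Q, R) ∈ S.offDiag := Finset.mem_offDiag.2 ⟨hQ, hR, hne⟩
  have hfx := mem_vanishingIdeal.1 (hf _ hP) x hx
  rw [eval_pullback] at hfx
  rw [map_prod, Finset.prod_eq_zero hP hfx]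

lemma exists_finset_fibre_biUnion [CharZero K] [Fintype σ] (hS : ∀ Q ∈ S, IsIrred Q)
    (hanti : IsAntichain (· ⊆ ·) (S : Set (Set (σ → K)))) (hπ : ∀ Q ∈ S, IsFiniteOn π Q)
    (hdom : ∀ Q ∈ S, IsDominantOn π Q) (hcard : ∀ Q ∈ S, Fintype.card τ = coneDim Q) :
    ∃ g : MvPolynomial τ K, g ≠ 0 ∧ ∀ b, eval b g ≠ 0 → ∃ A : Finset (σ → K),
      ∑ Q ∈ S, hilbertDegree Q ≤ A.card ∧ ∀ x ∈ A, (∃ Q ∈ S, x ∈ Q) ∧ π x = b := by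
  classical
  have hfib (Q) (hQ : Q ∈ S) := (hS Q hQ).exists_finset_fibre (hπ Q hQ) (hdom Q hQ) (hcard Q hQ)
  choose! g hg0 hg using hfib
  obtain ⟨f, hf0, hf⟩ :=
    exists_ne_zero_forall_mem_inter (π := π) hS hanti fun Q hQ => (hcard Q hQ).ge
  refine ⟨f * ∏ Q ∈ S, g Q, mul_ne_zero hf0 (Finset.prod_ne_zero_iff.2 hg0), fun b hb => ?_⟩
  rw [map_mul, map_prod] at hb
  have hT (Q) (hQ : Q ∈ S) := hg Q hQ b (Finset.prod_ne_zero_iff.1 (right_ne_zero_of_mul hb) Q hQ)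
  choose! T hTcard hT using hT
  have hdisj : (S : Set (Set (σ → K))).PairwiseDisjoint T := by
    refine fun Q hQ R hR hne => Finset.disjoint_left.2 fun x hxQ hxR => left_ne_zero_of_mul hb ?_
    rw [← (hT Q hQ x hxQ).2]
    exact hf Q hQ R hR hne x ⟨(hT Q hQ x hxQ).1, (hT R hR x hxR).1⟩
  refine ⟨S.biUnion T, ?_, fun x hx => ?_⟩
  · rw [Finset.card_biUnion hdisj]
    exact Finset.sum_le_sum hTcard
  · obtain ⟨Q, hQ, hxQ⟩ := Finset.mem_biUnion.1 hx
    exact ⟨⟨Q, hQ, (hT Q hQ x hxQ).1⟩, (hT Q hQ x hxQ).2⟩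

end GenericFibre

section LinearSection

variable {π : (σ → K) →ₗ[K] (τ → K)} {X : Set (σ → K)} {b : τ → K}

lemma injOn_span_singleton (hb : b ≠ 0) : Set.InjOn (fun x => K ∙ x) {x | π x = b} := by
  intro x hx y hy hxy
  obtain ⟨c, rfl⟩ := Submodule.mem_span_singleton.1 (hxy.ge (Submodule.mem_span_singleton_self y))
  have hcb : c • b = (1 : K) • b := by
    rw [one_smul]
    exact (hx ▸ map_smul π c x).symm.trans hy
  rw [smul_left_injective K hb hcb, one_smul]

lemma points_inter_comap_subset (hX : IsCone X) (hπ : IsFiniteOn π X) :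
    points (X ∩ ((K ∙ b).comap π : Submodule K (σ → K))) ⊆ (K ∙ ·) '' {x ∈ X | π x = b} := by
  rintro L ⟨hL, hLX⟩
  obtain ⟨⟨y, hyL⟩, hy0, -⟩ := finrank_eq_one_iff'.1 hL
  replace hy0 : y ≠ 0 := fun h => hy0 (Subtype.ext h)
  obtain ⟨hyX, hyb⟩ := hLX hyL
  obtain ⟨c, hc⟩ := Submodule.mem_span_singleton.1 hyb
  have hc0 : c ≠ 0 := by
    rintro rfl
    exact hy0 (hπ y hyX (by rw [← hc, zero_smul]))
  refine ⟨c⁻¹ • y, ⟨hX.smul_mem hyX _, ?_⟩, ?_⟩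
  · rw [map_smul, ← hc, inv_smul_smul₀ hc0]
  · exact (eq_span_singleton_of_mem_of_finrank_eq_one hL (L.smul_mem _ hyL)
      (smul_ne_zero (inv_ne_zero hc0) hy0)).symm

lemma IsFiniteOn.card_le_ncard_points [IsAlgClosed K] [Finite σ] [Finite τ] (hX : IsCone X)
    (hπ : IsFiniteOn π X) (hb : b ≠ 0) {A : Finset (σ → K)} (hA : ∀ x ∈ A, x ∈ X ∧ π x = b) :
    (points (X ∩ ((K ∙ b).comap π : Submodule K (σ → K)))).Finite ∧
      A.card ≤ (points (X ∩ ((K ∙ b).comap π : Submodule K (σ → K)))).ncard := by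
  classical
  have hfin := ((hπ.finite_fibre hX b).image _).subset (points_inter_comap_subset hX hπ)
  have hinj : Set.InjOn (fun x => K ∙ x) (A : Set (σ → K)) :=
    (injOn_span_singleton hb).mono fun x hx => (hA x hx).2
  refine ⟨hfin, ?_⟩
  rw [← Finset.card_image_of_injOn hinj, ← Set.ncard_coe_finset]
  refine Set.ncard_le_ncard (fun L hL => ?_) hfin
  obtain ⟨x, hx, rfl⟩ := Finset.mem_image.1 (Finset.mem_coe.1 hL)
  refine (hX.inter (isCone_coe _)).span_singleton_mem_points ⟨(hA x hx).1, ?_⟩ ?_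
  · exact (hA x hx).2 ▸ Submodule.mem_span_singleton_self _
  · rintro rfl
    exact hb ((hA 0 hx).2.symm.trans (map_zero π))

end LinearSection

section Degree

variable [IsAlgClosed K] [Finite σ] {X : Set (σ → K)}

lemma le_degree (hX : IsCone X) {W : Submodule K (σ → K)} (hfin : (points (X ∩ W)).Finite) :
    (points (X ∩ W)).ncard ≤ degree X := by
  refine le_csSup ⟨cumDegree X, ?_⟩ ⟨W, hfin, rfl⟩
  rintro _ ⟨W', hfin', rfl⟩
  exact (ncard_points_le_cumDegree (hX.inter (isCone_coe W')) hfin').trans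
    (cumDegree_inter_submodule_le hX W')

lemma coneDim_eq_of_mem_components (hX : IsCone X)
    (hpure : ∀ Q ∈ components X, ∀ R ∈ components X, coneDim Q = coneDim R) {Q : Set (σ → K)}
    (hQ : Q ∈ components X) : coneDim Q = coneDim X := by
  have := Fintype.ofFinite σ
  have hQX := (mem_components hX).1 hQ
  have h0 : ¬ X ⊆ {0} := fun h => hQX.1.2.1 (hQX.2.1.trans h)
  have : NeZero (coneDim X) := ⟨coneDim_ne_zero h0⟩
  obtain ⟨π, hπ⟩ := exists_isFiniteOn_coneDim X
  obtain ⟨R, hR, hdom⟩ := (hπ.isDominantOn hX h0 le_rfl).exists_mem_components hX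
  refine (coneDim_mono hQX.2.1).antisymm ?_
  rw [hpure Q hQ R hR]
  simpa using ((mem_components hX).1 hR).1.card_le_coneDim hdom

theorem cumDegree_le_degree [CharZero K] (hX : IsCone X)
    (hpure : ∀ Q ∈ components X, ∀ R ∈ components X, coneDim Q = coneDim R) :
    cumDegree X ≤ degree X := by
  have := Fintype.ofFinite σ
  obtain hempty | ⟨Q, hQ⟩ := (components X).eq_empty_or_nonempty
  · simp [cumDegree, hempty]
  have hirr {Q} (hQ : Q ∈ components X) := ((mem_components hX).1 hQ).1
  have hdim {Q} (hQ : Q ∈ components X) := coneDim_eq_of_mem_components hX hpure hQ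
  have : NeZero (coneDim X) := ⟨hdim hQ ▸ coneDim_ne_zero (hirr hQ).2.1⟩
  obtain ⟨π, hπ⟩ := exists_isFiniteOn_coneDim X
  have hπQ {Q} (hQ : Q ∈ components X) : IsFiniteOn π Q :=
    hπ.mono ((mem_components hX).1 hQ).2.1
  obtain ⟨g, hg0, hg⟩ := exists_finset_fibre_biUnion (fun Q => hirr)
    (isAntichain_components hX) (fun Q => hπQ)
    (fun Q hQ => (hπQ hQ).isDominantOn (hirr hQ).isCone (hirr hQ).2.1 (hdim hQ).ge)
    (fun Q hQ => by rw [Fintype.card_fin, hdim hQ])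
  obtain ⟨b, hb⟩ := exists_eval_ne_zero (mul_ne_zero (X_ne_zero (0 : Fin (coneDim X))) hg0)
  rw [map_mul, eval_X] at hb
  have hb0 : b ≠ 0 := fun h => left_ne_zero_of_mul hb (congrFun h 0)
  obtain ⟨A, hAcard, hA⟩ := hg b (right_ne_zero_of_mul hb)
  obtain ⟨hfin, hcard⟩ := hπ.card_le_ncard_points hX hb0 (A := A) fun x hx =>
    ⟨let ⟨Q, hQ, hxQ⟩ := (hA x hx).1; ((mem_components hX).1 hQ).2.1 hxQ, (hA x hx).2⟩
  exact hAcard.trans (hcard.trans (le_degree hX hfin))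

end Degree

end GeneralizedBezout

open GeneralizedBezout in
theorem generalized_bezout_general {K : Type*} [Field K] [IsAlgClosed K] [CharZero K]
    {σ ι κ : Type*} [Finite σ] [Fintype ι] [Fintype κ]
    {X : ι → Set (σ → K)} (hX : ∀ j, IsCone (X j))
    (hpure : ∀ j, ∀ Z Z', IsComponent (X j) Z → IsComponent (X j) Z' → dim Z = dim Z')
    {Z : κ → Set (σ → K)} (hZinj : Function.Injective Z)
    (hZ : ∀ i, IsComponent (⋂ j, X j) (Z i)) :
    ∑ i, degree (Z i) ≤ ∏ j, degree (X j) := by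
  classical
  have hcone : IsCone (⋂ j, X j) := .iInter hX
  have hcomp (j) {Q} (hQ : Q ∈ components (X j)) : IsComponent (X j) Q :=
    (mem_components (hX j)).1 hQ
  calc ∑ i, degree (Z i) ≤ ∑ i, hilbertDegree (Z i) := Finset.sum_le_sum fun i _ =>
        cumDegree_eq_hilbertDegree (hZ i).1 ▸ degree_le_cumDegree (hZ i).1.isCone
    _ = ∑ C ∈ Finset.univ.image Z, hilbertDegree C := (Finset.sum_image hZinj.injOn).symm
    _ ≤ cumDegree (⋂ j, X j) := Finset.sum_le_sum_of_subset <|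
        Finset.image_subset_iff.2 fun i _ => (mem_components hcone).2 (hZ i)
    _ ≤ ∏ j, cumDegree (X j) := by simpa using cumDegree_biInter_le_prod Finset.univ hX
    _ ≤ ∏ j, degree (X j) := Finset.prod_le_prod' fun j _ =>
        cumDegree_le_degree (hX j) fun Q hQ R hR => by
          rw [← (hcomp j hQ).1.dim_add_one_eq, ← (hcomp j hR).1.dim_add_one_eq,
            hpure j Q R (hcomp j hQ) (hcomp j hR)]

/-- **Generalized Bézout theorem.** If `X 0, …, X (n-1)` are pure-dimensional
projective varieties in `ℙ^N(ℂ)` and `Z 0, …, Z (m-1)` are the irreducible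
components of their intersection, then `∑ deg (Z i) ≤ ∏ deg (X j)`. -/
theorem generalized_bezout (n : ℕ) (hn : 1 ≤ n)
    (X : Fin n → Set (Fin (N + 1) → ℂ))
    (halg : ∀ j, IsAlgCone N (X j))
    (hne : ∀ j, ¬ X j ⊆ {0})
    (hpure : ∀ j, ∀ Z Z', IsIrredComponent N (X j) Z → IsIrredComponent N (X j) Z' →
      projDim N Z = projDim N Z')
    (m : ℕ) (Z : Fin m → Set (Fin (N + 1) → ℂ))
    (hZinj : Function.Injective Z)
    (hZcomp : ∀ i, IsIrredComponent N (⋂ j, X j) (Z i))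
    (hZall : ∀ W, IsIrredComponent N (⋂ j, X j) W → ∃ i, Z i = W) :
    ∑ i, projDegree N (Z i) ≤ ∏ j, projDegree N (X j) :=
  generalized_bezout_general halg hpure hZinj hZcomp
end
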